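/- arXiv:1901.06951 — 2 statements merged into one kernel-verified Lean document; each statement's English description precedes it below -/
import Mathlib

section
/- Assume V ∈ C¹(ℝ^N) satisfies (V3) and (V4). If c ≥ 0 is such that condition (V^c) holds, then the coercivity condition (1.7) holds, and there exists q_c ∈ C²(ℝ, ℝ^N) with q̈_c(t) = ∇V(q_c(t)) for all t ∈ ℝ, inf_{t∈ℝ} dist(q_c(t), 𝒱^c₋) = 0, inf_{t∈ℝ} dist(q_c(t), 𝒱^c₊) = 0, and ½|q̇_c(t)|² − V(q_c(t)) = −c for all t ∈ ℝ. -/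
open MeasureTheory Filter Metric Set Topology
open scoped ENNReal

noncomputable section

/-- Euclidean space `ℝ^N`. -/
abbrev Euc (N : ℕ) := EuclideanSpace ℝ (Fin N)

/-- Distance between two subsets of a metric space. -/
def setDist {E : Type*} [PseudoMetricSpace E] (A B : Set E) : ℝ :=
  sInf ((fun p : E × E => dist p.1 p.2) '' (A ×ˢ B))

/-- `q ∈ H¹_loc(ℝ, ℝ^N)` with derivative `q'`: `q` is locally absolutely continuous with
locally square-integrable derivative `q'`. -/
def IsH1loc {N : ℕ} (q q' : ℝ → Euc N) : Prop :=
  LocallyIntegrable q' volume ∧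
  (∀ a b : ℝ, IntegrableOn (fun t => ‖q' t‖ ^ 2) (Icc a b) volume) ∧
  (∀ a b : ℝ, q b - q a = ∫ t in a..b, q' t)

/-- The action `J_{c,I}(q) = ∫_I (½|q̇(t)|² + (V(q(t)) − c)) dt`, valued in `[0,+∞]`. -/
def lagJ {N : ℕ} (V : Euc N → ℝ) (c : ℝ) (q q' : ℝ → Euc N) (I : Set ℝ) : ℝ≥0∞ :=
  ∫⁻ t in I, ENNReal.ofReal (2⁻¹ * ‖q' t‖ ^ 2 + (V (q t) - c))

/-- The admissible class `Γ_c` of pairs (function, derivative): `q ∈ H¹_loc`,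
`V(q(t)) ≥ c` for all `t`, `liminf_{t→−∞} dist(q(t),𝒱⁻) = 0` and
`liminf_{t→+∞} dist(q(t),𝒱⁺) = 0`. -/
def Gamma {N : ℕ} (V : Euc N → ℝ) (c : ℝ) (Vm Vp : Set (Euc N)) :
    Set ((ℝ → Euc N) × (ℝ → Euc N)) :=
  {p | IsH1loc p.1 p.2 ∧ (∀ t, c ≤ V (p.1 t)) ∧
    (∀ ε > 0, ∃ᶠ t in atBot, infDist (p.1 t) Vm < ε) ∧
    (∀ ε > 0, ∃ᶠ t in atTop, infDist (p.1 t) Vp < ε)}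

/-- `m_c := inf_{q ∈ Γ_c} J_c(q)`. -/
def mc {N : ℕ} (V : Euc N → ℝ) (c : ℝ) (Vm Vp : Set (Euc N)) : ℝ≥0∞ :=
  ⨅ (p) (_ : p ∈ Gamma V c Vm Vp), lagJ V c p.1 p.2 univ

/-- Coercivity condition (1.7) for the constant `R`. -/
def Coercive {N : ℕ} (V : Euc N → ℝ) (c : ℝ) (Vm Vp : Set (Euc N)) (R : ℝ) : Prop :=
  mc V c Vm Vp =
    ⨅ (p) (_ : p ∈ Gamma V c Vm Vp) (_ : ∀ t, ‖p.1 t‖ ≤ R), lagJ V c p.1 p.2 univ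

/-
Minimizing the action with potential `(V - c)⁺ + ε` among paths in a large ball from one well to the
other keeps the duration of the paths bounded, so a minimizer exists. Away from its endpoints it
stays in `{V > c}`, where it solves Newton's equation with energy `ε - c`; hence its end velocities
have norm `√(2 ε)`, and unfolding it by time reversal extends it to long intervals with a small
error. Energy estimates keep the times at which the minimizers come `ρ`-close to a well within a
bounded distance of a center, uniformly in `ε`, so that a locally uniform limit as `ε → 0` is a
connecting orbit of energy `-c`.

A path of the admissible class never leaves the closure of `𝒞₀`: near a boundary point of `𝒞₀`,
where `∇V ≠ 0`, every point with `V ≥ 0` lies in this closure, and a path outside the closure would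
stay in a single well. Since `𝒞₀` is bounded, the coercivity condition follows.
-/

namespace Duffing

/-! ### Paths of finite action -/

section EnergyBound

variable {E : Type*} [NormedAddCommGroup E] {q q' : ℝ → E} {G G' : ℝ → ℝ} {I J : Set ℝ} {a b d : ℝ}

/-- `G` is an energy budget for the path `q` on `I`: the increments of `G` bound the kinetic
integrals `∫ ‖q̇‖²` over subintervals. The condition is Cauchy–Schwarz with the derivative
eliminated, so that it passes to pointwise limits of paths and budgets. -/
def HasEnergyBound (q : ℝ → E) (G : ℝ → ℝ) (I : Set ℝ) : Prop :=
  ∀ ⦃s⦄, s ∈ I → ∀ ⦃t⦄, t ∈ I → s ≤ t → ‖q t - q s‖ ^ 2 ≤ (t - s) * (G t - G s)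

namespace HasEnergyBound

lemma mono (h : HasEnergyBound q G I) (hJ : J ⊆ I) : HasEnergyBound q G J :=
  fun _ hs _ ht hst => h (hJ hs) (hJ ht) hst

lemma congr (h : HasEnergyBound q G I) (hq : EqOn q' q I) (hG : EqOn G' G I) :
    HasEnergyBound q' G' I := by
  intro s hs t ht hst
  rw [hq hs, hq ht, hG hs, hG ht]
  exact h hs ht hst

lemma add_const (h : HasEnergyBound q G I) (k : ℝ) : HasEnergyBound q (fun t => G t + k) I := by
  intro s hs t ht hst
  rw [add_sub_add_right_eq_sub]
  exact h hs ht hst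

lemma monotoneOn (h : HasEnergyBound q G I) : MonotoneOn G I := by
  intro s hs t ht hst
  rcases hst.eq_or_lt with rfl | hlt
  · exact le_rfl
  · exact sub_nonneg.1 <|
      nonneg_of_mul_nonneg_right ((sq_nonneg _).trans (h hs ht hst)) (sub_pos.2 hlt)

lemma norm_sub_le_sqrt (h : HasEnergyBound q G I) {l u s t : ℝ} (hG : MapsTo G I (Icc l u))
    (hs : s ∈ I) (ht : t ∈ I) : ‖q t - q s‖ ≤ √(|t - s| * (u - l)) := by
  wlog hst : s ≤ t generalizing s t
  · rw [norm_sub_rev, abs_sub_comm]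
    exact this ht hs (le_of_not_ge hst)
  refine Real.le_sqrt_of_sq_le ((h hs ht hst).trans ?_)
  rw [abs_of_nonneg (sub_nonneg.2 hst)]
  exact mul_le_mul_of_nonneg_left (sub_le_sub (hG ht).2 (hG hs).1) (sub_nonneg.2 hst)

lemma continuousOn (h : HasEnergyBound q G (Icc a b)) : ContinuousOn q (Icc a b) := by
  intro s hs
  have hG : MapsTo G (Icc a b) (Icc (G a) (G b)) := fun t ht =>
    ⟨h.monotoneOn (left_mem_Icc.2 (ht.1.trans ht.2)) ht ht.1,
      h.monotoneOn ht (right_mem_Icc.2 (ht.1.trans ht.2)) ht.2⟩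
  have hlim : Tendsto (fun t => √(|t - s| * (G b - G a))) (𝓝[Icc a b] s) (𝓝 0) := by
    have hcont : Continuous fun t => √(|t - s| * (G b - G a)) := by fun_prop
    simpa using (hcont.tendsto s).mono_left nhdsWithin_le_nhds
  rw [ContinuousWithinAt, tendsto_iff_norm_sub_tendsto_zero]
  refine squeeze_zero' (Eventually.of_forall fun t => norm_nonneg _) ?_ hlim
  filter_upwards [self_mem_nhdsWithin] with t ht
  exact h.norm_sub_le_sqrt hG hs ht

lemma continuous (h : HasEnergyBound q G univ) : Continuous q :=
  continuous_iff_continuousAt.2 fun t =>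
    (h.mono (subset_univ (Icc (t - 1) (t + 1)))).continuousOn.continuousAt
      (Icc_mem_nhds (by linarith) (by linarith))

lemma comp (h : HasEnergyBound q G I) {φ : ℝ → ℝ} {k : ℝ} (hφ : MonotoneOn φ J)
    (hφI : MapsTo φ J I) (hk : ∀ s ∈ J, ∀ t ∈ J, s ≤ t → φ t - φ s ≤ k * (t - s)) :
    HasEnergyBound (q ∘ φ) (fun t => k * G (φ t)) J := by
  intro s hs t ht hst
  have hG : 0 ≤ G (φ t) - G (φ s) :=
    sub_nonneg.2 (h.monotoneOn (hφI hs) (hφI ht) (hφ hs ht hst))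
  calc ‖q (φ t) - q (φ s)‖ ^ 2
      ≤ (φ t - φ s) * (G (φ t) - G (φ s)) := h (hφI hs) (hφI ht) (hφ hs ht hst)
    _ ≤ k * (t - s) * (G (φ t) - G (φ s)) := mul_le_mul_of_nonneg_right (hk s hs t ht hst) hG
    _ = (t - s) * (k * G (φ t) - k * G (φ s)) := by ring

lemma comp_mul_add {k : ℝ} (hk : 0 < k) (d : ℝ)
    (h : HasEnergyBound q G (Icc (k * a + d) (k * b + d))) :
    HasEnergyBound (fun t => q (k * t + d)) (fun t => k * G (k * t + d)) (Icc a b) := by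
  refine h.comp (φ := fun t => k * t + d) ?_ ?_ ?_
  · exact fun s _ t _ hst => add_le_add_left (mul_le_mul_of_nonneg_left hst hk.le) d
  · exact fun t ht => ⟨add_le_add_left (mul_le_mul_of_nonneg_left ht.1 hk.le) d,
      add_le_add_left (mul_le_mul_of_nonneg_left ht.2 hk.le) d⟩
  · exact fun s _ t _ _ => le_of_eq (by ring)

lemma comp_sub_left (h : HasEnergyBound q G I) (d : ℝ) :
    HasEnergyBound (fun t => q (d - t)) (fun t => -G (d - t)) {t | d - t ∈ I} := by
  intro s hs t ht hst
  rw [norm_sub_rev]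
  refine (h ht hs (sub_le_sub_left hst d)).trans_eq ?_
  ring

end HasEnergyBound

lemma sq_norm_add_le_mul {x y : E} {a b A B : ℝ} (ha : 0 ≤ a) (hb : 0 ≤ b) (hA : 0 ≤ A)
    (hB : 0 ≤ B) (hx : ‖x‖ ^ 2 ≤ a * A) (hy : ‖y‖ ^ 2 ≤ b * B) :
    ‖x + y‖ ^ 2 ≤ (a + b) * (A + B) := by
  have hcross : ‖x‖ * ‖y‖ ≤ (a * B + b * A) / 2 := by
    refine abs_le_of_sq_le_sq' ?_ (by positivity) |>.2
    have hprod : (‖x‖ * ‖y‖) ^ 2 ≤ (a * A) * (b * B) := by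
      rw [mul_pow]
      exact mul_le_mul hx hy (by positivity) (by positivity)
    nlinarith only [hprod, sq_nonneg (a * B - b * A)]
  calc ‖x + y‖ ^ 2 ≤ (‖x‖ + ‖y‖) ^ 2 := by gcongr; exact norm_add_le x y
    _ ≤ (a + b) * (A + B) := by nlinarith only [hx, hy, hcross]

lemma HasEnergyBound.union_Icc (h₁ : HasEnergyBound q G (Icc a b))
    (h₂ : HasEnergyBound q G (Icc b d)) : HasEnergyBound q G (Icc a d) := by
  intro s hs t ht hst
  rcases le_total t b with htb | hbt
  · exact h₁ ⟨hs.1, hst.trans htb⟩ ⟨ht.1, htb⟩ hst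
  rcases le_total b s with hbs | hsb
  · exact h₂ ⟨hbs, hs.2⟩ ⟨hbt, ht.2⟩ hst
  have hsI : s ∈ Icc a b := ⟨hs.1, hsb⟩
  have hbI : b ∈ Icc a b := ⟨hs.1.trans hsb, le_rfl⟩
  have hbI' : b ∈ Icc b d := ⟨le_rfl, hbt.trans ht.2⟩
  have htI : t ∈ Icc b d := ⟨hbt, ht.2⟩
  have hsum := sq_norm_add_le_mul (sub_nonneg.2 hsb) (sub_nonneg.2 hbt)
    (sub_nonneg.2 (h₁.monotoneOn hsI hbI hsb)) (sub_nonneg.2 (h₂.monotoneOn hbI' htI hbt))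
    (h₁ hsI hbI hsb) (h₂ hbI' htI hbt)
  rwa [add_comm (q b - q s), sub_add_sub_cancel, add_comm (b - s), sub_add_sub_cancel,
    add_comm (G b - G s), sub_add_sub_cancel] at hsum

end EnergyBound

section Action

variable {E : Type*} {U : E → ℝ} {q q' : ℝ → E} {G G' : ℝ → ℝ} {a b d : ℝ}

/-- The action `∫ (½‖q̇‖² + U(q))` over `[a, b]` of a path `q`, with its kinetic integral replaced
by the increment of an energy budget `G`. -/
def action (U : E → ℝ) (q : ℝ → E) (G : ℝ → ℝ) (a b : ℝ) : ℝ :=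
  2⁻¹ * (G b - G a) + ∫ t in a..b, U (q t)

lemma action_congr (hab : a ≤ b) (hq : EqOn q' q (Icc a b)) (hG : EqOn G' G (Icc a b)) :
    action U q' G' a b = action U q G a b := by
  unfold action
  rw [hG (left_mem_Icc.2 hab), hG (right_mem_Icc.2 hab)]
  congr 1
  refine intervalIntegral.integral_congr fun t ht => ?_
  rw [uIcc_of_le hab] at ht
  exact congrArg U (hq ht)

lemma action_comp_mul_add {k : ℝ} (hk : k ≠ 0) :
    action U (fun t => q (k * t + d)) (fun t => k * G (k * t + d)) a b =
      k * (2⁻¹ * (G (k * b + d) - G (k * a + d))) +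
        k⁻¹ * ∫ t in (k * a + d)..(k * b + d), U (q t) := by
  unfold action
  rw [intervalIntegral.integral_comp_mul_add (fun t => U (q t)) hk d, smul_eq_mul]
  ring

lemma action_comp_sub_left :
    action U (fun t => q (d - t)) (fun t => -G (d - t)) a b = action U q G (d - b) (d - a) := by
  unfold action
  rw [intervalIntegral.integral_comp_sub_left (fun t => U (q t)) d]
  ring

variable [NormedAddCommGroup E]

lemma HasEnergyBound.intervalIntegrable (h : HasEnergyBound q G (Icc a b)) (hU : Continuous U)
    (hab : a ≤ b) : IntervalIntegrable (fun t => U (q t)) volume a b := by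
  refine ContinuousOn.intervalIntegrable ?_
  rw [uIcc_of_le hab]
  exact hU.comp_continuousOn h.continuousOn

lemma HasEnergyBound.action_add_action (h : HasEnergyBound q G (Icc a d)) (hU : Continuous U)
    (hab : a ≤ b) (hbd : b ≤ d) :
    action U q G a b + action U q G b d = action U q G a d := by
  unfold action
  rw [← intervalIntegral.integral_add_adjacent_intervals
    ((h.mono (Icc_subset_Icc_right hbd)).intervalIntegrable hU hab)
    ((h.mono (Icc_subset_Icc_left hab)).intervalIntegrable hU hbd)]
  ring

lemma HasEnergyBound.const_mul_le_action (h : HasEnergyBound q G (Icc a b)) (hU : Continuous U)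
    (hab : a ≤ b) {u : ℝ} (hu : ∀ t ∈ Icc a b, u ≤ U (q t)) : u * (b - a) ≤ action U q G a b := by
  have hG : G a ≤ G b := h.monotoneOn (left_mem_Icc.2 hab) (right_mem_Icc.2 hab) hab
  have hint : ∫ _ in a..b, u ≤ ∫ t in a..b, U (q t) :=
    intervalIntegral.integral_mono_on hab intervalIntegrable_const (h.intervalIntegrable hU hab) hu
  rw [intervalIntegral.integral_const, smul_eq_mul] at hint
  unfold action
  linarith only [hG, hint]

end Action

section Joins

variable {E : Type*} [NormedAddCommGroup E] {U : E → ℝ} {K : Set E} {x y z : E} {A B : ℝ}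

/-- Some path inside `K` leads from `x` to `y` with action at most `A`. -/
def JoinsWithin (U : E → ℝ) (K : Set E) (x y : E) (A : ℝ) : Prop :=
  ∃ a b : ℝ, a ≤ b ∧ ∃ (q : ℝ → E) (G : ℝ → ℝ), HasEnergyBound q G (Icc a b) ∧
    MapsTo q (Icc a b) K ∧ q a = x ∧ q b = y ∧ action U q G a b ≤ A

lemma eqOn_ite_le_left {X : Type*} {a b : ℝ} (f g : ℝ → X) :
    EqOn (fun t => if t ≤ b then f t else g t) f (Icc a b) :=
  fun _ ht => if_pos ht.2

lemma eqOn_ite_le_right {X : Type*} {b d : ℝ} (f g : ℝ → X) (hfg : f b = g b) :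
    EqOn (fun t => if t ≤ b then f t else g t) g (Icc b d) := by
  intro t ht
  rcases ht.1.eq_or_lt with rfl | hlt
  · simpa using hfg
  · exact if_neg (not_le.2 hlt)

namespace JoinsWithin

lemma exists_start (h : JoinsWithin U K x y A) (a γ : ℝ) :
    ∃ b, a ≤ b ∧ ∃ (q : ℝ → E) (G : ℝ → ℝ), HasEnergyBound q G (Icc a b) ∧
      MapsTo q (Icc a b) K ∧ q a = x ∧ q b = y ∧ G a = γ ∧ action U q G a b ≤ A := by
  obtain ⟨a', b', hab, q, G, hq, hK, hqa, hqb, hA⟩ := h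
  have ha : 1 * a + (a' - a) = a' := by ring
  have hb : 1 * (b' - (a' - a)) + (a' - a) = b' := by ring
  have hq' := HasEnergyBound.comp_mul_add (a := a) (b := b' - (a' - a)) one_pos (a' - a)
    (by rwa [ha, hb])
  refine ⟨b' - (a' - a), by linarith, _, _, hq'.add_const (γ - G a'), ?_, ?_, ?_, ?_, ?_⟩
  · exact fun t ht => hK ⟨by linarith [ht.1], by linarith [ht.2]⟩
  · rwa [ha]
  · rwa [hb]
  · rw [ha]
    ring
  · unfold action at hA ⊢
    rw [intervalIntegral.integral_comp_mul_add (fun t => U (q t)) one_ne_zero, inv_one, one_smul]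
    simp only [ha, hb]
    linarith only [hA]

lemma trans (hU : Continuous U) (hxy : JoinsWithin U K x y A) (hyz : JoinsWithin U K y z B) :
    JoinsWithin U K x z (A + B) := by
  obtain ⟨a, b, hab, q, G, hq, hK, hqa, hqb, hA⟩ := hxy
  obtain ⟨d, hbd, p, H, hp, hKp, hpb, hpd, hHb, hB⟩ := hyz.exists_start b (G b)
  have hq_left := eqOn_ite_le_left (a := a) (b := b) q p
  have hG_left := eqOn_ite_le_left (a := a) (b := b) G H
  have hq_right := eqOn_ite_le_right (d := d) q p (hqb.trans hpb.symm)
  have hG_right := eqOn_ite_le_right (d := d) G H hHb.symm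
  have hglued := (hq.congr hq_left hG_left).union_Icc (hp.congr hq_right hG_right)
  refine ⟨a, d, hab.trans hbd, _, _, hglued, ?_, ?_, ?_, ?_⟩
  · rw [← Icc_union_Icc_eq_Icc hab hbd]
    exact MapsTo.union (hK.congr hq_left.symm) (hKp.congr hq_right.symm)
  · exact (hq_left (left_mem_Icc.2 hab)).trans hqa
  · exact (hq_right (right_mem_Icc.2 hbd)).trans hpd
  · rw [← hglued.action_add_action hU hab hbd, action_congr hab hq_left hG_left,
      action_congr hbd hq_right hG_right]
    exact add_le_add hA hB

lemma symm (h : JoinsWithin U K x y A) : JoinsWithin U K y x A := by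
  obtain ⟨a, b, hab, q, G, hq, hK, hqa, hqb, hA⟩ := h
  have hmaps : ∀ t ∈ Icc (-b) (-a), 0 - t ∈ Icc a b := fun t ht =>
    ⟨by linarith [ht.2], by linarith [ht.1]⟩
  refine ⟨-b, -a, neg_le_neg hab, _, _, (hq.comp_sub_left 0).mono hmaps, ?_, ?_, ?_, ?_⟩
  · exact fun t ht => hK (hmaps t ht)
  · simpa using hqb
  · simpa using hqa
  · rw [action_comp_sub_left]
    simpa using hA

lemma refl (hx : x ∈ K) : JoinsWithin U K x x 0 :=
  ⟨0, 0, le_rfl, fun _ => x, 0, fun s _ t _ _ => by simp, fun _ _ => hx, rfl, rfl, by simp [action]⟩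

lemma segment [NormedSpace ℝ E] {C : ℝ} (hU : Continuous U) (hK : Convex ℝ K)
    (hC : ∀ w ∈ K, U w ≤ C) (hx : x ∈ K) (hy : y ∈ K) :
    JoinsWithin U K x y ((2⁻¹ + C) * ‖y - x‖) := by
  rcases eq_or_ne x y with rfl | hne
  · simpa using refl hx
  set l := ‖y - x‖
  have hl : 0 < l := norm_pos_iff.2 (sub_ne_zero.2 hne.symm)
  have hend : AffineMap.lineMap x y (l / l) = y := by
    rw [div_self hl.ne', AffineMap.lineMap_apply_one]
  have hmaps : MapsTo (fun t => AffineMap.lineMap x y (t / l)) (Icc 0 l) K := fun t ht =>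
    hK.lineMap_mem hx hy ⟨div_nonneg ht.1 hl.le, div_le_one_of_le₀ ht.2 hl.le⟩
  have hbound : HasEnergyBound (fun t => AffineMap.lineMap x y (t / l)) id (Icc 0 l) := by
    intro s _ t _ _
    rw [← dist_eq_norm, dist_lineMap_lineMap, dist_comm x y, dist_eq_norm y x, Real.dist_eq,
      ← sub_div, abs_div, abs_of_pos hl, div_mul_cancel₀ _ hl.ne', sq_abs, sq]
    rfl
  refine ⟨0, l, hl.le, _, id, hbound, hmaps, by simp, hend, ?_⟩
  have hint : ∫ t in (0 : ℝ)..l, U (AffineMap.lineMap x y (t / l)) ≤ ∫ _ in (0 : ℝ)..l, C :=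
    intervalIntegral.integral_mono_on hl.le (hbound.intervalIntegrable hU hl.le)
      intervalIntegrable_const fun t ht => hC _ (hmaps ht)
  rw [intervalIntegral.integral_const, smul_eq_mul] at hint
  unfold action
  simp only [id, sub_zero] at hint ⊢
  linarith

lemma exists_path_univ (h : JoinsWithin U K x y A) :
    ∃ S, 0 ≤ S ∧ ∃ (q : ℝ → E) (G : ℝ → ℝ), HasEnergyBound q G univ ∧ (∀ t, q t ∈ K) ∧
      q 0 = x ∧ q S = y ∧ (∀ t, G t ∈ Icc 0 (G S)) ∧ G 0 = 0 ∧ action U q G 0 S ≤ A := by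
  obtain ⟨S, hS, q, G, hq, hK, hq0, hqS, hG0, hA⟩ := h.exists_start 0 0
  set φ : ℝ → ℝ := fun t => projIcc 0 S hS t
  have hφ : ∀ t, φ t ∈ Icc 0 S := fun t => (projIcc 0 S hS t).2
  have hφ_eq : EqOn φ id (Icc 0 S) := fun t ht => congrArg Subtype.val (projIcc_of_mem hS ht)
  have hφ_zero : φ 0 = 0 := hφ_eq (left_mem_Icc.2 hS)
  have hφ_S : φ S = S := hφ_eq (right_mem_Icc.2 hS)
  have hφ_mono : Monotone φ := monotone_projIcc hS
  have hφ_lip : ∀ s t, s ≤ t → φ t - φ s ≤ 1 * (t - s) := by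
    intro s t hst
    have := (le_abs_self _).trans (abs_projIcc_sub_projIcc (c := t) (d := s) hS)
    rwa [abs_of_nonneg (sub_nonneg.2 hst), ← one_mul (t - s)] at this
  refine ⟨S, hS, q ∘ φ, _, hq.comp (hφ_mono.monotoneOn univ) (fun t _ => hφ t)
    (fun s _ t _ => hφ_lip s t), fun t => hK (hφ t), ?_, ?_, ?_, ?_, ?_⟩
  · simpa [hφ_zero] using hq0
  · simpa [hφ_S] using hqS
  · intro t
    rw [hφ_S, one_mul, one_mul, ← hG0]
    exact ⟨hq.monotoneOn (left_mem_Icc.2 hS) (hφ t) (hφ t).1,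
      hq.monotoneOn (hφ t) (right_mem_Icc.2 hS) (hφ t).2⟩
  · rw [hφ_zero, hG0, mul_zero]
  · refine (action_congr hS (fun t ht => ?_) fun t ht => ?_).trans_le hA
    · exact congrArg q (hφ_eq ht)
    · rw [one_mul]
      exact congrArg G (hφ_eq ht)

end JoinsWithin

end Joins

/-! ### Existence and regularity of minimal paths -/

section Compactness

lemma isCompact_setOf_dist_le_modulus {Y : Type*} [MetricSpace Y] {K : ℝ → Set Y}
    (hK : ∀ t, IsCompact (K t)) {β : ℝ → ℝ} (hβ : Tendsto β (𝓝 0) (𝓝 0)) :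
    IsCompact {f : C(ℝ, Y) | (∀ t, f t ∈ K t) ∧ ∀ s t, dist (f s) (f t) ≤ β (dist s t)} := by
  refine ArzelaAscoli.isCompact_of_equicontinuous _ ?_ <|
    Metric.equicontinuous_of_continuity_modulus β hβ _ fun s t f => f.2.2 s t
  have himage : ContinuousMap.toFun ''
      {f : C(ℝ, Y) | (∀ t, f t ∈ K t) ∧ ∀ s t, dist (f s) (f t) ≤ β (dist s t)} =
      univ.pi K ∩ {f | ∀ s t, dist (f s) (f t) ≤ β (dist s t)} := by
    ext f
    constructor
    · rintro ⟨g, hg, rfl⟩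
      exact ⟨fun t _ => hg.1 t, hg.2⟩
    · rintro ⟨hfK, hf⟩
      have hcont : Continuous f :=
        (Metric.equicontinuous_of_continuity_modulus β hβ (fun _ : Unit => f)
          fun s t _ => hf s t).continuous ()
      exact ⟨⟨f, hcont⟩, ⟨fun t => hfK t (mem_univ t), hf⟩, rfl⟩
  rw [himage]
  refine (isCompact_univ_pi hK).inter_right ?_
  simp only [ofPred_forall]
  exact isClosed_iInter fun s => isClosed_iInter fun t =>
    isClosed_le ((continuous_apply s).dist (continuous_apply t)) continuous_const

variable {E : Type*} [NormedAddCommGroup E] {U : E → ℝ} {Q : ℝ → E} {m S : ℝ}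

lemma exists_hasEnergyBound_of_tendsto {q : ℕ → ℝ → E} {G : ℕ → ℝ → ℝ} {β : ℕ → ℝ} {b : ℝ}
    (hq : ∀ k, HasEnergyBound (q k) (G k) univ) (hG : ∀ k t, G k t ∈ Icc 0 (β k))
    (hβ : Tendsto β atTop (𝓝 b)) (hQ : ∀ t, Tendsto (fun k => q k t) atTop (𝓝 (Q t))) :
    ∃ H : ℝ → ℝ, HasEnergyBound Q H univ ∧ ∀ t, H t ∈ Icc 0 b := by
  obtain ⟨M, hM⟩ := hβ.bddAbove_range
  have hlim : ∀ t, ∃ x, Tendsto (fun k => G k t) (hyperfilter ℕ) (𝓝 x) := by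
    intro t
    obtain ⟨x, -, hx⟩ := (isCompact_Icc (a := 0) (b := M)).ultrafilter_le_nhds
      ((hyperfilter ℕ).map fun k => G k t) <| le_principal_iff.2 <| Filter.mem_map.2 <|
        univ_mem' fun k => ⟨(hG k t).1, (hG k t).2.trans (hM (mem_range_self k))⟩
    exact ⟨x, hx⟩
  choose H hH using hlim
  refine ⟨H, fun s _ t _ hst => ?_, fun t => ⟨?_, ?_⟩⟩
  · have hQ' := fun t => (hQ t).mono_left Nat.hyperfilter_le_atTop
    exact le_of_tendsto_of_tendsto' (((hQ' t).sub (hQ' s)).norm.pow 2)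
      (((hH t).sub (hH s)).const_mul (t - s)) fun k => hq k (mem_univ s) (mem_univ t) hst
  · exact ge_of_tendsto' (hH t) fun k => (hG k t).1
  · exact le_of_tendsto_of_tendsto' (hH t) (hβ.mono_left Nat.hyperfilter_le_atTop)
      fun k => (hG k t).2

lemma continuous_integral_comp (hU : Continuous U) :
    Continuous fun p : C(ℝ, E) × ℝ => ∫ t in (0 : ℝ)..p.2, U (p.1 t) :=
  intervalIntegral.continuous_parametric_intervalIntegral_of_continuous
    (f := fun (p : C(ℝ, E) × ℝ) t => U (p.1 t)) (hU.comp (by fun_prop)) continuous_snd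

lemma exists_tendsto_subseq_of_hasEnergyBound {K : Set E} (hK : IsCompact K) {q : ℕ → ℝ → E}
    {G : ℕ → ℝ → ℝ} {s : ℕ → ℝ} {b T : ℝ} (hq : ∀ k, HasEnergyBound (q k) (G k) univ)
    (hqK : ∀ k t, q k t ∈ K) (hG : ∀ k t, G k t ∈ Icc 0 b) (hs : ∀ k, s k ∈ Icc 0 T) :
    ∃ (Q : C(ℝ, E)) (S : ℝ) (φ : ℕ → ℕ), StrictMono φ ∧
      Tendsto (fun k => ((⟨q (φ k), (hq (φ k)).continuous⟩ : C(ℝ, E)), s (φ k))) atTop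
        (𝓝 (Q, S)) := by
  have hmodulus : ∀ k r t, dist (q k r) (q k t) ≤ √(|dist r t| * (b - 0)) := by
    intro k r t
    rw [dist_comm, dist_eq_norm, Real.dist_eq, abs_sub_comm, abs_abs]
    exact (hq k).norm_sub_le_sqrt (fun r _ => hG k r) (mem_univ r) (mem_univ t)
  have hzero : Tendsto (fun r => √(|r| * (b - 0))) (𝓝 0) (𝓝 0) :=
    Continuous.tendsto' (by fun_prop) _ _ (by simp)
  obtain ⟨⟨Q, S⟩, -, φ, hφ, hlim⟩ :=
    ((isCompact_setOf_dist_le_modulus (fun _ => hK) hzero).prod isCompact_Icc).tendsto_subseq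
      (x := fun k => (⟨q k, (hq k).continuous⟩, s k)) fun k => ⟨⟨hqK k, hmodulus k⟩, hs k⟩
  exact ⟨Q, S, φ, hφ, hlim⟩

lemma HasEnergyBound.bounds_of_action_le {q : ℝ → E} {G : ℝ → ℝ} {ε M : ℝ}
    (hq : HasEnergyBound q G univ) (hU : Continuous U) (hε : 0 < ε) (hS : 0 ≤ S)
    (hUε : ∀ t, ε ≤ U (q t)) (hG0 : G 0 = 0) (hM : action U q G 0 S ≤ M) :
    S ≤ M / ε ∧ G S ≤ 2 * M := by
  constructor
  · rw [le_div_iff₀' hε]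
    simpa only [sub_zero] using
      ((hq.mono (subset_univ _)).const_mul_le_action hU hS fun t _ => hUε t).trans hM
  · have hpot : 0 ≤ ∫ t in (0 : ℝ)..S, U (q t) :=
      intervalIntegral.integral_nonneg hS fun t _ => hε.le.trans (hUε t)
    unfold action at hM
    linarith only [hM, hpot, hG0]

lemma exists_action_le_of_tendsto (hU : Continuous U) {q : ℕ → C(ℝ, E)} {Q : C(ℝ, E)}
    {G : ℕ → ℝ → ℝ} {s u : ℕ → ℝ} (hq : ∀ k, HasEnergyBound (q k) (G k) univ)
    (hG : ∀ k t, G k t ∈ Icc 0 (G k (s k))) (hG0 : ∀ k, G k 0 = 0)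
    (haction : ∀ k, action U (q k) (G k) 0 (s k) ≤ u k) (hQ : Tendsto q atTop (𝓝 Q))
    (hs : Tendsto s atTop (𝓝 S)) (hu : Tendsto u atTop (𝓝 m)) :
    ∃ H : ℝ → ℝ, HasEnergyBound Q H univ ∧ action U Q H 0 S ≤ m := by
  set potential : C(ℝ, E) × ℝ → ℝ := fun p => ∫ t in (0 : ℝ)..p.2, U (p.1 t)
  have hpotential : Tendsto (fun k => potential (q k, s k)) atTop (𝓝 (potential (Q, S))) :=
    ((continuous_integral_comp hU).tendsto (Q, S)).comp (hQ.prodMk_nhds hs)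
  have hbudget : ∀ k t, G k t ∈ Icc 0 (2 * (u k - potential (q k, s k))) := by
    refine fun k t => ⟨(hG k t).1, (hG k t).2.trans ?_⟩
    have hk := haction k
    unfold action at hk
    rw [hG0 k] at hk
    linarith only [hk]
  obtain ⟨H, hQH, hH⟩ := exists_hasEnergyBound_of_tendsto hq hbudget
    ((hu.sub hpotential).const_mul 2)
    fun t => ((continuous_eval_const t).tendsto Q).comp hQ
  refine ⟨H, hQH, ?_⟩
  change 2⁻¹ * (H S - H 0) + potential (Q, S) ≤ m
  linarith only [(hH 0).1, (hH S).2]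

end Compactness

section MinimalPath

variable {E : Type*} [NormedAddCommGroup E] {U : E → ℝ} {K A B : Set E} {S : ℝ} {q : ℝ → E}
  {G : ℝ → ℝ}

/-- The path `q` with budget `G` on `[0, S]` minimizes the action among all paths inside `K` from
`A` to `B`, over free time intervals. -/
structure IsMinimalPath (U : E → ℝ) (K A B : Set E) (S : ℝ) (q : ℝ → E) (G : ℝ → ℝ) : Prop where
  duration_nonneg : 0 ≤ S
  hasEnergyBound : HasEnergyBound q G univ
  mem : ∀ t, q t ∈ K
  start_mem : q 0 ∈ A
  end_mem : q S ∈ B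
  le_of_joins : ∀ x ∈ A, ∀ y ∈ B, ∀ c, JoinsWithin U K x y c → action U q G 0 S ≤ c

lemma exists_isMinimalPath (hU : Continuous U) (hK : IsCompact K) {ε : ℝ} (hε : 0 < ε)
    (hUε : ∀ x ∈ K, ε ≤ U x) (hA : IsClosed A) (hB : IsClosed B)
    (hjoin : ∃ x ∈ A, ∃ y ∈ B, ∃ c, JoinsWithin U K x y c) :
    ∃ S q G, IsMinimalPath U K A B S q G := by
  set costs : Set ℝ := {c | ∃ x ∈ A, ∃ y ∈ B, JoinsWithin U K x y c}
  have hcosts : costs.Nonempty := by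
    obtain ⟨x, hx, y, hy, c, hc⟩ := hjoin
    exact ⟨c, x, hx, y, hy, hc⟩
  have hcosts_bdd : BddBelow costs := by
    refine ⟨0, ?_⟩
    rintro c ⟨x, -, y, -, a, b, hab, q, G, hq, hqK, -, -, hc⟩
    exact (mul_nonneg hε.le (sub_nonneg.2 hab)).trans <|
      (hq.const_mul_le_action hU hab fun t ht => hUε _ (hqK ht)).trans hc
  obtain ⟨u, hu_anti, hu, hu_mem⟩ := exists_seq_tendsto_sInf hcosts hcosts_bdd
  choose x hxA y hyB hxy using hu_mem
  choose s hs q G hq hqK hq0 hqs hG hG0 haction using fun k => (hxy k).exists_path_univ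
  have hbounds := fun k => (hq k).bounds_of_action_le hU hε (hs k) (fun t => hUε _ (hqK k t))
    (hG0 k) ((haction k).trans (hu_anti (Nat.zero_le k)))
  obtain ⟨Q, S, φ, hφ, hlim⟩ := exists_tendsto_subseq_of_hasEnergyBound hK hq hqK
    (fun k t => ⟨(hG k t).1, (hG k t).2.trans (hbounds k).2⟩) fun k => ⟨hs k, (hbounds k).1⟩
  obtain ⟨hQlim, hSlim⟩ := Prod.tendsto_iff _ _ |>.1 hlim
  have hQt (t : ℝ) : Tendsto (fun k => q (φ k) t) atTop (𝓝 (Q t)) :=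
    ((continuous_eval_const t).tendsto Q).comp hQlim
  have hQS : Tendsto (fun k => q (φ k) (s (φ k))) atTop (𝓝 (Q S)) :=
    (continuous_eval.tendsto (Q, S)).comp hlim
  obtain ⟨H, hQH, hH⟩ := exists_action_le_of_tendsto hU (fun k => hq (φ k)) (fun k => hG (φ k))
    (fun k => hG0 (φ k)) (fun k => haction (φ k)) hQlim hSlim (hu.comp hφ.tendsto_atTop)
  refine ⟨S, Q, H, ge_of_tendsto' hSlim fun k => hs (φ k), hQH, fun t => ?_, ?_, ?_, ?_⟩
  · exact hK.isClosed.mem_of_tendsto (hQt t) (Eventually.of_forall fun k => hqK (φ k) t)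
  · exact hA.mem_of_tendsto (hQt 0)
      (Eventually.of_forall fun k => (hq0 (φ k)).symm ▸ hxA (φ k))
  · exact hB.mem_of_tendsto hQS (Eventually.of_forall fun k => (hqs (φ k)).symm ▸ hyB (φ k))
  · exact fun x hx y hy c hc => hH.trans (csInf_le hcosts_bdd ⟨x, hx, y, hy, hc⟩)

end MinimalPath

namespace IsMinimalPath

variable {E : Type*} [NormedAddCommGroup E] {U : E → ℝ} {K A B : Set E} {S : ℝ} {q : ℝ → E}
  {G : ℝ → ℝ} {a b c : ℝ}

lemma joins (h : IsMinimalPath U K A B S q G) (hab : a ≤ b) :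
    JoinsWithin U K (q a) (q b) (action U q G a b) :=
  ⟨a, b, hab, q, G, h.hasEnergyBound.mono (subset_univ _), fun t _ => h.mem t, rfl, rfl, le_rfl⟩

lemma action_add_action (h : IsMinimalPath U K A B S q G) (hU : Continuous U) {d : ℝ}
    (hab : a ≤ b) (hbd : b ≤ d) : action U q G a b + action U q G b d = action U q G a d :=
  (h.hasEnergyBound.mono (subset_univ _)).action_add_action hU hab hbd

lemma intervalIntegrable (h : IsMinimalPath U K A B S q G) (hU : Continuous U) (a b : ℝ) :
    IntervalIntegrable (fun t => U (q t)) volume a b :=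
  (hU.comp h.hasEnergyBound.continuous).intervalIntegrable a b

lemma reverse (h : IsMinimalPath U K A B S q G) :
    IsMinimalPath U K B A S (fun t => q (S - t)) (fun t => -G (S - t)) where
  duration_nonneg := h.duration_nonneg
  hasEnergyBound := (h.hasEnergyBound.comp_sub_left S).mono fun _ _ => mem_univ _
  mem t := h.mem (S - t)
  start_mem := by simpa using h.end_mem
  end_mem := by simpa using h.start_mem
  le_of_joins x hx y hy c hc := by
    rw [action_comp_sub_left, sub_self, sub_zero]
    exact h.le_of_joins y hy x hx c hc.symm

lemma action_le_of_joins (h : IsMinimalPath U K A B S q G) (hU : Continuous U) (ha : 0 ≤ a)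
    (hab : a ≤ b) (hb : b ≤ S) (hc : JoinsWithin U K (q a) (q b) c) : action U q G a b ≤ c := by
  have hmin := h.le_of_joins _ h.start_mem _ h.end_mem _
    (((h.joins ha).trans hU hc).trans hU (h.joins hb))
  rw [← h.action_add_action hU (ha.trans hab) hb, ← h.action_add_action hU ha hab] at hmin
  linarith only [hmin]

lemma action_le_of_joins_end (h : IsMinimalPath U K A B S q G) (hU : Continuous U) {y : E}
    (ha : a ∈ Icc 0 S) (hy : y ∈ B) (hc : JoinsWithin U K (q a) y c) : action U q G a S ≤ c := by
  have hmin := h.le_of_joins _ h.start_mem y hy _ ((h.joins ha.1).trans hU hc)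
  rw [← h.action_add_action hU ha.1 ha.2] at hmin
  linarith only [hmin]

lemma notMem_end (h : IsMinimalPath U K A B S q G) (hU : Continuous U) (hUpos : ∀ x ∈ K, 0 < U x)
    {t : ℝ} (ht : t ∈ Ico 0 S) : q t ∉ B := by
  intro hB
  have hle := h.action_le_of_joins_end hU ⟨ht.1, ht.2.le⟩ hB (.refl (h.mem t))
  have hG := h.hasEnergyBound.monotoneOn (mem_univ t) (mem_univ S) ht.2.le
  have hpos : 0 < ∫ r in t..S, U (q r) :=
    intervalIntegral.intervalIntegral_pos_of_pos (h.intervalIntegrable hU t S)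
      (fun r => hUpos _ (h.mem r)) ht.2
  unfold action at hle
  linarith only [hle, hG, hpos]

lemma notMem_start (h : IsMinimalPath U K A B S q G) (hU : Continuous U)
    (hUpos : ∀ x ∈ K, 0 < U x) {t : ℝ} (ht : t ∈ Ioc 0 S) : q t ∉ A := by
  simpa using h.reverse.notMem_end hU hUpos (t := S - t) ⟨sub_nonneg.2 ht.2, sub_lt_self S ht.1⟩

/-- Traversing a subarc at speed factor `l` costs `l g + l⁻¹ p`, where `g` and `p` are its kinetic
and potential parts, and minimality makes `l = 1` the best choice. -/
lemma equipartition (h : IsMinimalPath U K A B S q G) (hU : Continuous U) (ha : 0 ≤ a)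
    (hab : a ≤ b) (hb : b ≤ S) : G b - G a = 2 * ∫ t in a..b, U (q t) := by
  set p := ∫ t in a..b, U (q t)
  set g := 2⁻¹ * (G b - G a)
  have hcost : ∀ l, 0 < l → g + p ≤ l * g + l⁻¹ * p := by
    intro l hl
    refine h.action_le_of_joins hU ha hab hb ⟨a / l, b / l, by gcongr, _, _,
      HasEnergyBound.comp_mul_add hl 0 (h.hasEnergyBound.mono (subset_univ _)),
      fun t _ => h.mem _, ?_, ?_, ?_⟩
    · rw [mul_div_cancel₀ _ hl.ne', add_zero]
    · rw [mul_div_cancel₀ _ hl.ne', add_zero]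
    · rw [action_comp_mul_add hl.ne', mul_div_cancel₀ _ hl.ne', mul_div_cancel₀ _ hl.ne',
        add_zero, add_zero]
  have hmin : IsLocalMin (fun l : ℝ => l * g + l⁻¹ * p) 1 := by
    filter_upwards [lt_mem_nhds one_pos] with l hl
    simpa using hcost l hl
  have hderiv : HasDerivAt (fun l : ℝ => l * g + l⁻¹ * p) (1 * g + -(1 ^ 2)⁻¹ * p) 1 :=
    ((hasDerivAt_id 1).mul_const g).add ((hasDerivAt_inv one_ne_zero).mul_const p)
  have hzero := hmin.hasDerivAt_eq_zero hderiv
  have hg : 2⁻¹ * (G b - G a) = g := rfl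
  norm_num at hzero
  linarith only [hg, hzero]

lemma norm_sub_le (h : IsMinimalPath U K A B S q G) (hU : Continuous U) {C : ℝ}
    (hC : ∀ x ∈ K, U x ≤ C) {s t : ℝ} (hs : s ∈ Icc 0 S) (ht : t ∈ Icc 0 S) :
    ‖q t - q s‖ ≤ √(2 * C) * |t - s| := by
  wlog hst : s ≤ t generalizing s t
  · rw [norm_sub_rev, abs_sub_comm]
    exact this ht hs (le_of_not_ge hst)
  have hint : ∫ r in s..t, U (q r) ≤ ∫ _ in s..t, C :=
    intervalIntegral.integral_mono_on hst (h.intervalIntegrable hU s t)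
      intervalIntegrable_const fun r _ => hC _ (h.mem r)
  rw [intervalIntegral.integral_const, smul_eq_mul] at hint
  rw [← Real.sqrt_sq_eq_abs, ← Real.sqrt_mul' _ (sq_nonneg _)]
  refine Real.le_sqrt_of_sq_le ?_
  calc ‖q t - q s‖ ^ 2 ≤ (t - s) * (G t - G s) :=
        h.hasEnergyBound (mem_univ s) (mem_univ t) hst
    _ = (t - s) * (2 * ∫ r in s..t, U (q r)) := by rw [h.equipartition hU hs.1 hst ht.2]
    _ ≤ (t - s) * (2 * ((t - s) * C)) := by gcongr
    _ = 2 * C * (t - s) ^ 2 := by ring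

end IsMinimalPath

section Variation

variable {E : Type*} [NormedAddCommGroup E] [InnerProductSpace ℝ E] {U : E → ℝ} {K : Set E}
  {q ψ : ℝ → E} {G : ℝ → ℝ} {I : Set ℝ} {a b S s : ℝ}

lemma HasEnergyBound.add_affine (h : HasEnergyBound q G I) (w e : E) :
    HasEnergyBound (fun t => q t + (w + t • e))
      (fun t => G t + (2 * inner ℝ e (q t) + ‖e‖ ^ 2 * t)) I := by
  intro s hs t ht hst
  have hincr : q t + (w + t • e) - (q s + (w + s • e)) = (q t - q s) + (t - s) • e := by
    module
  rw [hincr, norm_add_sq_real, norm_smul, mul_pow, Real.norm_eq_abs, sq_abs, inner_smul_right,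
    real_inner_comm, inner_sub_right]
  linarith only [h hs ht hst]

/-- The tent function on `[0, S]` with peak at `s`, scaled to have slopes `S - s` and `-s`; up to
the factor `S` it is the Green function of `-d²/dt²` with Dirichlet conditions. -/
def tent (S s t : ℝ) : ℝ := min ((S - s) * t) (s * (S - t))

lemma tent_of_le (hS : 0 ≤ S) {t : ℝ} (ht : t ≤ s) : tent S s t = (S - s) * t :=
  min_eq_left (by nlinarith)

lemma tent_of_ge (hS : 0 ≤ S) {t : ℝ} (ht : s ≤ t) : tent S s t = s * (S - t) :=
  min_eq_right (by nlinarith)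

lemma continuous_tent : Continuous (tent S s) := by
  unfold tent
  fun_prop

lemma HasEnergyBound.add_tent (h : HasEnergyBound q G (Icc 0 S)) (hs : s ∈ Icc 0 S) (l : ℝ)
    (e : E) : HasEnergyBound (fun t => q t + l • tent S s t • e)
      (fun t => G t + 2 * l * inner ℝ e ((S - s) • q (min t s) - s • q (max t s)) +
        l ^ 2 * ‖e‖ ^ 2 * ((S - s) ^ 2 * min t s + s ^ 2 * max t s)) (Icc 0 S) := by
  have hS : 0 ≤ S := hs.1.trans hs.2
  refine HasEnergyBound.union_Icc (b := s) ?_ ?_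
  · refine (((h.mono (Icc_subset_Icc_right hs.2)).add_affine 0 ((l * (S - s)) • e)).add_const
      (l ^ 2 * ‖e‖ ^ 2 * (s ^ 2 * s) - 2 * l * s * inner ℝ e (q s))).congr
      (fun t ht => ?_) fun t ht => ?_
    · simp only [tent_of_le hS ht.2]
      module
    · simp only [min_eq_left ht.2, max_eq_right ht.2, inner_sub_right, inner_smul_right,
        real_inner_smul_left, norm_smul, mul_pow, Real.norm_eq_abs, sq_abs]
      ring
  · refine (((h.mono (Icc_subset_Icc_left hs.1)).add_affine ((l * s * S) • e)
      (-(l * s) • e)).add_const (2 * l * (S - s) * inner ℝ e (q s) +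
        l ^ 2 * ‖e‖ ^ 2 * ((S - s) ^ 2 * s))).congr (fun t ht => ?_) fun t ht => ?_
    · simp only [tent_of_ge hS ht.1]
      module
    · simp only [min_eq_right ht.1, max_eq_left ht.1, inner_sub_right, inner_smul_right,
        real_inner_smul_left, norm_smul, mul_pow, Real.norm_eq_abs, abs_neg, sq_abs]
      ring

lemma eventually_forall_add_smul_mem (hq : Continuous q) (hψ : Continuous ψ)
    (hK : ∀ t ∈ Icc a b, q t ∈ interior K) :
    ∀ᶠ l : ℝ in 𝓝 0, ∀ t ∈ Icc a b, q t + l • ψ t ∈ K := by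
  refine isCompact_Icc.eventually_forall_of_forall_eventually fun t ht => ?_
  have hcont : Continuous fun z : ℝ × ℝ => q z.2 + z.1 • ψ z.2 := by fun_prop
  refine hcont.continuousAt.eventually (mem_interior_iff_mem_nhds.1 ?_)
  simpa using hK t ht

lemma hasDerivAt_integral_comp_add_smul [CompleteSpace E] {L : NNReal} {g : E → E}
    (hU : Continuous U) (hL : LipschitzOnWith L U K) (hq : Continuous q) (hψ : Continuous ψ)
    (hg : Continuous g) (hab : a ≤ b) (hK : ∀ t ∈ Icc a b, q t ∈ interior K)
    (hgrad : ∀ t ∈ Ioo a b, HasGradientAt U (g (q t)) (q t)) :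
    HasDerivAt (fun l : ℝ => ∫ t in a..b, U (q t + l • ψ t))
      (∫ t in a..b, inner ℝ (ψ t) (g (q t))) 0 := by
  have hsub : uIoc a b ⊆ Icc a b := by
    rw [uIoc_of_le hab]
    exact Ioc_subset_Icc_self
  refine (intervalIntegral.hasDerivAt_integral_of_dominated_loc_of_lip
    (bound := fun t => L * ‖ψ t‖) (eventually_forall_add_smul_mem hq hψ hK)
    (Eventually.of_forall fun l => ?_) ?_ ?_ (Eventually.of_forall fun t ht => ?_) ?_ ?_).2
  · exact Continuous.aestronglyMeasurable (by fun_prop)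
  · exact Continuous.intervalIntegrable (by fun_prop) _ _
  · exact Continuous.aestronglyMeasurable (by fun_prop)
  · refine LipschitzOnWith.of_dist_le_mul fun l hl l' hl' => ?_
    refine (hL.dist_le_mul _ (hl t (hsub ht)) _ (hl' t (hsub ht))).trans_eq ?_
    rw [dist_add_left, dist_eq_norm, ← sub_smul, norm_smul, Real.coe_nnabs,
      abs_of_nonneg (by positivity), Real.dist_eq, Real.norm_eq_abs]
    ring
  · exact Continuous.intervalIntegrable (by fun_prop) _ _
  · have hb : ∀ᵐ t : ℝ, t ≠ b := by simp [ae_iff, measure_singleton]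
    filter_upwards [hb] with t htb ht
    rw [uIoc_of_le hab] at ht
    have hline : HasDerivAt (fun l : ℝ => q t + l • ψ t) (ψ t) 0 := by
      simpa using ((hasDerivAt_id (0 : ℝ)).smul_const (ψ t)).const_add (q t)
    have hU' : HasFDerivAt U (InnerProductSpace.toDual ℝ E (g (q t))) (q t + (0 : ℝ) • ψ t) := by
      simpa using (hgrad t ⟨ht.1, ht.2.lt_of_ne htb⟩).hasFDerivAt
    refine (hU'.comp_hasDerivAt (0 : ℝ) hline).congr_deriv ?_
    rw [InnerProductSpace.toDual_apply_apply, real_inner_comm]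

lemma IsMinimalPath.eventually_action_le {A B : Set E} (h : IsMinimalPath U K A B S q G)
    (hU : Continuous U) (hK : ∀ t ∈ Icc 0 S, q t ∈ interior K) (hs : s ∈ Icc 0 S) (e : E) :
    ∀ᶠ l : ℝ in 𝓝 0, action U q G 0 S ≤ 2⁻¹ * (G S - G 0) +
      (l * inner ℝ e ((S - s) • q s - s • q S - ((S - s) • q 0 - s • q s)) +
        l ^ 2 * (2⁻¹ * ‖e‖ ^ 2 * ((S - s) ^ 2 * s + s ^ 2 * S - s ^ 2 * s)) +
        ∫ t in 0..S, U (q t + l • tent S s t • e)) := by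
  have hS := h.duration_nonneg
  have hψ : Continuous fun t => tent S s t • e := continuous_tent.smul continuous_const
  filter_upwards [eventually_forall_add_smul_mem h.hasEnergyBound.continuous hψ hK] with l hl
  refine h.action_le_of_joins hU le_rfl hS le_rfl ⟨0, S, hS, _, _,
    (h.hasEnergyBound.mono (subset_univ _)).add_tent hs l e, hl, ?_, ?_, ?_⟩
  · simp [tent_of_le hS hs.1]
  · simp [tent_of_ge hS hs.2]
  · simp only [action, min_eq_left hs.1, max_eq_right hs.1, min_eq_right hs.2, max_eq_left hs.2,
      inner_sub_right]
    exact le_of_eq (by ring)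

/-- Weak Euler–Lagrange equation, tested against tents times constant vectors. -/
lemma IsMinimalPath.green_identity [CompleteSpace E] {A B : Set E} {L : NNReal} {g : E → E}
    (h : IsMinimalPath U K A B S q G) (hU : Continuous U) (hL : LipschitzOnWith L U K)
    (hg : Continuous g) (hK : ∀ t ∈ Icc 0 S, q t ∈ interior K)
    (hgrad : ∀ t ∈ Ioo 0 S, HasGradientAt U (g (q t)) (q t)) (hs : s ∈ Icc 0 S) :
    S • q s = (S - s) • q 0 + s • q S - ∫ t in 0..S, tent S s t • g (q t) := by
  have hq := h.hasEnergyBound.continuous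
  refine ext_inner_left ℝ fun e => ?_
  have hψ : Continuous fun t => tent S s t • e := continuous_tent.smul continuous_const
  set β : ℝ := inner ℝ e ((S - s) • q s - s • q S - ((S - s) • q 0 - s • q s))
  set γ : ℝ := 2⁻¹ * ‖e‖ ^ 2 * ((S - s) ^ 2 * s + s ^ 2 * S - s ^ 2 * s)
  have hcost : ∀ᶠ l : ℝ in 𝓝 0, action U q G 0 S ≤
      2⁻¹ * (G S - G 0) + (l * β + l ^ 2 * γ + ∫ t in 0..S, U (q t + l • tent S s t • e)) :=
    h.eventually_action_le hU hK hs e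
  have hmin : IsLocalMin
      (fun l : ℝ => l * β + l ^ 2 * γ + ∫ t in 0..S, U (q t + l • tent S s t • e)) 0 := by
    filter_upwards [hcost] with l hl
    unfold action at hl
    simp only [zero_mul, zero_smul, add_zero, zero_add, ne_eq, OfNat.ofNat_ne_zero,
      not_false_eq_true, zero_pow]
    linarith only [hl]
  have hderiv := (((hasDerivAt_id (0 : ℝ)).mul_const β).add
    ((hasDerivAt_pow 2 (0 : ℝ)).mul_const γ)).add
    (hasDerivAt_integral_comp_add_smul hU hL hq hψ hg h.duration_nonneg hK hgrad)
  have hzero := hmin.hasDerivAt_eq_zero hderiv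
  have hinner : inner ℝ e (∫ t in 0..S, tent S s t • g (q t)) =
      ∫ t in 0..S, inner ℝ (tent S s t • e) (g (q t)) := by
    have hint : IntervalIntegrable (fun t => tent S s t • g (q t)) volume 0 S :=
      (continuous_tent.smul (hg.comp hq)).intervalIntegrable _ _
    rw [← innerSL_apply_apply ℝ, ← (innerSL ℝ e).intervalIntegral_comp_comm hint]
    simp only [innerSL_apply_apply, inner_smul_right, real_inner_smul_left]
  simp only [β, inner_sub_right, inner_smul_right] at hzero
  simp only [inner_sub_right, inner_add_right, inner_smul_right, hinner]
  norm_num at hzero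
  linarith only [hzero]

lemma integral_affine_smul_of_hasDerivAt [CompleteSpace E] {f v x : ℝ → E} (hf : Continuous f)
    (hv : ∀ t, HasDerivAt v (f t) t) (hx : ∀ t, HasDerivAt x (v t) t) (k d : ℝ) :
    ∫ t in a..b, (k * t + d) • f t =
      (k * b + d) • v b - k • x b - ((k * a + d) • v a - k • x a) := by
  refine intervalIntegral.integral_eq_sub_of_hasDerivAt
    (f := fun t => (k * t + d) • v t - k • x t) (fun t _ => ?_)
    (Continuous.intervalIntegrable (by fun_prop) _ _)
  refine (((((hasDerivAt_id t).const_mul k).add_const d).smul (hv t)).sub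
    ((hx t).const_smul k)).congr_deriv ?_
  simp only [id]
  module

lemma green_identity_of_hasDerivAt [CompleteSpace E] {f v x : ℝ → E} (hf : Continuous f)
    (hv : ∀ t, HasDerivAt v (f t) t) (hx : ∀ t, HasDerivAt x (v t) t) (hs : s ∈ Icc 0 S) :
    S • x s = (S - s) • x 0 + s • x S - ∫ t in 0..S, tent S s t • f t := by
  have hS : 0 ≤ S := hs.1.trans hs.2
  have hint (a b : ℝ) : IntervalIntegrable (fun t => tent S s t • f t) volume a b :=
    (continuous_tent.smul hf).intervalIntegrable a b
  have hleft : ∫ t in 0..s, tent S s t • f t = ∫ t in 0..s, ((S - s) * t + 0) • f t :=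
    intervalIntegral.integral_congr fun t ht => by
      rw [uIcc_of_le hs.1] at ht
      simp only [tent_of_le hS ht.2, add_zero]
  have hright : ∫ t in s..S, tent S s t • f t = ∫ t in s..S, (-s * t + s * S) • f t :=
    intervalIntegral.integral_congr fun t ht => by
      rw [uIcc_of_le hs.2] at ht
      simp only [tent_of_ge hS ht.1]
      congr 1
      ring
  rw [← intervalIntegral.integral_add_adjacent_intervals (hint 0 s) (hint s S), hleft, hright,
    integral_affine_smul_of_hasDerivAt hf hv hx, integral_affine_smul_of_hasDerivAt hf hv hx]
  module

lemma tendsto_slope_integral {f : ℝ → ℝ} (hf : Continuous f) (t : ℝ) :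
    Tendsto (slope (fun s => ∫ r in t..s, f r) t) (𝓝[>] t) (𝓝 (f t)) :=
  (hasDerivWithinAt_iff_tendsto_slope' self_notMem_Ioi).1
    (hf.integral_hasStrictDerivAt t t).hasDerivAt.hasDerivWithinAt

lemma le_of_integral_le_integral {f g : ℝ → ℝ} (hf : Continuous f) (hg : Continuous g) {t S : ℝ}
    (ht : t < S) (hfg : ∀ s ∈ Ioo t S, ∫ r in t..s, f r ≤ ∫ r in t..s, g r) : f t ≤ g t := by
  refine le_of_tendsto_of_tendsto (tendsto_slope_integral hf t) (tendsto_slope_integral hg t) ?_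
  filter_upwards [Ioo_mem_nhdsGT ht] with s hs
  simp only [slope_def_field, intervalIntegral.integral_same, sub_zero]
  exact div_le_div_of_nonneg_right (hfg s hs) (sub_nonneg.2 hs.1.le)

lemma sq_norm_deriv_le_of_sq_norm_sub_le {f : ℝ → ℝ} {v : E} {t : ℝ} (hf : Continuous f)
    (hbound : ∀ s ∈ Ioo t S, ‖q s - q t‖ ^ 2 ≤ (s - t) * ∫ r in t..s, f r)
    (hq : HasDerivWithinAt q v (Ioi t) t) (ht : t < S) : ‖v‖ ^ 2 ≤ f t := by
  have hslope := (hasDerivWithinAt_iff_tendsto_slope' self_notMem_Ioi).1 hq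
  refine le_of_tendsto_of_tendsto (hslope.norm.pow 2) (tendsto_slope_integral hf t) ?_
  filter_upwards [Ioo_mem_nhdsGT ht] with s hs
  have hpos : 0 < s - t := sub_pos.2 hs.1
  rw [slope_def_module, norm_smul, mul_pow, norm_inv, Real.norm_of_nonneg hpos.le,
    slope_def_field, intervalIntegral.integral_same, sub_zero, inv_pow, ← div_eq_inv_mul,
    div_le_div_iff₀ (by positivity) hpos]
  nlinarith only [hbound s hs, hpos]

end Variation

section Regularity

variable {E : Type*} [NormedAddCommGroup E] [InnerProductSpace ℝ E] [CompleteSpace E] {U : E → ℝ}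
  {K A B : Set E} {q : ℝ → E} {G : ℝ → ℝ} {S : ℝ}

lemma IsMinimalPath.exists_hasDerivAt {L : NNReal} {g : E → E}
    (h : IsMinimalPath U K A B S q G) (hU : Continuous U) (hL : LipschitzOnWith L U K)
    (hg : Continuous g) (hS : 0 < S) (hK : ∀ t ∈ Icc 0 S, q t ∈ interior K)
    (hgrad : ∀ t ∈ Ioo 0 S, HasGradientAt U (g (q t)) (q t)) :
    ∃ Q v : ℝ → E, (∀ t, HasDerivAt Q (v t) t) ∧ (∀ t, HasDerivAt v (g (q t)) t) ∧
      EqOn q Q (Icc 0 S) := by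
  have hgq : Continuous fun t => g (q t) := hg.comp h.hasEnergyBound.continuous
  set w : ℝ → E := fun t => ∫ r in (0 : ℝ)..t, g (q r)
  have hw (t : ℝ) : HasDerivAt w (g (q t)) t := (hgq.integral_hasStrictDerivAt 0 t).hasDerivAt
  have hw_cont : Continuous w := continuous_iff_continuousAt.2 fun t => (hw t).continuousAt
  set y : ℝ → E := fun t => ∫ r in (0 : ℝ)..t, w r
  have hy (t : ℝ) : HasDerivAt y (w t) t := (hw_cont.integral_hasStrictDerivAt 0 t).hasDerivAt
  refine ⟨fun t => y t + (q 0 + t • S⁻¹ • (q S - y S - q 0)),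
    fun t => w t + S⁻¹ • (q S - y S - q 0), fun t => ?_, fun t => (hw t).add_const _, ?_⟩
  · exact (hy t).add (by simpa using
      ((hasDerivAt_id t).smul_const (S⁻¹ • (q S - y S - q 0))).const_add (q 0))
  · intro s hs
    have hy0 : y 0 = 0 := intervalIntegral.integral_same
    have hgreen := green_identity_of_hasDerivAt hgq hw hy hs
    have hsol : S • (q s - y s - q 0 - s • S⁻¹ • (q S - y S - q 0)) = 0 := by
      rw [smul_sub, smul_comm s, smul_inv_smul₀ hS.ne', smul_sub, smul_sub, hgreen,
        h.green_identity hU hL hg hK hgrad hs, hy0]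
      module
    have hq := (smul_eq_zero.1 hsol).resolve_left hS.ne'
    rw [sub_sub, sub_sub, sub_eq_zero] at hq
    exact hq

lemma hasEnergyBound_of_hasDerivAt {Q v : ℝ → E} (hv : Continuous v)
    (hQ : ∀ t, HasDerivAt Q (v t) t) :
    HasEnergyBound Q (fun t => ∫ r in (0 : ℝ)..t, ‖v r‖ ^ 2) univ := by
  intro s _ t _ hst
  have hint (f : ℝ → ℝ) (hf : Continuous f) (a b : ℝ) : IntervalIntegrable f volume a b :=
    hf.intervalIntegrable a b
  set I := ∫ r in s..t, ‖v r‖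
  have hquad : ∀ m : ℝ, 0 ≤ (t - s) * (m * m) + -2 * I * m + ∫ r in s..t, ‖v r‖ ^ 2 := by
    intro m
    have hpos : 0 ≤ ∫ r in s..t, (‖v r‖ - m) ^ 2 :=
      intervalIntegral.integral_nonneg hst fun r _ => sq_nonneg _
    simp only [sub_sq] at hpos
    rw [intervalIntegral.integral_add (hint _ (by fun_prop) _ _) intervalIntegrable_const,
      intervalIntegral.integral_sub (hint _ (by fun_prop) _ _) (hint _ (by fun_prop) _ _),
      intervalIntegral.integral_mul_const, intervalIntegral.integral_const_mul,
      intervalIntegral.integral_const, smul_eq_mul] at hpos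
    linarith only [hpos]
  have hdiscrim := discrim_le_zero hquad
  have hnorm : ‖Q t - Q s‖ ≤ I := by
    rw [← intervalIntegral.integral_eq_sub_of_hasDerivAt (fun r _ => hQ r)
      (hv.intervalIntegrable s t)]
    exact intervalIntegral.norm_integral_le_integral_norm hst
  rw [intervalIntegral.integral_interval_sub_left (hint _ (by fun_prop) _ _)
    (hint _ (by fun_prop) _ _)]
  calc ‖Q t - Q s‖ ^ 2 ≤ I ^ 2 := by gcongr
    _ ≤ (t - s) * ∫ r in s..t, ‖v r‖ ^ 2 := by
      rw [discrim] at hdiscrim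
      linarith only [hdiscrim]

/-- Equipartition, on arcs shrinking to a point. -/
lemma IsMinimalPath.sq_norm_deriv_eq {Q v : ℝ → E} (h : IsMinimalPath U K A B S q G)
    (hU : Continuous U) (hv : Continuous v) (hQ : ∀ t, HasDerivAt Q (v t) t)
    (hqQ : EqOn q Q (Icc 0 S)) (hS : 0 < S) :
    EqOn (fun t => ‖v t‖ ^ 2) (fun t => 2 * U (q t)) (Icc 0 S) := by
  have hq := h.hasEnergyBound.continuous
  have hIco : EqOn (fun t => ‖v t‖ ^ 2) (fun t => 2 * U (q t)) (Ico 0 S) := by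
    intro t ht
    have hkin {s : ℝ} (hs : s ∈ Ioo t S) : G s - G t = ∫ r in t..s, 2 * U (q r) := by
      rw [intervalIntegral.integral_const_mul, h.equipartition hU ht.1 hs.1.le hs.2.le]
    have hUq : Continuous fun r => 2 * U (q r) := by fun_prop
    have hv_sq : Continuous fun r => ‖v r‖ ^ 2 := by fun_prop
    refine le_antisymm (sq_norm_deriv_le_of_sq_norm_sub_le (q := q)
      (f := fun r => 2 * U (q r)) hUq (fun s hs => ?_) ?_ ht.2) (le_of_integral_le_integral
      hUq hv_sq ht.2 fun s hs => ?_)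
    · rw [← hkin hs]
      exact h.hasEnergyBound (mem_univ t) (mem_univ s) hs.1.le
    · refine (hQ t).hasDerivWithinAt.congr_of_eventuallyEq ?_ (hqQ ⟨ht.1, ht.2.le⟩)
      filter_upwards [Ioo_mem_nhdsGT ht.2] with s hs using hqQ ⟨ht.1.trans hs.1.le, hs.2.le⟩
    · have hsub : Icc t s ⊆ Icc 0 S := Icc_subset_Icc ht.1 hs.2.le
      have hle := h.action_le_of_joins hU ht.1 hs.1.le hs.2.le ⟨t, s, hs.1.le, q, _,
        ((hasEnergyBound_of_hasDerivAt hv hQ).mono (subset_univ _)).congr (hqQ.mono hsub)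
          (eqOn_refl _ _), fun r _ => h.mem r, rfl, rfl, le_rfl⟩
      rw [action, action, intervalIntegral.integral_interval_sub_left
        (hv_sq.intervalIntegrable _ _) (hv_sq.intervalIntegrable _ _)] at hle
      rw [← hkin hs]
      linarith only [hle]
  rw [← closure_Ico hS.ne]
  exact hIco.closure (by fun_prop) (by fun_prop)

end Regularity

/-! ### Approximate solutions and their reflections -/

section ApproxSolution

variable {F : Type*} [NormedAddCommGroup F]

lemma intervalIntegrable_comp_of_mem_isCompact {f : F → F} {y : ℝ → F} {K : Set F}
    (hf : Continuous f) (hK : IsCompact K) (hy : StronglyMeasurable y) (hmem : ∀ t, y t ∈ K)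
    (a b : ℝ) : IntervalIntegrable (fun t => f (y t)) volume a b := by
  obtain ⟨M, hM⟩ := hK.exists_bound_of_continuousOn hf.continuousOn
  exact (intervalIntegrable_const (c := M)).mono_fun'
    (hf.comp_stronglyMeasurable hy).aestronglyMeasurable
    (Eventually.of_forall fun t => hM _ (hmem t))

variable [NormedSpace ℝ F]

/-- `y` solves the integral form of `y' = f(y)` on `I` up to a total error `η`. No continuity is
asked for, so that small jumps are allowed. -/
def IsApproxSolution (f : F → F) (η : ℝ) (y : ℝ → F) (I : Set ℝ) : Prop :=
  ∀ ⦃s⦄, s ∈ I → ∀ ⦃t⦄, t ∈ I → s ≤ t → ‖y t - y s - ∫ r in s..t, f (y r)‖ ≤ η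

/-- The linear involution `ρ` reverses the flow of `f`. -/
structure IsReversing (ρ : F →L[ℝ] F) (f : F → F) : Prop where
  involutive : Function.Involutive ρ
  norm_le : ∀ x, ‖ρ x‖ ≤ ‖x‖
  map_eq : ∀ x, f (ρ x) = -ρ (f x)

namespace IsApproxSolution

variable {f : F → F} {y z : ℝ → F} {I J : Set ℝ} {a b c η η' e : ℝ}

lemma mono (h : IsApproxSolution f η y I) (hη : η ≤ η') (hJ : J ⊆ I) :
    IsApproxSolution f η' y J :=
  fun _ hs _ ht hst => (h (hJ hs) (hJ ht) hst).trans hη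

lemma norm_sub_integral_le (h : IsApproxSolution f η y I) {s t : ℝ} (hs : s ∈ I) (ht : t ∈ I) :
    ‖y t - y s - ∫ r in s..t, f (y r)‖ ≤ η := by
  rcases le_total s t with hst | hts
  · exact h hs ht hst
  · rw [intervalIntegral.integral_symm, ← norm_neg,
      show -(y t - y s - -∫ r in t..s, f (y r)) = y s - y t - ∫ r in t..s, f (y r) by abel]
    exact h ht hs hts

lemma of_hasDerivAt [CompleteSpace F] (hf : Continuous f)
    (hy : ∀ t ∈ Icc a b, HasDerivAt y (f (y t)) t) : IsApproxSolution f 0 y (Icc a b) := by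
  intro s hs t ht hst
  have hsub : uIcc s t ⊆ Icc a b := by
    rw [uIcc_of_le hst]
    exact Icc_subset_Icc hs.1 ht.2
  have hcont : ContinuousOn (fun r => f (y r)) (uIcc s t) :=
    hf.comp_continuousOn fun r hr => (hy r (hsub hr)).continuousAt.continuousWithinAt
  rw [intervalIntegral.integral_eq_sub_of_hasDerivAt (fun r hr => hy r (hsub hr))
    hcont.intervalIntegrable, sub_self, norm_zero]

lemma union_Icc (hint : ∀ s t, IntervalIntegrable (fun r => f (y r)) volume s t)
    (hab : IsApproxSolution f η y (Icc a b)) (hbc : IsApproxSolution f η' y (Icc b c))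
    (hη : 0 ≤ η) (hη' : 0 ≤ η') : IsApproxSolution f (η + η') y (Icc a c) := by
  intro s hs t ht hst
  rcases le_total t b with htb | hbt
  · exact (hab ⟨hs.1, hst.trans htb⟩ ⟨ht.1, htb⟩ hst).trans (le_add_of_nonneg_right hη')
  rcases le_total b s with hbs | hsb
  · exact (hbc ⟨hbs, hs.2⟩ ⟨hbt, ht.2⟩ hst).trans (le_add_of_nonneg_left hη)
  rw [← intervalIntegral.integral_add_adjacent_intervals (hint s b) (hint b t),
    show y t - y s - ((∫ r in s..b, f (y r)) + ∫ r in b..t, f (y r)) =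
      (y b - y s - ∫ r in s..b, f (y r)) + (y t - y b - ∫ r in b..t, f (y r)) by abel]
  exact norm_add_le_of_le (hab ⟨hs.1, hsb⟩ ⟨hs.1.trans hsb, le_rfl⟩ hsb)
    (hbc ⟨le_rfl, hbt.trans ht.2⟩ ⟨hbt, ht.2⟩ hbt)

lemma congr_Ioo (h : IsApproxSolution f η y (Icc a b)) (hzy : EqOn z y (Ioo a b))
    (ha : ‖z a - y a‖ ≤ e) (hb : ‖z b - y b‖ ≤ e) :
    IsApproxSolution f (η + 2 * e) z (Icc a b) := by
  intro s hs t ht hst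
  have hclose : ∀ r ∈ Icc a b, ‖z r - y r‖ ≤ e := by
    intro r hr
    rcases hr.1.eq_or_lt with rfl | har
    · exact ha
    rcases hr.2.eq_or_lt with rfl | hrb
    · exact hb
    rw [hzy ⟨har, hrb⟩, sub_self, norm_zero]
    exact (norm_nonneg _).trans ha
  have hint : ∫ r in s..t, f (z r) = ∫ r in s..t, f (y r) := by
    refine intervalIntegral.integral_congr_Ioo_of_le hst fun r hr => ?_
    exact congrArg f (hzy ⟨hs.1.trans_lt hr.1, hr.2.trans_le ht.2⟩)
  rw [hint, show z t - z s - ∫ r in s..t, f (y r) =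
    (y t - y s - ∫ r in s..t, f (y r)) + ((z t - y t) - (z s - y s)) by abel, two_mul]
  exact norm_add_le_of_le (h hs ht hst) (norm_sub_le_of_le (hclose t ht) (hclose s hs))

lemma comp_sub_left [CompleteSpace F] {ρ : F →L[ℝ] F} (hρ : IsReversing ρ f)
    (hint : ∀ s t, IntervalIntegrable (fun r => f (y r)) volume s t)
    (h : IsApproxSolution f η y I) (d : ℝ) :
    IsApproxSolution f η (fun t => ρ (y (d - t))) {t | d - t ∈ I} := by
  intro s hs t ht hst
  have hintegral : ∫ r in s..t, f (ρ (y (d - r))) = -ρ (∫ r in d - t..d - s, f (y r)) := by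
    simp only [hρ.map_eq, intervalIntegral.integral_neg]
    rw [intervalIntegral.integral_comp_sub_left (fun r => ρ (f (y r))),
      ρ.intervalIntegral_comp_comm (hint _ _)]
  rw [hintegral, show ρ (y (d - t)) - ρ (y (d - s)) - -ρ (∫ r in d - t..d - s, f (y r)) =
    -ρ (y (d - s) - y (d - t) - ∫ r in d - t..d - s, f (y r)) by simp only [map_sub]; abel,
    norm_neg]
  exact (hρ.norm_le _).trans (h ht hs (sub_le_sub_left hst d))

end IsApproxSolution

/-- An approximate solution on `[a, b]`, with values in `K`, which is moved at most `e` by the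
reversor `ρ` at both endpoints. -/
structure IsPseudoOrbit (f : F → F) (ρ : F →L[ℝ] F) (K : Set F) (η e : ℝ) (y : ℝ → F)
    (a b : ℝ) : Prop where
  stronglyMeasurable : StronglyMeasurable y
  mem : ∀ t, y t ∈ K
  isApproxSolution : IsApproxSolution f η y (Icc a b)
  jump_left : ‖ρ (y a) - y a‖ ≤ e
  jump_right : ‖ρ (y b) - y b‖ ≤ e

/-- The curve that follows `y` on `[a, b]` and continues it by reflection through `ρ` at both
ends. -/
def unfoldEnds (ρ : F →L[ℝ] F) (y : ℝ → F) (a b t : ℝ) : F :=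
  if t < a then ρ (y (2 * a - t)) else if t ≤ b then y t else ρ (y (2 * b - t))

lemma eqOn_unfoldEnds (ρ : F →L[ℝ] F) (y : ℝ → F) (a b : ℝ) :
    EqOn (unfoldEnds ρ y a b) y (Icc a b) := by
  intro t ht
  rw [unfoldEnds, if_neg ht.1.not_gt, if_pos ht.2]

lemma unfoldEnds_of_lt (ρ : F →L[ℝ] F) (y : ℝ → F) {a t : ℝ} (b : ℝ) (ht : t < a) :
    unfoldEnds ρ y a b t = ρ (y (2 * a - t)) :=
  if_pos ht

lemma unfoldEnds_of_gt (ρ : F →L[ℝ] F) (y : ℝ → F) {a b t : ℝ} (hab : a ≤ b) (ht : b < t) :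
    unfoldEnds ρ y a b t = ρ (y (2 * b - t)) := by
  rw [unfoldEnds, if_neg (hab.trans_lt ht).not_gt, if_neg ht.not_ge]

lemma unfoldEnds_mem {ρ : F →L[ℝ] F} {y : ℝ → F} {K : Set F} (hρ : MapsTo ρ K K)
    (hy : ∀ t, y t ∈ K) (a b t : ℝ) : unfoldEnds ρ y a b t ∈ K := by
  unfold unfoldEnds
  split_ifs
  exacts [hρ (hy _), hy _, hρ (hy _)]

lemma stronglyMeasurable_unfoldEnds (ρ : F →L[ℝ] F) {y : ℝ → F} (hy : StronglyMeasurable y)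
    (a b : ℝ) : StronglyMeasurable (unfoldEnds ρ y a b) := by
  have hreflect (d : ℝ) : StronglyMeasurable fun t => ρ (y (2 * d - t)) :=
    ρ.continuous.comp_stronglyMeasurable (hy.comp_measurable (by fun_prop))
  exact (hreflect a).ite measurableSet_Iio (hy.ite measurableSet_Iic (hreflect b))

namespace IsPseudoOrbit

variable {f : F → F} {ρ : F →L[ℝ] F} {K : Set F} {η e a b : ℝ} {y : ℝ → F}

lemma error_nonneg (h : IsPseudoOrbit f ρ K η e y a b) (hab : a ≤ b) : 0 ≤ η :=
  (norm_nonneg _).trans (h.isApproxSolution ⟨le_rfl, hab⟩ ⟨le_rfl, hab⟩ le_rfl)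

lemma jump_nonneg (h : IsPseudoOrbit f ρ K η e y a b) : 0 ≤ e :=
  (norm_nonneg _).trans h.jump_left

lemma of_hasDerivAt [CompleteSpace F] (hf : Continuous f) (hab : a ≤ b)
    (hy : ∀ t ∈ Icc a b, HasDerivAt y (f (y t)) t) (hmem : MapsTo y (Icc a b) K)
    (ha : ‖ρ (y a) - y a‖ ≤ e) (hb : ‖ρ (y b) - y b‖ ≤ e) :
    IsPseudoOrbit f ρ K 0 e (fun t => y (projIcc a b hab t)) a b := by
  have hproj : EqOn (fun t => y (projIcc a b hab t)) y (Icc a b) := fun t ht => by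
    simp only [projIcc_of_mem hab ht]
  have hcont : ContinuousOn y (Icc a b) := fun t ht => (hy t ht).continuousAt.continuousWithinAt
  refine ⟨?_, fun t => hmem (projIcc a b hab t).2, ?_, ?_, ?_⟩
  · exact (hcont.domRestrict.comp continuous_projIcc).stronglyMeasurable
  · simpa using (IsApproxSolution.of_hasDerivAt hf hy).congr_Ioo
      (hproj.mono Ioo_subset_Icc_self) (e := 0) (by simp) (by simp)
  · simpa using ha
  · simpa using hb

lemma isApproxSolution_reflect [CompleteSpace F] (h : IsPseudoOrbit f ρ K η e y a b)
    (hf : Continuous f) (hρ : IsReversing ρ f) (hK : IsCompact K) {d : ℝ} {z : ℝ → F}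
    (hz : EqOn z (fun t => ρ (y (d - t))) (Ioo (d - b) (d - a)))
    (hz_left : ‖z (d - b) - ρ (y b)‖ ≤ e) (hz_right : ‖z (d - a) - ρ (y a)‖ ≤ e) :
    IsApproxSolution f (η + 2 * e) z (Icc (d - b) (d - a)) := by
  have hint := intervalIntegrable_comp_of_mem_isCompact hf hK h.stronglyMeasurable h.mem
  exact ((h.isApproxSolution.comp_sub_left hρ hint d).mono le_rfl
    fun t ht => ⟨le_sub_comm.1 ht.2, sub_le_comm.1 ht.1⟩).congr_Ioo hz
    (by simpa using hz_left) (by simpa using hz_right)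

lemma unfoldEnds [CompleteSpace F] (h : IsPseudoOrbit f ρ K η e y a b) (hf : Continuous f)
    (hρ : IsReversing ρ f) (hK : IsCompact K) (hρK : MapsTo ρ K K) (hab : a < b) :
    IsPseudoOrbit f ρ K (3 * η + 4 * e) e (unfoldEnds ρ y a b) (2 * a - b) (2 * b - a) := by
  set z := Duffing.unfoldEnds ρ y a b
  have hmeas : StronglyMeasurable z := stronglyMeasurable_unfoldEnds ρ h.stronglyMeasurable a b
  have hzK : ∀ t, z t ∈ K := unfoldEnds_mem hρK h.mem a b
  have hz_lt : ∀ t < a, z t = ρ (y (2 * a - t)) := fun t ht => unfoldEnds_of_lt ρ y b ht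
  have hz_mid : EqOn z y (Icc a b) := eqOn_unfoldEnds ρ y a b
  have hz_gt : ∀ t > b, z t = ρ (y (2 * b - t)) := fun t ht =>
    unfoldEnds_of_gt ρ y hab.le ht
  have hza := hz_mid (left_mem_Icc.2 hab.le)
  have hzb := hz_mid (right_mem_Icc.2 hab.le)
  have hend_left : z (2 * a - b) = ρ (y b) := by
    rw [hz_lt _ (by linarith only [hab]), sub_sub_cancel]
  have hend_right : z (2 * b - a) = ρ (y a) := by
    rw [hz_gt _ (by linarith only [hab]), sub_sub_cancel]
  have haa : 2 * a - a = a := by ring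
  have hbb : 2 * b - b = b := by ring
  have hη := h.error_nonneg hab.le
  have he := h.jump_nonneg
  have hleft := h.isApproxSolution_reflect hf hρ hK (d := 2 * a) (z := z)
    (fun t ht => hz_lt t (haa ▸ ht.2)) (by rwa [hend_left, sub_self, norm_zero])
    (by rw [haa, hza, norm_sub_rev]; exact h.jump_left)
  have hmid : IsApproxSolution f η z (Icc a b) := by
    simpa using h.isApproxSolution.congr_Ioo (hz_mid.mono Ioo_subset_Icc_self) (e := 0)
      (by simp [hza]) (by simp [hzb])
  have hright := h.isApproxSolution_reflect hf hρ hK (d := 2 * b) (z := z)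
    (fun t ht => hz_gt t (hbb ▸ ht.1)) (by rw [hbb, hzb, norm_sub_rev]; exact h.jump_right)
    (by rwa [hend_right, sub_self, norm_zero])
  rw [haa] at hleft
  rw [hbb] at hright
  have hint := intervalIntegrable_comp_of_mem_isCompact hf hK hmeas hzK
  refine ⟨hmeas, hzK, ((hleft.union_Icc hint hmid (by positivity) hη).union_Icc hint hright
    (by positivity) (by positivity)).mono (by linarith only) subset_rfl, ?_, ?_⟩
  · rw [hend_left, hρ.involutive, norm_sub_rev]
    exact h.jump_right
  · rw [hend_right, hρ.involutive, norm_sub_rev]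
    exact h.jump_left

lemma exists_extension [CompleteSpace F] (h : IsPseudoOrbit f ρ K η e y a b) (hf : Continuous f)
    (hρ : IsReversing ρ f) (hK : IsCompact K) (hρK : MapsTo ρ K K) (hab : a < b) (n : ℕ) :
    ∃ z a' b', IsPseudoOrbit f ρ K (3 ^ n * (η + 2 * e) - 2 * e) e z a' b' ∧
      EqOn z y (Icc a b) ∧ a' ≤ a - n * (b - a) ∧ b + n * (b - a) ≤ b' := by
  induction n with
  | zero => exact ⟨y, a, b, by simpa using h, eqOn_refl _ _, by simp, by simp⟩
  | succ n ih =>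
    obtain ⟨z, a', b', hz, hzy, ha', hb'⟩ := ih
    have hn : 0 ≤ n * (b - a) := mul_nonneg n.cast_nonneg (sub_nonneg.2 hab.le)
    have hab' : a' < b' := by linarith only [ha', hb', hn, hab]
    have hsub : Icc a b ⊆ Icc a' b' :=
      Icc_subset_Icc (by linarith only [ha', hn]) (by linarith only [hb', hn])
    refine ⟨_, 2 * a' - b', 2 * b' - a', ?_,
      ((eqOn_unfoldEnds ρ z a' b').mono hsub).trans hzy, ?_, ?_⟩
    · convert hz.unfoldEnds hf hρ hK hρK hab' using 1
      ring
    · push_cast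
      linarith only [ha', hb', hn]
    · push_cast
      linarith only [ha', hb', hn]

end IsPseudoOrbit

lemma hasDerivAt_of_forall_eq_add_integral [CompleteSpace F] {f : F → F} {z : ℝ → F}
    (hf : Continuous f) (hz : Continuous z) (h : ∀ t, z t = z 0 + ∫ r in (0 : ℝ)..t, f (z r))
    (t : ℝ) : HasDerivAt z (f (z t)) t := by
  refine HasDerivAt.congr_of_eventuallyEq ?_ (Eventually.of_forall h)
  exact ((hf.comp hz).integral_hasStrictDerivAt 0 t).hasDerivAt.const_add _

lemma exists_tendstoUniformlyOn_subseq_of_lipschitzWith {Y : Type*} [MetricSpace Y]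
    [ProperSpace Y] {K : Set Y} {M : NNReal} {x : ℕ → ℝ → Y} (hK : IsCompact K)
    (hx : ∀ n, LipschitzWith M (x n)) (hx0 : ∀ n, x n 0 ∈ K) :
    ∃ (z : C(ℝ, Y)) (φ : ℕ → ℕ), StrictMono φ ∧
      ∀ B, TendstoUniformlyOn (fun n => x (φ n)) z atTop (Icc (-B) B) := by
  have hmodulus : Tendsto (fun r : ℝ => M * r) (𝓝 0) (𝓝 0) :=
    Continuous.tendsto' (by fun_prop) _ _ (mul_zero _)
  have hcompact := isCompact_setOf_dist_le_modulus
    (fun t : ℝ => hK.cthickening (r := M * |t|)) hmodulus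
  obtain ⟨z, -, φ, hφ, hlim⟩ := hcompact.tendsto_subseq
    (x := fun n => ⟨x n, (hx n).continuous⟩) fun n =>
      ⟨fun t => mem_cthickening_of_dist_le _ _ _ _ (hx0 n)
        (by simpa [Real.dist_eq] using (hx n).dist_le_mul t 0), (hx n).dist_le_mul⟩
  refine ⟨z, φ, hφ, fun B => ?_⟩
  exact ContinuousMap.tendsto_iff_forall_isCompact_tendstoUniformlyOn.1 hlim _ isCompact_Icc

lemma tendstoUniformlyOn_of_isApproxSolution {f : F → F} {y : ℕ → ℝ → F} {z : ℝ → F}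
    {η T : ℕ → ℝ} {B : ℝ} (happrox : ∀ n, IsApproxSolution f (η n) (y n) (Icc (-T n) (T n)))
    (hz : TendstoUniformlyOn (fun n t => y n 0 + ∫ r in (0 : ℝ)..t, f (y n r)) z atTop
      (Icc (-B) B))
    (hη : Tendsto η atTop (𝓝 0)) (hT : Tendsto T atTop atTop) :
    TendstoUniformlyOn y z atTop (Icc (-B) B) := by
  refine Metric.tendstoUniformlyOn_iff.2 fun ε hε => ?_
  filter_upwards [Metric.tendstoUniformlyOn_iff.1 hz (ε / 2) (half_pos hε),
    hη.eventually_le_const (half_pos hε), hT.eventually_ge_atTop |B|] with n hclose hηn hTn t ht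
  have habs : |t| ≤ T n := (abs_le.2 ht).trans ((le_abs_self B).trans hTn)
  have habs_zero : |(0 : ℝ)| ≤ T n := by simpa using (abs_nonneg t).trans habs
  have herror : dist (y n t) (y n 0 + ∫ r in (0 : ℝ)..t, f (y n r)) ≤ ε / 2 := by
    rw [dist_eq_norm, ← sub_sub]
    exact ((happrox n).norm_sub_integral_le (abs_le.1 habs_zero) (abs_le.1 habs)).trans hηn
  linarith only [hclose t ht, herror, dist_triangle_right (z t) (y n t)
    (y n 0 + ∫ r in (0 : ℝ)..t, f (y n r))]

/-- Stability of `y' = f(y)` under local uniform limits, combined with Arzelà–Ascoli for the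
integrals `y n 0 + ∫₀ᵗ f(y n)`, which are equi-Lipschitz although the `y n` may jump. -/
lemma exists_solution_of_isApproxSolution [ProperSpace F] {f : F → F} {K : Set F}
    {y : ℕ → ℝ → F} {η T : ℕ → ℝ} (hf : Continuous f) (hK : IsCompact K)
    (hy : ∀ n, StronglyMeasurable (y n)) (hmem : ∀ n t, y n t ∈ K)
    (hη : Tendsto η atTop (𝓝 0)) (hT : Tendsto T atTop atTop)
    (happrox : ∀ n, IsApproxSolution f (η n) (y n) (Icc (-T n) (T n))) :
    ∃ z : ℝ → F, (∀ t, HasDerivAt z (f (z t)) t) ∧ ∃ φ : ℕ → ℕ, StrictMono φ ∧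
      ∀ B, TendstoUniformlyOn (fun n => y (φ n)) z atTop (Icc (-B) B) := by
  obtain ⟨M, hM⟩ := hK.exists_bound_of_continuousOn hf.continuousOn
  have hint := fun n => intervalIntegrable_comp_of_mem_isCompact hf hK (hy n) (hmem n)
  set x : ℕ → ℝ → F := fun n t => y n 0 + ∫ r in (0 : ℝ)..t, f (y n r)
  have hx : ∀ n, LipschitzWith M.toNNReal (x n) := by
    refine fun n => LipschitzWith.of_dist_le' fun t s => ?_
    rw [dist_add_left, dist_eq_norm, intervalIntegral.integral_interval_sub_left (hint n 0 t)
      (hint n 0 s), Real.dist_eq]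
    exact intervalIntegral.norm_integral_le_of_norm_le_const fun r _ => hM _ (hmem n r)
  obtain ⟨z, φ, hφ, hxz⟩ := exists_tendstoUniformlyOn_subseq_of_lipschitzWith hK hx
    fun n => by simpa [x] using hmem n 0
  have hyz : ∀ B, TendstoUniformlyOn (fun n => y (φ n)) z atTop (Icc (-B) B) :=
    fun B => tendstoUniformlyOn_of_isApproxSolution (fun n => happrox (φ n)) (hxz B)
      (hη.comp hφ.tendsto_atTop) (hT.comp hφ.tendsto_atTop)
  have hyz_at (t : ℝ) : Tendsto (fun n => y (φ n) t) atTop (𝓝 (z t)) :=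
    (hyz |t|).tendsto_at (abs_le.1 le_rfl)
  refine ⟨z, hasDerivAt_of_forall_eq_add_integral hf z.continuous fun t => ?_, φ, hφ, hyz⟩
  have hintegral : Tendsto (fun n => ∫ r in (0 : ℝ)..t, f (y (φ n) r)) atTop
      (𝓝 (∫ r in (0 : ℝ)..t, f (z r))) := by
    refine intervalIntegral.tendsto_integral_filter_of_dominated_convergence (fun _ => M)
      (Eventually.of_forall fun n => (hint (φ n) 0 t).aestronglyMeasurable_restrict_uIoc)
      (Eventually.of_forall fun n => Eventually.of_forall fun r _ => hM _ (hmem _ r))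
      intervalIntegrable_const (Eventually.of_forall fun r _ => ?_)
    exact (hf.tendsto _).comp (hyz_at r)
  exact tendsto_nhds_unique ((hxz |t|).tendsto_at (abs_le.1 le_rfl)) ((hyz_at 0).add hintegral)

end ApproxSolution

/-! ### Newton's equation in phase space -/

section Newton

/-- The phase-space vector field of Newton's equation `x'' = g(x)`. -/
def newtonField {E : Type*} (g : E → E) (z : E × E) : E × E := (z.2, g z.1)

lemma continuous_newtonField {E : Type*} [TopologicalSpace E] {g : E → E} (hg : Continuous g) :
    Continuous (newtonField g) :=
  continuous_snd.prodMk (hg.comp continuous_fst)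

variable {E : Type*} [NormedAddCommGroup E] [InnerProductSpace ℝ E]

/-- The reversal of velocities in phase space. -/
def timeReversal : E × E →L[ℝ] E × E := (ContinuousLinearMap.id ℝ E).prodMap (-.id ℝ E)

lemma timeReversal_apply (z : E × E) : timeReversal z = (z.1, -z.2) := rfl

lemma isReversing_timeReversal (g : E → E) : IsReversing timeReversal (newtonField g) where
  involutive z := by simp [timeReversal_apply]
  norm_le z := by simp [timeReversal_apply, Prod.norm_def]
  map_eq z := by simp [timeReversal_apply, newtonField]

lemma norm_timeReversal_sub (z : E × E) : ‖timeReversal z - z‖ = 2 * ‖z.2‖ := by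
  rw [timeReversal_apply, Prod.norm_def, Prod.fst_sub, Prod.snd_sub, sub_self, norm_zero,
    max_eq_right (norm_nonneg _), ← norm_neg, neg_sub, sub_neg_eq_add, ← two_smul ℝ, norm_smul,
    Real.norm_two]

lemma energy_eq_of_hasDerivAt [CompleteSpace E] {V : E → ℝ} {q v : ℝ → E}
    (hV : Differentiable ℝ V) (hq : ∀ t, HasDerivAt q (v t) t)
    (hv : ∀ t, HasDerivAt v (gradient V (q t)) t) (s t : ℝ) :
    2⁻¹ * ‖v s‖ ^ 2 - V (q s) = 2⁻¹ * ‖v t‖ ^ 2 - V (q t) := by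
  have henergy : ∀ t, HasDerivAt (fun t => 2⁻¹ * ‖v t‖ ^ 2 - V (q t)) 0 t := by
    intro t
    have hpot := (hV (q t)).hasGradientAt.hasFDerivAt.comp_hasDerivAt t (hq t)
    refine (((hv t).norm_sq.const_mul 2⁻¹).sub hpot).congr_deriv ?_
    rw [InnerProductSpace.toDual_apply_apply, real_inner_comm]
    ring
  exact is_const_of_deriv_eq_zero (fun t => (henergy t).differentiableAt)
    (fun t => (henergy t).deriv) s t

end Newton

/-! ### Penalized minimizers -/

section Penalized

variable {E : Type*} {V : E → ℝ} {c ε : ℝ}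

/-- The potential `(V - c)⁺ + ε`. The penalty `ε` bounds the duration of paths of finite action. -/
def penalized (V : E → ℝ) (c ε : ℝ) (x : E) : ℝ := max (V x - c) 0 + ε

lemma le_penalized (x : E) : ε ≤ penalized V c ε x :=
  le_add_of_nonneg_left (le_max_right _ _)

lemma penalized_nonneg (hε : 0 ≤ ε) (x : E) : 0 ≤ penalized V c ε x :=
  hε.trans (le_penalized x)

lemma sub_add_le_penalized (x : E) : V x - c + ε ≤ penalized V c ε x := by
  unfold penalized
  gcongr
  exact le_max_left _ _

lemma penalized_of_le {x : E} (hx : c ≤ V x) : penalized V c ε x = V x - c + ε := by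
  rw [penalized, max_eq_left (sub_nonneg.2 hx)]

lemma penalized_mono {ε' : ℝ} (hε : ε ≤ ε') (x : E) : penalized V c ε x ≤ penalized V c ε' x := by
  unfold penalized
  gcongr

lemma continuous_penalized [TopologicalSpace E] (hV : Continuous V) :
    Continuous (penalized V c ε) := by
  unfold penalized
  fun_prop

lemma exists_lipschitzOnWith_penalized [NormedAddCommGroup E] [NormedSpace ℝ E] {K : Set E}
    (hV : ContDiff ℝ 1 V) (hK : IsCompact K) :
    ∃ L, LipschitzOnWith L (penalized V c ε) K :=
  LocallyLipschitzOn.exists_lipschitzOnWith_of_compact hK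
    (((hV.locallyLipschitz.sub (.const c)).max_const 0).add (.const ε)).locallyLipschitzOn

lemma hasGradientAt_penalized [NormedAddCommGroup E] [InnerProductSpace ℝ E] [CompleteSpace E]
    (hV : ContDiff ℝ 1 V) {x : E} (hx : c < V x) :
    HasGradientAt (penalized V c ε) (gradient V x) x := by
  have hgrad : HasGradientAt (fun y => V y - c + ε) (gradient V x) x :=
    ((hV.differentiable one_ne_zero x).hasGradientAt.hasFDerivAt.sub_const c).add_const ε
  refine hgrad.congr_of_eventuallyEq ?_
  filter_upwards [hV.continuous.continuousAt.eventually_const_lt hx] with y hy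
  exact penalized_of_le hy.le

lemma continuous_gradient [NormedAddCommGroup E] [InnerProductSpace ℝ E] [CompleteSpace E]
    (hV : ContDiff ℝ 1 V) : Continuous (gradient V) :=
  (InnerProductSpace.toDual ℝ E).symm.continuous.comp (hV.continuous_fderiv one_ne_zero)

end Penalized

/-- `V` is a `C¹` potential whose sublevel set `{V ≤ c}` splits into closed wells `Vm` and `Vp` at
distance at least `d > 0`. Both meet the ball of radius `R`, and `{V > c}` stays one unit inside
that ball. -/
structure IsTwoWell {E : Type*} [NormedAddCommGroup E] [NormedSpace ℝ E] (V : E → ℝ) (c : ℝ)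
    (Vm Vp : Set E) (d R : ℝ) : Prop where
  contDiff : ContDiff ℝ 1 V
  isClosed_left : IsClosed Vm
  isClosed_right : IsClosed Vp
  le_iff : ∀ x, V x ≤ c ↔ x ∈ Vm ∨ x ∈ Vp
  sep_pos : 0 < d
  le_dist : ∀ x ∈ Vm, ∀ y ∈ Vp, d ≤ dist x y
  norm_le : ∀ x, c < V x → ‖x‖ ≤ R - 1
  left_inter_nonempty : (Vm ∩ closedBall 0 R).Nonempty
  right_inter_nonempty : (Vp ∩ closedBall 0 R).Nonempty

namespace IsTwoWell

variable {E : Type*} [NormedAddCommGroup E]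

section Wells

variable [NormedSpace ℝ E] {V : E → ℝ} {c d R ε : ℝ} {Vm Vp : Set E}

lemma symm (h : IsTwoWell V c Vm Vp d R) : IsTwoWell V c Vp Vm d R where
  contDiff := h.contDiff
  isClosed_left := h.isClosed_right
  isClosed_right := h.isClosed_left
  le_iff x := (h.le_iff x).trans or_comm
  sep_pos := h.sep_pos
  le_dist x hx y hy := dist_comm x y ▸ h.le_dist y hy x hx
  norm_le := h.norm_le
  left_inter_nonempty := h.right_inter_nonempty
  right_inter_nonempty := h.left_inter_nonempty

lemma left_nonempty (h : IsTwoWell V c Vm Vp d R) : Vm.Nonempty :=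
  h.left_inter_nonempty.mono inter_subset_left

lemma lt_of_notMem (h : IsTwoWell V c Vm Vp d R) {x : E} (hm : x ∉ Vm) (hp : x ∉ Vp) : c < V x :=
  not_le.1 fun hx => ((h.le_iff x).1 hx).elim hm hp

lemma le_infDist_add_infDist (h : IsTwoWell V c Vm Vp d R) (x : E) :
    d ≤ infDist x Vm + infDist x Vp := by
  by_contra! hlt
  obtain ⟨y, hy, hxy⟩ := (infDist_lt_iff h.left_nonempty).1 (lt_sub_iff_add_lt.2 hlt)
  obtain ⟨z, hz, hxz⟩ := (infDist_lt_iff h.symm.left_nonempty).1 (lt_sub_comm.1 hxy)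
  linarith only [h.le_dist y hy z hz, dist_triangle_left y z x, hxz]

lemma exists_pos_le_sub [ProperSpace E] (h : IsTwoWell V c Vm Vp d R) {ρ : ℝ} (hρ : 0 < ρ) :
    ∃ ω > 0, ∀ x ∈ closedBall (0 : E) R, ρ ≤ infDist x Vm → ρ ≤ infDist x Vp → ω ≤ V x - c := by
  have hcompact : IsCompact (closedBall (0 : E) R ∩ {x | ρ ≤ infDist x Vm ∧ ρ ≤ infDist x Vp}) :=
    (isCompact_closedBall 0 R).inter_right
      ((isClosed_le continuous_const (continuous_infDist_pt Vm)).inter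
        (isClosed_le continuous_const (continuous_infDist_pt Vp)))
  rcases eq_empty_or_nonempty
    (closedBall (0 : E) R ∩ {x | ρ ≤ infDist x Vm ∧ ρ ≤ infDist x Vp}) with hempty | hne
  · refine ⟨1, one_pos, fun x hx hm hp => ?_⟩
    exact (eq_empty_iff_forall_notMem.1 hempty x ⟨hx, hm, hp⟩).elim
  · obtain ⟨x, ⟨-, hxm, hxp⟩, hmin⟩ := hcompact.exists_isMinOn hne
      h.contDiff.continuous.continuousOn
    refine ⟨V x - c, sub_pos.2 (h.lt_of_notMem (fun hx => ?_) fun hx => ?_), fun y hy hym hyp =>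
      sub_le_sub_right (hmin ⟨hy, hym, hyp⟩) c⟩
    · exact hxm.not_gt (infDist_zero_of_mem hx ▸ hρ)
    · exact hxp.not_gt (infDist_zero_of_mem hx ▸ hρ)

lemma exists_penalized_le [ProperSpace E] (h : IsTwoWell V c Vm Vp d R) :
    ∃ C > 0, ∀ ε ≤ 1, ∀ x ∈ closedBall (0 : E) R, penalized V c ε x ≤ C := by
  obtain ⟨C, hC⟩ := (isCompact_closedBall (0 : E) R).exists_bound_of_continuousOn
    (continuous_penalized (c := c) (ε := 1) h.contDiff.continuous).continuousOn
  obtain ⟨x, -, hx⟩ := h.left_inter_nonempty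
  refine ⟨C, one_pos.trans_le ((le_penalized x).trans ((le_abs_self _).trans (hC x hx))),
    fun ε hε y hy => (penalized_mono hε y).trans ((le_abs_self _).trans (hC y hy))⟩

end Wells

end IsTwoWell

/-- A minimizer of the penalized action among paths in the ball of radius `R` from one well to the
other. -/
abbrev IsPenalizedMinimizer {E : Type*} [NormedAddCommGroup E] (V : E → ℝ) (c : ℝ) (Vm Vp : Set E)
    (R ε S : ℝ) (q : ℝ → E) (G : ℝ → ℝ) : Prop :=
  IsMinimalPath (penalized V c ε) (closedBall 0 R) (Vm ∩ closedBall 0 R) (Vp ∩ closedBall 0 R) S q G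

namespace IsTwoWell

variable {E : Type*} [NormedAddCommGroup E] [NormedSpace ℝ E] {V : E → ℝ} {c d R ε S : ℝ}
  {Vm Vp : Set E} {q : ℝ → E} {G : ℝ → ℝ}

lemma exists_isPenalizedMinimizer [ProperSpace E] (h : IsTwoWell V c Vm Vp d R) (hε : 0 < ε)
    (hε1 : ε ≤ 1) : ∃ S q G, IsPenalizedMinimizer V c Vm Vp R ε S q G := by
  obtain ⟨C, -, hC⟩ := h.exists_penalized_le
  obtain ⟨x, hx⟩ := h.left_inter_nonempty
  obtain ⟨y, hy⟩ := h.right_inter_nonempty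
  have hU := continuous_penalized (c := c) (ε := ε) h.contDiff.continuous
  exact exists_isMinimalPath hU (isCompact_closedBall 0 R) hε (fun x _ => le_penalized x)
    (h.isClosed_left.inter isClosed_closedBall) (h.isClosed_right.inter isClosed_closedBall)
    ⟨x, hx, y, hy, _, .segment hU (convex_closedBall 0 R) (hC ε hε1) hx.2 hy.2⟩

lemma action_le [ProperSpace E] (h : IsTwoWell V c Vm Vp d R) :
    ∃ M, ∀ ε ≤ 1, ∀ S q G, IsPenalizedMinimizer V c Vm Vp R ε S q G →
      action (penalized V c ε) q G 0 S ≤ M := by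
  obtain ⟨C, -, hC⟩ := h.exists_penalized_le
  obtain ⟨x, hx⟩ := h.left_inter_nonempty
  obtain ⟨y, hy⟩ := h.right_inter_nonempty
  exact ⟨(2⁻¹ + C) * ‖y - x‖, fun ε hε S q G hq => hq.le_of_joins x hx y hy _
    (.segment (continuous_penalized h.contDiff.continuous) (convex_closedBall 0 R) (hC ε hε)
      hx.2 hy.2)⟩

lemma duration_pos (h : IsTwoWell V c Vm Vp d R)
    (hq : IsPenalizedMinimizer V c Vm Vp R ε S q G) : 0 < S := by
  refine hq.duration_nonneg.lt_of_ne ?_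
  rintro rfl
  exact (h.sep_pos.trans_le (h.le_dist _ hq.start_mem.1 _ hq.end_mem.1)).ne' (dist_self _)

lemma lt_of_mem_Ioo (h : IsTwoWell V c Vm Vp d R) (hε : 0 < ε)
    (hq : IsPenalizedMinimizer V c Vm Vp R ε S q G) {t : ℝ} (ht : t ∈ Ioo 0 S) : c < V (q t) := by
  have hU := continuous_penalized (c := c) (ε := ε) h.contDiff.continuous
  have hpos : ∀ x ∈ closedBall (0 : E) R, 0 < penalized V c ε x :=
    fun x _ => hε.trans_le (le_penalized x)
  exact h.lt_of_notMem (fun hm => hq.notMem_start hU hpos ⟨ht.1, ht.2.le⟩ ⟨hm, hq.mem t⟩)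
    fun hp => hq.notMem_end hU hpos ⟨ht.1.le, ht.2⟩ ⟨hp, hq.mem t⟩

lemma mem_closure_of_mem_Icc (h : IsTwoWell V c Vm Vp d R) (hε : 0 < ε)
    (hq : IsPenalizedMinimizer V c Vm Vp R ε S q G) {t : ℝ} (ht : t ∈ Icc 0 S) :
    q t ∈ closure {x | c < V x} := by
  rw [← closure_Ioo (h.duration_pos hq).ne] at ht
  exact map_mem_closure hq.hasEnergyBound.continuous ht fun r hr => h.lt_of_mem_Ioo hε hq hr

lemma le_of_mem_Icc (h : IsTwoWell V c Vm Vp d R) (hε : 0 < ε)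
    (hq : IsPenalizedMinimizer V c Vm Vp R ε S q G) {t : ℝ} (ht : t ∈ Icc 0 S) : c ≤ V (q t) :=
  closure_lt_subset_le continuous_const h.contDiff.continuous (h.mem_closure_of_mem_Icc hε hq ht)

lemma norm_le_of_mem_Icc (h : IsTwoWell V c Vm Vp d R) (hε : 0 < ε)
    (hq : IsPenalizedMinimizer V c Vm Vp R ε S q G) {t : ℝ} (ht : t ∈ Icc 0 S) :
    ‖q t‖ ≤ R - 1 :=
  closure_minimal (t := {x | ‖x‖ ≤ R - 1}) h.norm_le (isClosed_le continuous_norm continuous_const)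
    (h.mem_closure_of_mem_Icc hε hq ht)

end IsTwoWell

/-- A penalized minimizer, with penalty at most `1`, together with a time `s` at which it is equally
far from both wells. -/
structure IsCenteredMinimizer {E : Type*} [NormedAddCommGroup E] (V : E → ℝ) (c : ℝ)
    (Vm Vp : Set E) (R ε S : ℝ) (q : ℝ → E) (G : ℝ → ℝ) (s : ℝ) : Prop where
  penalty_pos : 0 < ε
  penalty_le_one : ε ≤ 1
  minimizer : IsPenalizedMinimizer V c Vm Vp R ε S q G
  mem_Icc : s ∈ Icc 0 S
  infDist_eq : infDist (q s) Vm = infDist (q s) Vp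

lemma IsPenalizedMinimizer.exists_isCenteredMinimizer {E : Type*} [NormedAddCommGroup E]
    {V : E → ℝ} {c R ε S : ℝ} {Vm Vp : Set E} {q : ℝ → E} {G : ℝ → ℝ}
    (hq : IsPenalizedMinimizer V c Vm Vp R ε S q G) (hε : 0 < ε) (hε1 : ε ≤ 1) :
    ∃ s, IsCenteredMinimizer V c Vm Vp R ε S q G s := by
  have hcont (A : Set E) : ContinuousOn (fun t => infDist (q t) A) (Icc 0 S) :=
    ((continuous_infDist_pt A).comp hq.hasEnergyBound.continuous).continuousOn
  obtain ⟨s, hs, hcenter⟩ := isPreconnected_Icc.intermediate_value₂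
    (left_mem_Icc.2 hq.duration_nonneg) (right_mem_Icc.2 hq.duration_nonneg) (hcont Vm) (hcont Vp)
    ((infDist_zero_of_mem hq.start_mem.1).trans_le infDist_nonneg)
    ((infDist_zero_of_mem hq.end_mem.1).trans_le infDist_nonneg)
  exact ⟨s, hε, hε1, hq, hs, hcenter⟩

lemma IsCenteredMinimizer.reverse {E : Type*} [NormedAddCommGroup E] {V : E → ℝ} {c R ε S : ℝ}
    {Vm Vp : Set E} {q : ℝ → E} {G : ℝ → ℝ} {s : ℝ}
    (h : IsCenteredMinimizer V c Vm Vp R ε S q G s) :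
    IsCenteredMinimizer V c Vp Vm R ε S (fun t => q (S - t)) (fun t => -G (S - t)) (S - s) where
  penalty_pos := h.penalty_pos
  penalty_le_one := h.penalty_le_one
  minimizer := h.minimizer.reverse
  mem_Icc := ⟨sub_nonneg.2 h.mem_Icc.2, sub_le_self S h.mem_Icc.1⟩
  infDist_eq := by simpa using h.infDist_eq.symm

lemma IsMinimalPath.action_mono {E : Type*} [NormedAddCommGroup E] {U : E → ℝ} {K A B : Set E}
    {S : ℝ} {q : ℝ → E} {G : ℝ → ℝ} (h : IsMinimalPath U K A B S q G) (hU : Continuous U)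
    (hU0 : ∀ x ∈ K, 0 ≤ U x) {a b a' b' : ℝ} (ha : a' ≤ a) (hab : a ≤ b) (hb : b ≤ b') :
    action U q G a b ≤ action U q G a' b' := by
  have hnonneg {r s : ℝ} (hrs : r ≤ s) : 0 ≤ action U q G r s := by
    simpa using (h.hasEnergyBound.mono (subset_univ _)).const_mul_le_action hU hrs
      fun t _ => hU0 _ (h.mem t)
  rw [← h.action_add_action hU (ha.trans hab) hb, ← h.action_add_action hU ha hab]
  linarith only [hnonneg ha, hnonneg hb]

namespace IsTwoWell

variable {E : Type*} [NormedAddCommGroup E] {V : E → ℝ} {c d R : ℝ} {Vm Vp : Set E}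

section Estimates

variable [NormedSpace ℝ E] [ProperSpace E]

lemma exists_norm_sub_le (h : IsTwoWell V c Vm Vp d R) :
    ∃ L > 0, ∀ ε ≤ 1, ∀ S q G, IsPenalizedMinimizer V c Vm Vp R ε S q G →
      ∀ s ∈ Icc 0 S, ∀ t ∈ Icc 0 S, ‖q t - q s‖ ≤ L * |t - s| := by
  obtain ⟨C, hC0, hC⟩ := h.exists_penalized_le
  exact ⟨√(2 * C), by positivity, fun ε hε S q G hq s hs t ht =>
    hq.norm_sub_le (continuous_penalized h.contDiff.continuous) (hC ε hε) hs ht⟩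

lemma exists_le_duration (h : IsTwoWell V c Vm Vp d R) :
    ∃ δ > 0, ∀ ε ≤ 1, ∀ S q G, IsPenalizedMinimizer V c Vm Vp R ε S q G → δ ≤ S := by
  obtain ⟨L, hL0, hL⟩ := h.exists_norm_sub_le
  refine ⟨d / L, div_pos h.sep_pos hL0, fun ε hε S q G hq => (div_le_iff₀' hL0).2 ?_⟩
  have hS := hq.duration_nonneg
  calc d ≤ dist (q 0) (q S) := h.le_dist _ hq.start_mem.1 _ hq.end_mem.1
    _ ≤ L * |S - 0| := by
      rw [dist_eq_norm, norm_sub_rev]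
      exact hL ε hε S q G hq 0 ⟨le_rfl, hS⟩ S ⟨hS, le_rfl⟩
    _ = L * S := by rw [sub_zero, abs_of_nonneg hS]

lemma exists_forall_le_infDist (h : IsTwoWell V c Vm Vp d R) :
    ∃ δ > 0, ∃ ρ > 0, ∀ ε S q G s, IsCenteredMinimizer V c Vm Vp R ε S q G s →
      ∀ t ∈ Icc 0 S, |t - s| ≤ δ → ρ ≤ infDist (q t) Vm ∧ ρ ≤ infDist (q t) Vp := by
  obtain ⟨L, hL0, hL⟩ := h.exists_norm_sub_le
  have hd := h.sep_pos
  refine ⟨d / 4 / L, by positivity, d / 4, by positivity, fun ε S q G s hq t ht hts => ?_⟩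
  have hdist : dist (q s) (q t) ≤ d / 4 := by
    rw [dist_eq_norm, norm_sub_rev]
    exact (hL ε hq.penalty_le_one S q G hq.minimizer s hq.mem_Icc t ht).trans
      ((le_div_iff₀' hL0).1 hts)
  constructor
  · linarith only [h.le_infDist_add_infDist (q s), hq.infDist_eq, hdist,
      infDist_le_infDist_add_dist (s := Vm) (x := q s) (y := q t)]
  · linarith only [h.le_infDist_add_infDist (q s), hq.infDist_eq, hdist,
      infDist_le_infDist_add_dist (s := Vp) (x := q s) (y := q t)]

lemma exists_pos_le_action (h : IsTwoWell V c Vm Vp d R) :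
    ∃ κ > 0, ∀ ε S q G s, IsCenteredMinimizer V c Vm Vp R ε S q G s →
      κ ≤ action (penalized V c ε) q G s S := by
  obtain ⟨δ, hδ, ρ, hρ, hnear⟩ := h.exists_forall_le_infDist
  obtain ⟨ω, hω, hpot⟩ := h.exists_pos_le_sub hρ
  refine ⟨ω * δ, mul_pos hω hδ, fun ε S q G s hq => ?_⟩
  have ⟨hε, _, hmin, hs, _⟩ := hq
  have hU := continuous_penalized (c := c) (ε := ε) h.contDiff.continuous
  have hδS : s + δ ≤ S := by
    by_contra! hlt
    have hend := (hnear ε S q G s hq S ⟨hmin.duration_nonneg, le_rfl⟩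
      (abs_le.2 ⟨by linarith only [hs.2, hδ], by linarith only [hlt]⟩)).2
    exact hend.not_gt ((infDist_zero_of_mem hmin.end_mem.1).trans_lt hρ)
  have hsδ : s ≤ s + δ := le_add_of_nonneg_right hδ.le
  calc ω * δ = ω * (s + δ - s) := by rw [add_sub_cancel_left]
    _ ≤ action (penalized V c ε) q G s (s + δ) := by
      refine (hmin.hasEnergyBound.mono (subset_univ _)).const_mul_le_action hU hsδ fun t ht => ?_
      obtain ⟨hm, hp⟩ := hnear ε S q G s hq t ⟨hs.1.trans ht.1, ht.2.trans hδS⟩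
        (abs_le.2 ⟨by linarith only [ht.1, hδ], by linarith only [ht.2]⟩)
      linarith only [hpot _ (hmin.mem t) hm hp,
        sub_add_le_penalized (V := V) (c := c) (ε := ε) (q t), hε]
    _ ≤ action (penalized V c ε) q G s S :=
      hmin.action_mono hU (fun x _ => penalized_nonneg hε.le x) le_rfl hsδ hδS

/-- Before its center a minimizer keeps away from the final well: a shortcut of small action would
otherwise replace the remaining arc. -/
lemma exists_le_infDist_of_le_center (h : IsTwoWell V c Vm Vp d R) :
    ∃ ρ > 0, ∀ ε S q G s, IsCenteredMinimizer V c Vm Vp R ε S q G s →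
      ∀ t ∈ Icc 0 s, ρ ≤ infDist (q t) Vp := by
  obtain ⟨κ, hκ, haction⟩ := h.exists_pos_le_action
  obtain ⟨C, hC0, hC⟩ := h.exists_penalized_le
  refine ⟨min 1 (κ / (2⁻¹ + C)), by positivity, fun ε S q G s hq t ht => ?_⟩
  have ⟨hε, hε1, hmin, hs, _⟩ := hq
  have hU := continuous_penalized (c := c) (ε := ε) h.contDiff.continuous
  have htS : t ∈ Icc 0 S := ⟨ht.1, ht.2.trans hs.2⟩
  by_contra! hlt
  obtain ⟨y, hy, hyt⟩ := (infDist_lt_iff h.symm.left_nonempty).1 hlt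
  rw [dist_comm, dist_eq_norm] at hyt
  have hyR : y ∈ closedBall 0 R := by
    rw [mem_closedBall_zero_iff]
    linarith only [norm_le_norm_add_norm_sub' y (q t), h.norm_le_of_mem_Icc hε hmin htS, hyt,
      min_le_left 1 (κ / (2⁻¹ + C))]
  have hshort : (2⁻¹ + C) * ‖y - q t‖ < κ :=
    (lt_div_iff₀' (by positivity)).1 (hyt.trans_le (min_le_right _ _))
  refine hshort.not_ge ?_
  calc κ ≤ action (penalized V c ε) q G s S := haction ε S q G s hq
    _ ≤ action (penalized V c ε) q G t S :=
      hmin.action_mono hU (fun x _ => penalized_nonneg hε.le x) ht.2 hs.2 le_rfl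
    _ ≤ (2⁻¹ + C) * ‖y - q t‖ := hmin.action_le_of_joins_end hU htS ⟨hy, hyR⟩
      (.segment hU (convex_closedBall 0 R) (hC ε hε1) (hmin.mem t) hyR)

lemma exists_infDist_left_le (h : IsTwoWell V c Vm Vp d R) :
    ∃ B : ℝ → ℝ, ∀ ρ > 0, ∀ ε S q G s, IsCenteredMinimizer V c Vm Vp R ε S q G s →
      ∃ t ∈ Icc 0 S, |t - s| ≤ B ρ ∧ infDist (q t) Vm ≤ ρ := by
  obtain ⟨ρ₀, hρ₀, hfar⟩ := h.exists_le_infDist_of_le_center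
  obtain ⟨M, hM⟩ := h.action_le
  have hpot := fun ρ (hρ : 0 < ρ) => h.exists_pos_le_sub (lt_min hρ hρ₀)
  choose! ω hω hpot using hpot
  refine ⟨fun ρ => (|M| + 1) / ω ρ, fun ρ hρ ε S q G s hq => ?_⟩
  have ⟨hε, hε1, hmin, hs, _⟩ := hq
  set b := (|M| + 1) / ω ρ
  have hb : 0 < b := div_pos (by positivity) (hω ρ hρ)
  have hU := continuous_penalized (c := c) (ε := ε) h.contDiff.continuous
  rcases le_total s b with hsb | hbs
  · exact ⟨0, ⟨le_rfl, hmin.duration_nonneg⟩, by rwa [zero_sub, abs_neg, abs_of_nonneg hs.1],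
      (infDist_zero_of_mem hmin.start_mem.1).trans_le hρ.le⟩
  by_contra! haway
  have hbig : ω ρ * (s - (s - b)) ≤ action (penalized V c ε) q G (s - b) s := by
    refine (hmin.hasEnergyBound.mono (subset_univ _)).const_mul_le_action hU (sub_le_self s hb.le)
      fun t ht => ?_
    have ht0 : 0 ≤ t := (sub_nonneg.2 hbs).trans ht.1
    have hm := haway t ⟨ht0, ht.2.trans hs.2⟩
      (abs_le.2 ⟨by linarith only [ht.1], by linarith only [ht.2, hb]⟩)
    linarith only [hpot ρ hρ _ (hmin.mem t) ((min_le_left _ _).trans hm.le)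
      ((min_le_right _ _).trans (hfar ε S q G s hq t ⟨ht0, ht.2⟩)),
      sub_add_le_penalized (V := V) (c := c) (ε := ε) (q t), hε]
  have hle := hmin.action_mono hU (fun x _ => penalized_nonneg hε.le x) (sub_nonneg.2 hbs)
    (sub_le_self s hb.le) hs.2
  rw [sub_sub_cancel, mul_div_cancel₀ _ (hω ρ hρ).ne'] at hbig
  linarith only [hbig, hle, hM ε hε1 S q G hmin, le_abs_self M]

lemma exists_infDist_right_le (h : IsTwoWell V c Vm Vp d R) :
    ∃ B : ℝ → ℝ, ∀ ρ > 0, ∀ ε S q G s, IsCenteredMinimizer V c Vm Vp R ε S q G s →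
      ∃ t ∈ Icc 0 S, |t - s| ≤ B ρ ∧ infDist (q t) Vp ≤ ρ := by
  obtain ⟨B, hB⟩ := h.symm.exists_infDist_left_le
  refine ⟨B, fun ρ hρ ε S q G s hq => ?_⟩
  obtain ⟨t, ht, hts, htp⟩ := hB ρ hρ ε S _ _ _ hq.reverse
  refine ⟨S - t, ⟨sub_nonneg.2 ht.2, sub_le_self S ht.1⟩, ?_, htp⟩
  rwa [sub_right_comm, abs_sub_comm]

end Estimates
end IsTwoWell

/-! ### Connecting orbits -/

section PhaseSpace

variable {E : Type*} [NormedAddCommGroup E] [InnerProductSpace ℝ E] [ProperSpace E]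
  {V : E → ℝ} {c d R ε S s : ℝ} {Vm Vp : Set E} {q : ℝ → E} {G : ℝ → ℝ}

lemma IsTwoWell.exists_phaseCurve (h : IsTwoWell V c Vm Vp d R) (hε : 0 < ε)
    (hq : IsPenalizedMinimizer V c Vm Vp R ε S q G) :
    ∃ Y : ℝ → E × E, ∀ t ∈ Icc 0 S, HasDerivAt Y (newtonField (gradient V) (Y t)) t ∧
      (Y t).1 = q t ∧ ‖(Y t).2‖ ^ 2 = 2 * (V (q t) - c + ε) := by
  have hU := continuous_penalized (c := c) (ε := ε) h.contDiff.continuous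
  obtain ⟨L, hL⟩ := exists_lipschitzOnWith_penalized (c := c) (ε := ε) h.contDiff
    (isCompact_closedBall 0 R)
  have hinterior : ∀ t ∈ Icc 0 S, q t ∈ interior (closedBall 0 R) := fun t ht =>
    ball_subset_interior_closedBall
      (mem_ball_zero_iff.2 (by linarith only [h.norm_le_of_mem_Icc hε hq ht]))
  obtain ⟨Q, v, hQ, hv, hqQ⟩ := hq.exists_hasDerivAt hU hL (continuous_gradient h.contDiff)
    (h.duration_pos hq) hinterior fun t ht => hasGradientAt_penalized h.contDiff
      (h.lt_of_mem_Ioo hε hq ht)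
  have hv_cont : Continuous v := continuous_iff_continuousAt.2 fun t => (hv t).continuousAt
  refine ⟨fun t => (Q t, v t), fun t ht => ⟨(hQ t).prodMk ?_, (hqQ ht).symm, ?_⟩⟩
  · change HasDerivAt v (gradient V (Q t)) t
    rw [← hqQ ht]
    exact hv t
  · rw [← penalized_of_le (h.le_of_mem_Icc hε hq ht)]
    exact hq.sq_norm_deriv_eq hU hv_cont hQ hqQ (h.duration_pos hq) ht

/-- An approximation of a connecting orbit of energy `-c` by a phase curve with values in `K`: it
solves Newton's equation on `[-T, T]` up to the error `η`, has energy `ε - c` at time `0`, and is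
`ρ`-close to each well at some time in `[-B ρ, B ρ]`. -/
structure IsApproxConnection (V : E → ℝ) (c : ℝ) (Vm Vp : Set E) (K : Set (E × E)) (B : ℝ → ℝ)
    (ε η T : ℝ) (y : ℝ → E × E) : Prop where
  stronglyMeasurable : StronglyMeasurable y
  mem : ∀ t, y t ∈ K
  isApproxSolution : IsApproxSolution (newtonField (gradient V)) η y (Icc (-T) T)
  energy : ‖(y 0).2‖ ^ 2 = 2 * (V (y 0).1 - c + ε)
  near_left : ∀ ρ > 0, ∃ t, |t| ≤ B ρ ∧ infDist (y t).1 Vm ≤ ρ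
  near_right : ∀ ρ > 0, ∃ t, |t| ≤ B ρ ∧ infDist (y t).1 Vp ≤ ρ

lemma IsTwoWell.exists_isPseudoOrbit (h : IsTwoWell V c Vm Vp d R) :
    ∃ K : Set (E × E), IsCompact K ∧ MapsTo timeReversal K K ∧
      ∀ ε S q G s, IsCenteredMinimizer V c Vm Vp R ε S q G s →
        ∃ y, IsPseudoOrbit (newtonField (gradient V)) timeReversal K 0 (2 * √(2 * ε)) y
          (-s) (S - s) ∧ ∀ t ∈ Icc (-s) (S - s),
          (y t).1 = q (s + t) ∧ ‖(y t).2‖ ^ 2 = 2 * (V (q (s + t)) - c + ε) := by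
  obtain ⟨C, -, hC⟩ := h.exists_penalized_le
  refine ⟨closedBall 0 R ×ˢ closedBall 0 √(2 * C),
    (isCompact_closedBall 0 R).prod (isCompact_closedBall 0 _), fun z hz => ?_,
    fun ε S q G s hq => ?_⟩
  · simpa [timeReversal_apply] using hz
  obtain ⟨hε, hε1, hmin, -, -⟩ := hq
  obtain ⟨Y, hY⟩ := h.exists_phaseCurve hε hmin
  have hshift : ∀ t ∈ Icc (-s) (S - s), s + t ∈ Icc 0 S := fun t ht =>
    ⟨by linarith only [ht.1], by linarith only [ht.2]⟩
  have hab : -s ≤ S - s := by linarith only [hmin.duration_nonneg]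
  have hmem : ∀ t ∈ Icc 0 S, Y t ∈ closedBall (0 : E) R ×ˢ closedBall (0 : E) √(2 * C) := by
    intro t ht
    obtain ⟨-, hpos, hvel⟩ := hY t ht
    refine ⟨by simpa only [hpos] using hmin.mem t,
      mem_closedBall_zero_iff.2 (Real.le_sqrt_of_sq_le ?_)⟩
    rw [hvel, ← penalized_of_le (h.le_of_mem_Icc hε hmin ht)]
    exact mul_le_mul_of_nonneg_left (hC ε hε1 _ (hmin.mem _)) zero_le_two
  have hjump : ∀ t ∈ Icc 0 S, q t ∈ Vm ∨ q t ∈ Vp →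
      ‖timeReversal (Y t) - Y t‖ ≤ 2 * √(2 * ε) := by
    intro t ht hwell
    have hVq : V (q t) = c := ((h.le_iff _).2 hwell).antisymm (h.le_of_mem_Icc hε hmin ht)
    obtain ⟨-, -, hvel⟩ := hY t ht
    rw [hVq, sub_self, zero_add] at hvel
    rw [norm_timeReversal_sub, ← hvel, Real.sqrt_sq (norm_nonneg _)]
  refine ⟨_, .of_hasDerivAt (y := fun t => Y (s + t))
    (continuous_newtonField (continuous_gradient h.contDiff)) hab
    (fun t ht => (hY _ (hshift t ht)).1.comp_const_add s t) (fun t ht => hmem _ (hshift t ht))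
    (hjump _ (hshift _ (left_mem_Icc.2 hab)) (by simpa using .inl hmin.start_mem.1))
    (hjump _ (hshift _ (right_mem_Icc.2 hab)) (by simpa using .inr hmin.end_mem.1)),
    fun t ht => ?_⟩
  rw [projIcc_of_mem hab ht]
  exact (hY _ (hshift t ht)).2

lemma IsTwoWell.exists_isApproxConnection (h : IsTwoWell V c Vm Vp d R) :
    ∃ (K : Set (E × E)) (B : ℝ → ℝ), IsCompact K ∧ ∃ δ > 0, ∀ ε > 0, ε ≤ 1 → ∀ n : ℕ, ∃ y,
      IsApproxConnection V c Vm Vp K B ε (3 ^ n * (4 * √(2 * ε))) (n * δ) y := by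
  obtain ⟨K, hK, hρK, horbit⟩ := h.exists_isPseudoOrbit
  obtain ⟨δ, hδ, hduration⟩ := h.exists_le_duration
  obtain ⟨Bm, hBm⟩ := h.exists_infDist_left_le
  obtain ⟨Bp, hBp⟩ := h.exists_infDist_right_le
  refine ⟨K, fun ρ => max (Bm ρ) (Bp ρ), hK, δ, hδ, fun ε hε hε1 n => ?_⟩
  obtain ⟨S, q, G, hmin⟩ := h.exists_isPenalizedMinimizer hε hε1
  obtain ⟨s, hq⟩ := hmin.exists_isCenteredMinimizer hε hε1
  obtain ⟨y, hy, hyq⟩ := horbit ε S q G s hq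
  have hδS := hduration ε hε1 S q G hmin
  obtain ⟨z, a, b, hz, hzy, ha, hb⟩ := hy.exists_extension
    (continuous_newtonField (continuous_gradient h.contDiff))
    (isReversing_timeReversal _) hK hρK (by linarith only [hδ, hδS]) n
  have hn : n * δ ≤ n * (S - s - -s) := by
    gcongr
    linarith only [hδS]
  have hzq : ∀ t ∈ Icc 0 S, (z (t - s)).1 = q t ∧ ‖(z (t - s)).2‖ ^ 2 = 2 * (V (q t) - c + ε) := by
    intro t ht
    have hts : t - s ∈ Icc (-s) (S - s) := ⟨by linarith only [ht.1], by linarith only [ht.2]⟩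
    simpa [hzy hts] using hyq _ hts
  refine ⟨z, hz.stronglyMeasurable, hz.mem, hz.isApproxSolution.mono ?_ (Icc_subset_Icc
    (by linarith only [ha, hn, hq.mem_Icc.1]) (by linarith only [hb, hn, hq.mem_Icc.2])),
    ?_, fun ρ hρ => ?_, fun ρ hρ => ?_⟩
  · linarith only [Real.sqrt_nonneg (2 * ε)]
  · obtain ⟨hpos, hvel⟩ := hzq s hq.mem_Icc
    rw [sub_self] at hpos hvel
    rw [hpos, hvel]
  · obtain ⟨t, ht, hts, hnear⟩ := hBm ρ hρ ε S q G s hq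
    exact ⟨t - s, hts.trans (le_max_left _ _), by rwa [(hzq t ht).1]⟩
  · obtain ⟨t, ht, hts, hnear⟩ := hBp ρ hρ ε S q G s hq
    exact ⟨t - s, hts.trans (le_max_right _ _), by rwa [(hzq t ht).1]⟩

lemma exists_infDist_le_of_tendstoUniformlyOn {X : Type*} [PseudoMetricSpace X] {x : ℕ → ℝ → X}
    {z : ℝ → X} {W : Set X} {b ρ : ℝ} (hρ : 0 < ρ)
    (hx : TendstoUniformlyOn x z atTop (Icc (-b) b))
    (hnear : ∀ n, ∃ t, |t| ≤ b ∧ infDist (x n t) W ≤ ρ / 2) : ∃ t, infDist (z t) W ≤ ρ := by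
  obtain ⟨n, hn⟩ := (Metric.tendstoUniformlyOn_iff.1 hx (ρ / 2) (half_pos hρ)).exists
  obtain ⟨t, ht, hnear_t⟩ := hnear n
  exact ⟨t, by linarith only [hn t (abs_le.1 ht), hnear_t,
    infDist_le_infDist_add_dist (s := W) (x := z t) (y := x n t)]⟩

lemma iInf_infDist_eq_zero {X : Type*} [PseudoMetricSpace X] {z : ℝ → X} {W : Set X}
    (h : ∀ ρ > 0, ∃ t, infDist (z t) W ≤ ρ) : (⨅ t, infDist (z t) W) = 0 := by
  have hbdd : BddBelow (range fun t => infDist (z t) W) :=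
    ⟨0, forall_mem_range.2 fun _ => infDist_nonneg⟩
  refine le_antisymm (le_of_forall_pos_le_add fun ρ hρ => ?_)
    (Real.iInf_nonneg fun _ => infDist_nonneg)
  obtain ⟨t, ht⟩ := h ρ hρ
  rw [zero_add]
  exact (ciInf_le hbdd t).trans ht

lemma exists_connectingOrbit_of_isApproxConnection (hV : ContDiff ℝ 1 V) {K : Set (E × E)}
    {B : ℝ → ℝ} {ε η T : ℕ → ℝ} {y : ℕ → ℝ → E × E} (hK : IsCompact K)
    (hε : Tendsto ε atTop (𝓝 0)) (hη : Tendsto η atTop (𝓝 0)) (hT : Tendsto T atTop atTop)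
    (hy : ∀ n, IsApproxConnection V c Vm Vp K B (ε n) (η n) (T n) (y n)) :
    ∃ q v : ℝ → E, (∀ t, HasDerivAt q (v t) t) ∧ (∀ t, HasDerivAt v (gradient V (q t)) t) ∧
      (⨅ t, infDist (q t) Vm) = 0 ∧ (⨅ t, infDist (q t) Vp) = 0 ∧
      ∀ t, 2⁻¹ * ‖v t‖ ^ 2 - V (q t) = -c := by
  obtain ⟨z, hz, φ, hφ, hyz⟩ := exists_solution_of_isApproxSolution
    (continuous_newtonField (continuous_gradient hV)) hK (fun n => (hy n).stronglyMeasurable)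
    (fun n => (hy n).mem) hη hT fun n => (hy n).isApproxSolution
  have hq (t : ℝ) : HasDerivAt (fun t => (z t).1) (z t).2 t := (hz t).fst
  have hv (t : ℝ) : HasDerivAt (fun t => (z t).2) (gradient V (z t).1) t := (hz t).snd
  have hyz_fst (b : ℝ) := uniformContinuous_fst.comp_tendstoUniformlyOn (hyz b)
  have hyz0 : Tendsto (fun n => y (φ n) 0) atTop (𝓝 (z 0)) :=
    (hyz 0).tendsto_at (by simp)
  have henergy : ‖(z 0).2‖ ^ 2 = 2 * (V (z 0).1 - c + 0) := by
    have hvel := (hyz0.snd_nhds.norm.pow 2).congr fun n => (hy (φ n)).energy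
    have hpot : Tendsto (fun n => 2 * (V (y (φ n) 0).1 - c + ε (φ n))) atTop
        (𝓝 (2 * (V (z 0).1 - c + 0))) :=
      ((((hV.continuous.tendsto _).comp hyz0.fst_nhds).sub_const c).add
        (hε.comp hφ.tendsto_atTop)).const_mul 2
    exact tendsto_nhds_unique hvel hpot
  refine ⟨_, _, hq, hv, iInf_infDist_eq_zero fun ρ hρ => ?_, iInf_infDist_eq_zero fun ρ hρ => ?_,
    fun t => ?_⟩
  · exact exists_infDist_le_of_tendstoUniformlyOn hρ (hyz_fst _)
      fun n => (hy (φ n)).near_left _ (half_pos hρ)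
  · exact exists_infDist_le_of_tendstoUniformlyOn hρ (hyz_fst _)
      fun n => (hy (φ n)).near_right _ (half_pos hρ)
  · rw [energy_eq_of_hasDerivAt (hV.differentiable one_ne_zero) hq hv t 0, henergy]
    ring

lemma exists_tendsto_three_pow_mul_sqrt : ∃ ε : ℕ → ℝ, (∀ n, 0 < ε n) ∧ (∀ n, ε n ≤ 1) ∧
    Tendsto ε atTop (𝓝 0) ∧ Tendsto (fun n => 3 ^ n * (4 * √(2 * ε n))) atTop (𝓝 0) := by
  have h16 : (0 : ℝ) ≤ 16⁻¹ := by norm_num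
  refine ⟨fun n => 2⁻¹ * 16⁻¹ ^ n, fun n => by positivity, fun n => ?_, ?_, ?_⟩
  · exact mul_le_one₀ (by norm_num) (pow_nonneg h16 n) (pow_le_one₀ h16 (by norm_num))
  · simpa using (tendsto_pow_atTop_nhds_zero_of_lt_one h16 (by norm_num)).const_mul 2⁻¹
  · have hsqrt (n : ℕ) : √(2 * (2⁻¹ * 16⁻¹ ^ n)) = 4⁻¹ ^ n := by
      rw [mul_inv_cancel_left₀ two_ne_zero, show (16⁻¹ : ℝ) = 4⁻¹ ^ 2 by norm_num, pow_right_comm,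
        Real.sqrt_sq (by positivity)]
    have heq (n : ℕ) : 3 ^ n * (4 * √(2 * (2⁻¹ * 16⁻¹ ^ n))) = 4 * (3 / 4) ^ n := by
      rw [hsqrt, mul_left_comm, ← mul_pow, div_eq_mul_inv]
    simp only [heq]
    simpa using (tendsto_pow_atTop_nhds_zero_of_lt_one (show (0 : ℝ) ≤ 3 / 4 by norm_num)
      (by norm_num)).const_mul 4

lemma IsTwoWell.exists_connectingOrbit (h : IsTwoWell V c Vm Vp d R) :
    ∃ q v : ℝ → E, (∀ t, HasDerivAt q (v t) t) ∧ (∀ t, HasDerivAt v (gradient V (q t)) t) ∧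
      (⨅ t, infDist (q t) Vm) = 0 ∧ (⨅ t, infDist (q t) Vp) = 0 ∧
      ∀ t, 2⁻¹ * ‖v t‖ ^ 2 - V (q t) = -c := by
  obtain ⟨K, B, hK, δ, hδ, happrox⟩ := h.exists_isApproxConnection
  obtain ⟨ε, hε0, hε1, hε, hη⟩ := exists_tendsto_three_pow_mul_sqrt
  choose y hy using fun n => happrox (ε n) (hε0 n) (hε1 n) n
  exact exists_connectingOrbit_of_isApproxConnection h.contDiff hK hε hη
    (tendsto_natCast_atTop_atTop.atTop_mul_const hδ) hy

end PhaseSpace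

/-! ### Coercivity -/

section Confinement

variable {E : Type*} [NormedAddCommGroup E] [InnerProductSpace ℝ E] {V : E → ℝ} {c d R : ℝ}
  {Vm Vp C : Set E} {q : ℝ → E}

lemma mem_closure_lt_of_gradient_ne_zero [CompleteSpace E] {x : E} (hx : gradient V x ≠ 0) :
    x ∈ closure {y | V x < V y} := by
  by_contra hmem
  rw [mem_closure_iff_frequently, not_frequently] at hmem
  have hmax : IsLocalMax V x := hmem.mono fun y hy => not_lt.1 hy
  exact hx (by rw [gradient, hmax.fderiv_eq_zero, map_zero])

/-- At a point of `frontier C` where `V ≥ 0` and `∇V ≠ 0`, all nearby points with `V ≥ 0` lie in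
`closure C`; hence the times spent by `q` in `closure C` form a clopen set. -/
lemma forall_mem_closure_of_gradient_ne_zero [CompleteSpace E] (hV : ContDiff ℝ 1 V)
    (hC : {x | 0 < V x} ⊆ C) (hgrad : ∀ x ∈ frontier C, gradient V x ≠ 0) (hq : Continuous q)
    (hVq : ∀ t, 0 ≤ V (q t)) {s : ℝ} (hs : q s ∈ closure C) (t : ℝ) : q t ∈ closure C := by
  have hopen : IsOpen (q ⁻¹' closure C) := isOpen_iff_mem_nhds.2 fun r hr => by
    by_cases hint : q r ∈ interior C
    · exact hq.continuousAt (mem_of_superset (isOpen_interior.mem_nhds hint)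
        (interior_subset.trans subset_closure))
    · have hne := ((continuous_gradient hV).comp hq).continuousAt.eventually_ne
        (hgrad (q r) ⟨hr, hint⟩)
      filter_upwards [hne] with u hu
      exact closure_mono (fun y hy => hC ((hVq u).trans_lt hy))
        (mem_closure_lt_of_gradient_ne_zero hu)
  have hclopen : IsClopen (q ⁻¹' closure C) := ⟨isClosed_closure.preimage hq, hopen⟩
  exact eq_univ_iff_forall.1 (hclopen.eq_univ ⟨s, hs⟩) t

lemma IsTwoWell.exists_lt (h : IsTwoWell V c Vm Vp d R) (hq : Continuous q) {s t : ℝ}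
    (hs : infDist (q s) Vm < d) (ht : infDist (q t) Vp < d) : ∃ r, c < V (q r) := by
  by_contra! hle
  have hdisj : range q ∩ (Vm ∩ Vp) = ∅ := eq_empty_of_forall_notMem fun x hx =>
    h.sep_pos.not_ge (by simpa using h.le_dist x hx.2.1 x hx.2.2)
  rcases isPreconnected_iff_subset_of_disjoint_closed.1 (isPreconnected_range hq) Vm Vp
    h.isClosed_left h.isClosed_right (range_subset_iff.2 fun r => (h.le_iff _).1 (hle r)) hdisj
    with hm | hp
  · linarith only [ht, h.le_infDist_add_infDist (q t), infDist_zero_of_mem (hm (mem_range_self t))]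
  · linarith only [hs, h.le_infDist_add_infDist (q s), infDist_zero_of_mem (hp (mem_range_self s))]

end Confinement

section Admissible

variable {N : ℕ} {V : Euc N → ℝ} {c d R : ℝ} {Vm Vp : Set (Euc N)}

lemma continuous_of_isH1loc {q q' : ℝ → Euc N} (hq : IsH1loc q q') : Continuous q := by
  have heq : q = fun t => q 0 + ∫ s in (0 : ℝ)..t, q' s :=
    funext fun t => by rw [← hq.2.2, add_sub_cancel]
  rw [heq]
  exact continuous_const.add (intervalIntegral.continuous_primitive
    (fun _ _ => (hq.1.integrableOn_isCompact isCompact_uIcc).intervalIntegrable) 0)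

lemma coercive_of_forall_norm_le
    (hR : ∀ p ∈ Gamma V c Vm Vp, ∀ t, ‖p.1 t‖ ≤ R) : Coercive V c Vm Vp R :=
  biInf_congr fun p hp => by rw [ciInf_pos (hR p hp)]

lemma IsTwoWell.coercive (h : IsTwoWell V c Vm Vp d R) (hc : 0 ≤ c) {C : Set (Euc N)} {R₀ : ℝ}
    (hC : {x | 0 < V x} ⊆ C) (hCR : C ⊆ closedBall 0 R₀)
    (hgrad : ∀ x ∈ frontier C, gradient V x ≠ 0) : Coercive V c Vm Vp R₀ := by
  refine coercive_of_forall_norm_le fun p hp t => ?_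
  obtain ⟨hp1, hVp, hleft, hright⟩ := hp
  have hcont := continuous_of_isH1loc hp1
  obtain ⟨s, hs⟩ := (hleft d h.sep_pos).exists
  obtain ⟨u, hu⟩ := (hright d h.sep_pos).exists
  obtain ⟨r, hr⟩ := h.exists_lt hcont hs hu
  have hmem : p.1 t ∈ closure C := forall_mem_closure_of_gradient_ne_zero h.contDiff hC hgrad hcont
    (fun t => hc.trans (hVp t)) (subset_closure (hC (hc.trans_lt hr))) t
  exact mem_closedBall_zero_iff.1 (closure_minimal hCR isClosed_closedBall hmem)

end Admissible

section SetDist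

variable {X : Type*} [PseudoMetricSpace X] {A B : Set X}

lemma setDist_le_dist {x y : X} (hx : x ∈ A) (hy : y ∈ B) : setDist A B ≤ dist x y :=
  csInf_le ⟨0, forall_mem_image.2 fun _ _ => dist_nonneg⟩ (mem_image_of_mem _ (mk_mem_prod hx hy))

lemma nonempty_of_setDist_pos (h : 0 < setDist A B) : A.Nonempty ∧ B.Nonempty := by
  rw [← prod_nonempty_iff, nonempty_iff_ne_empty]
  intro hempty
  rw [setDist, hempty, image_empty, Real.sInf_empty] at h
  exact h.false

end SetDist

lemma exists_isTwoWell {E : Type*} [NormedAddCommGroup E] [NormedSpace ℝ E] {V : E → ℝ} {c : ℝ}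
    {Vm Vp : Set E} (hV : ContDiff ℝ 1 V) (hbdd : Bornology.IsBounded {x | c < V x})
    (hVm : IsClosed Vm) (hVp : IsClosed Vp) (hsplit : {x | V x ≤ c} = Vm ∪ Vp)
    (hsep : 0 < setDist Vm Vp) : ∃ R, IsTwoWell V c Vm Vp (setDist Vm Vp) R := by
  obtain ⟨⟨x, hx⟩, y, hy⟩ := nonempty_of_setDist_pos hsep
  obtain ⟨R₀, hR₀⟩ := (hbdd.union (Bornology.isBounded_singleton (x := x))
    |>.union (Bornology.isBounded_singleton (x := y))).exists_norm_le
  have hxR : ‖x‖ ≤ R₀ := hR₀ x (by simp)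
  have hyR : ‖y‖ ≤ R₀ := hR₀ y (by simp)
  exact ⟨R₀ + 1, {
    contDiff := hV
    isClosed_left := hVm
    isClosed_right := hVp
    le_iff := Set.ext_iff.1 hsplit
    sep_pos := hsep
    le_dist := fun _ hx _ hy => setDist_le_dist hx hy
    norm_le := fun z hz => by simpa using hR₀ z (.inl (.inl hz))
    left_inter_nonempty := ⟨x, hx, mem_closedBall_zero_iff.2 (by linarith only [hxR])⟩
    right_inter_nonempty := ⟨y, hy, mem_closedBall_zero_iff.2 (by linarith only [hyR])⟩ }⟩

lemma contDiff_two_of_hasDerivAt {F : Type*} [NormedAddCommGroup F] [NormedSpace ℝ F]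
    {q v a : ℝ → F} (hq : ∀ t, HasDerivAt q (v t) t) (hv : ∀ t, HasDerivAt v (a t) t)
    (ha : Continuous a) : ContDiff ℝ 2 q := by
  have hv1 : ContDiff ℝ 1 v := contDiff_one_iff_deriv.2
    ⟨fun t => (hv t).differentiableAt, by rwa [funext fun t => (hv t).deriv]⟩
  rw [← one_add_one_eq_two, contDiff_succ_iff_deriv]
  exact ⟨fun t => (hq t).differentiableAt, by simp, by rwa [funext fun t => (hq t).deriv]⟩

end Duffing

theorem duffing_existence_general {N : ℕ} {V : Euc N → ℝ} (hV : ContDiff ℝ 1 V)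
    (hC₀bdd : Bornology.IsBounded ({x : Euc N | 0 < V x} ∪ {0}))
    (hC₀grad : ∀ x ∈ frontier ({x : Euc N | 0 < V x} ∪ {0}), gradient V x ≠ 0)
    {c : ℝ} (hc : 0 ≤ c)
    {Vm Vp : Set (Euc N)} (hVm : IsClosed Vm) (hVp : IsClosed Vp)
    (hsplit : {x | V x ≤ c} = Vm ∪ Vp) (hsep : 0 < setDist Vm Vp) :
    (∃ R > (0 : ℝ), Coercive V c Vm Vp R) ∧
    ∃ q : ℝ → Euc N, ContDiff ℝ 2 q ∧
      (∀ t, deriv (deriv q) t = gradient V (q t)) ∧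
      (⨅ t : ℝ, infDist (q t) Vm) = 0 ∧
      (⨅ t : ℝ, infDist (q t) Vp) = 0 ∧
      (∀ t, 2⁻¹ * ‖deriv q t‖ ^ 2 - V (q t) = -c) := by
  have hsub : {x | c < V x} ⊆ {x | 0 < V x} ∪ {0} := fun x hx => .inl (hc.trans_lt hx)
  obtain ⟨R, hwell⟩ := Duffing.exists_isTwoWell hV (hC₀bdd.subset hsub) hVm hVp hsplit hsep
  obtain ⟨R₀, hR₀, hball⟩ := hC₀bdd.subset_closedBall_lt 0 0
  obtain ⟨q, v, hq, hv, hleft, hright, henergy⟩ := hwell.exists_connectingOrbit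
  have hq_cont : Continuous q := continuous_iff_continuousAt.2 fun t => (hq t).continuousAt
  have hderiv : deriv q = v := funext fun t => (hq t).deriv
  refine ⟨⟨R₀, hR₀, hwell.coercive hc subset_union_left hball hC₀grad⟩, q,
    Duffing.contDiff_two_of_hasDerivAt hq hv ((Duffing.continuous_gradient hV).comp hq_cont),
    fun t => ?_, hleft, hright, fun t => ?_⟩
  · rw [hderiv, (hv t).deriv]
  · rw [hderiv, henergy]

/-- Proposition 3.3 (Duffing-like systems): for every `c ≥ 0` such that `(V^c)` holds,
coercivity (1.7) holds and there is a connecting solution with energy `−c`. -/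
theorem duffing_existence {N : ℕ} (hN : 0 < N) (V : Euc N → ℝ) (hV : ContDiff ℝ 1 V)
    (r₀ : ℝ) (hr₀ : 0 < r₀) (hV0 : V 0 = 0)
    (hVpos : ∀ x ∈ closedBall (0 : Euc N) (4 * r₀), x ≠ 0 → 0 < V x)
    (hC₀bdd : Bornology.IsBounded ({x : Euc N | 0 < V x} ∪ {0}))
    (hC₀grad : ∀ x ∈ frontier ({x : Euc N | 0 < V x} ∪ {0}), gradient V x ≠ 0)
    (c : ℝ) (hc : 0 ≤ c)
    (Vm Vp : Set (Euc N)) (hVm : IsClosed Vm) (hVp : IsClosed Vp)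
    (hsplit : {x | V x ≤ c} = Vm ∪ Vp) (hsep : 0 < setDist Vm Vp) :
    (∃ R > (0 : ℝ), Coercive V c Vm Vp R) ∧
    ∃ q : ℝ → Euc N, ContDiff ℝ 2 q ∧
      (∀ t, deriv (deriv q) t = gradient V (q t)) ∧
      (⨅ t : ℝ, infDist (q t) Vm) = 0 ∧
      (⨅ t : ℝ, infDist (q t) Vp) = 0 ∧
      (∀ t, 2⁻¹ * ‖deriv q t‖ ^ 2 - V (q t) = -c) :=
  duffing_existence_general hV hC₀bdd hC₀grad hc hVm hVp hsplit hsep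
end
end

section
/- Assume V ∈ C¹(ℝ^N) satisfies (V3) and (V4) and that ∇V is locally Lipschitz continuous on ℝ^N. Set ν₁ := min{V(x) : |x| = r₀} > 0, and for c ∈ [0, ν₁) use the decomposition 𝒱^c₋ := 𝒱^c ∩ B_{r₀}(0) and 𝒱^c₊ := 𝒱^c \ B_{r₀}(0). Let c_n → 0⁺ with c_n ∈ (0, ν₁), and for each n let q_n be a C² solution of q̈ = ∇V(q) on ℝ with ½|q̇_n|² − V(q_n) ≡ −c_n, admitting a connecting time interval (α_n, ω_n) with −∞ ≤ α_n < ω_n < +∞ such that: V(q_n(t)) > c_n on (α_n, ω_n); dist(q_n(t), 𝒱^{c_n}₋) → 0 as t → α_n⁺ (with q̇_n(α_n) = 0, V(q_n(α_n)) = c_n and q_n(α_n) ∈ 𝒱^{c_n}₋ if α_n > −∞); q̇_n(ω_n) = 0, V(q_n(ω_n)) = c_n and q_n(ω_n) ∈ 𝒱^{c_n}₊; J_{c_n,(α_n,ω_n)}(q_n) = m_{c_n}; and q_n(ℝ) ⊆ 𝒞₀. Then there exist translations and a subsequence along which the translated q_n converge in C²_loc(ℝ, ℝ^N) to a solution q₀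 of q̈ = ∇V(q) of homoclinic type at 0: q₀ is nonconstant, q₀(t) → 0 and q̇₀(t) → 0 as t → ±∞. -/
open MeasureTheory Filter Metric Set Topology
open scoped ENNReal

noncomputable section

/-!
Translate the solutions so that the brake at `ω n` happens at time `0`. They stay in a compact set
with bounded velocities and accelerations, so Ascoli's theorem yields a `C²_loc` limit `u`, a
solution of zero energy with `u' 0 = 0` and `‖u 0‖ ≥ r₀`; in particular `u` is not the equilibrium.

One fixed competitor, obtained by closing up a single `q m` with line segments, bounds the minimal
actions uniformly in `n`. On the connecting intervals the action density is `‖q'‖²`, and these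
intervals exhaust the negative half-line: a left endpoint staying bounded would produce in the limit
a brake in the ball of radius `r₀`, that is at `0`, and hence `u = 0` by uniqueness. By Fatou's
lemma `‖u'‖²` is integrable on the negative half-line, hence on the positive one, as `u` is
symmetric about its brake time. Barbalat's lemma then gives `u' → 0` and `∇V(u) → 0`, while
`V(u) → 0` by energy conservation. The only point of the closure of `{V > 0} ∪ {0}` where both `V`
and `∇V` vanish is `0`.
-/

section LevelCrossing

variable {α β : Type*} [ConditionallyCompleteLinearOrder α] [TopologicalSpace α] [OrderTopology α]
  [DenselyOrdered α] [LinearOrder β] [TopologicalSpace β] [OrderClosedTopology β]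

theorem exists_last_eq_forall_le {f : α → β} {a b : α} {c : β} (hab : a ≤ b)
    (hf : ContinuousOn f (Icc a b)) (ha : f a ≤ c) (hb : c ≤ f b) :
    ∃ x ∈ Icc a b, f x = c ∧ ∀ y ∈ Icc x b, c ≤ f y := by
  have hcompact : IsCompact (Icc a b ∩ f ⁻¹' Iic c) :=
    isCompact_Icc.of_isClosed_subset (hf.preimage_isClosed_of_isClosed isClosed_Icc isClosed_Iic)
      inter_subset_left
  obtain ⟨x, ⟨hx, hfx⟩, hmax⟩ := hcompact.exists_isGreatest ⟨a, left_mem_Icc.2 hab, ha⟩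
  have hlast : ∀ y ∈ Icc x b, f y ≤ c → y = x := fun y hy hyc =>
    (hmax ⟨⟨hx.1.trans hy.1, hy.2⟩, hyc⟩).antisymm hy.1
  obtain ⟨y, hy, rfl⟩ := intermediate_value_Icc hx.2 (hf.mono (Icc_subset_Icc_left hx.1)) ⟨hfx, hb⟩
  obtain rfl := hlast y hy le_rfl
  refine ⟨y, hx, rfl, fun z hz => ?_⟩
  by_contra! hlt
  exact hlt.ne (congrArg f (hlast z hz hlt.le))

theorem exists_first_eq_forall_le {f : α → β} {a b : α} {c : β} (hab : a ≤ b)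
    (hf : ContinuousOn f (Icc a b)) (ha : c ≤ f a) (hb : f b ≤ c) :
    ∃ x ∈ Icc a b, f x = c ∧ ∀ y ∈ Icc a x, c ≤ f y := by
  have hf' : ContinuousOn (f ∘ OrderDual.ofDual)
      (Icc (OrderDual.toDual b) (OrderDual.toDual a)) := by
    rw [Icc_toDual]
    exact hf
  obtain ⟨x, hx, hfx, hle⟩ := exists_last_eq_forall_le (f := f ∘ OrderDual.ofDual)
    (OrderDual.toDual_le_toDual.2 hab) hf' hb ha
  exact ⟨OrderDual.ofDual x, ⟨hx.2, hx.1⟩, hfx, fun y hy => hle (OrderDual.toDual y) ⟨hy.2, hy.1⟩⟩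

end LevelCrossing

theorem uniformContinuous_comp_of_forall_mem_compact {α β γ : Type*} [UniformSpace α]
    [UniformSpace β] [UniformSpace γ] {g : β → γ} {u : α → β} {K : Set β} (hK : IsCompact K)
    (hg : ContinuousOn g K) (hu : UniformContinuous u) (huK : ∀ x, u x ∈ K) :
    UniformContinuous (g ∘ u) :=
  uniformContinuousOn_univ.1 <| (hK.uniformContinuousOn_of_continuous hg).comp
    (uniformContinuousOn_univ.2 hu) fun x _ => huK x

section Barbalat

variable {E : Type*} [NormedAddCommGroup E] [NormedSpace ℝ E]

theorem norm_deriv_le_inv_mul_norm_sub_add {f f' : ℝ → E} {t η ε : ℝ} (hη : 0 < η)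
    (hf : ∀ s ∈ Icc t (t + η), HasDerivAt f (f' s) s)
    (hosc : ∀ s ∈ Icc t (t + η), ‖f' s - f' t‖ ≤ ε) :
    ‖f' t‖ ≤ η⁻¹ * ‖f (t + η) - f t‖ + ε := by
  have hle : t ≤ t + η := by linarith
  have hmv := (convex_Icc t (t + η)).norm_image_sub_le_of_norm_hasDerivWithin_le
    (f := fun s => f s - s • f' t) (f' := fun s => f' s - f' t)
    (fun s hs => ((hf s hs).sub ((hasDerivAt_id s).smul_const (f' t))).hasDerivWithinAt.congr_deriv
      (by rw [one_smul]))
    hosc (left_mem_Icc.2 hle) (right_mem_Icc.2 hle)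
  rw [add_sub_cancel_left, Real.norm_of_nonneg hη.le, add_smul] at hmv
  have hsplit : η * ‖f' t‖ ≤ ‖f (t + η) - f t‖ + ε * η := calc
    η * ‖f' t‖ = ‖η • f' t‖ := by rw [norm_smul, Real.norm_of_nonneg hη.le]
    _ = ‖(f (t + η) - f t) - (f (t + η) - (t • f' t + η • f' t) - (f t - t • f' t))‖ := by
      congr 1; abel
    _ ≤ ‖f (t + η) - f t‖ + ε * η := (norm_sub_le _ _).trans (by gcongr)
  calc ‖f' t‖ = η⁻¹ * (η * ‖f' t‖) := by field_simp
    _ ≤ η⁻¹ * (‖f (t + η) - f t‖ + ε * η) := by gcongr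
    _ = η⁻¹ * ‖f (t + η) - f t‖ + ε := by field_simp

theorem tendsto_deriv_zero_of_uniformContinuous {f f' : ℝ → E} {l : E}
    (hf : ∀ t, HasDerivAt f (f' t) t) (hf' : UniformContinuous f')
    (hl : Tendsto f atTop (𝓝 l)) : Tendsto f' atTop (𝓝 0) := by
  rw [Metric.tendsto_nhds]
  intro ε hε
  obtain ⟨δ, hδ, hosc⟩ := Metric.uniformContinuous_iff.1 hf' (ε / 2) (by positivity)
  have hincr : Tendsto (fun t => (δ / 2)⁻¹ * ‖f (t + δ / 2) - f t‖) atTop (𝓝 0) := by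
    simpa using
      (((hl.comp (tendsto_atTop_add_const_right atTop (δ / 2) tendsto_id)).sub hl).norm).const_mul
        (δ / 2)⁻¹
  filter_upwards [hincr.eventually_lt_const (half_pos hε)] with t ht
  have hle := norm_deriv_le_inv_mul_norm_sub_add (half_pos hδ) (fun s _ => hf s) fun s hs => by
    rw [← dist_eq_norm]
    refine (hosc (a := s) (b := t) ?_).le
    rw [Real.dist_eq, abs_of_nonneg (sub_nonneg.2 hs.1)]
    linarith [hs.2]
  rw [dist_zero_right]
  linarith

theorem tendsto_zero_of_uniformContinuous_of_integrableOn_Ioi [CompleteSpace E] {f : ℝ → E} {a : ℝ}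
    (hf : UniformContinuous f) (hi : IntegrableOn f (Ioi a)) : Tendsto f atTop (𝓝 0) :=
  tendsto_deriv_zero_of_uniformContinuous
    (fun t => intervalIntegral.integral_hasDerivAt_right (hf.continuous.intervalIntegrable a t)
      hf.continuous.aestronglyMeasurable.stronglyMeasurableAtFilter hf.continuous.continuousAt)
    hf (intervalIntegral_tendsto_integral_Ioi a hi tendsto_id)

end Barbalat

theorem setLIntegral_le_of_tendsto {α : Type*} [MeasurableSpace α] {μ : Measure α}
    {F : ℕ → α → ℝ≥0∞} {f : α → ℝ≥0∞} {A : ℕ → Set α} {S : Set α} {C : ℝ≥0∞}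
    (hS : MeasurableSet S) (hA : ∀ n, MeasurableSet (A n)) (hF : ∀ n, Measurable (F n))
    (hlim : ∀ x ∈ S, Tendsto (fun n => F n x) atTop (𝓝 (f x)))
    (hSA : ∀ x ∈ S, ∀ᶠ n in atTop, x ∈ A n)
    (hC : ∀ᶠ n in atTop, ∫⁻ x in A n, F n x ∂μ ≤ C) : ∫⁻ x in S, f x ∂μ ≤ C := by
  have hliminf : ∀ x ∈ S, f x = liminf (fun n => (A n).indicator (F n) x) atTop := fun x hx =>
    ((hlim x hx).congr' <| (hSA x hx).mono fun n hn =>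
      (indicator_of_mem hn (F n)).symm).liminf_eq.symm
  calc ∫⁻ x in S, f x ∂μ
      = ∫⁻ x in S, liminf (fun n => (A n).indicator (F n) x) atTop ∂μ :=
        setLIntegral_congr_fun hS hliminf
    _ ≤ ∫⁻ x, liminf (fun n => (A n).indicator (F n) x) atTop ∂μ := setLIntegral_le_lintegral _ _
    _ ≤ liminf (fun n => ∫⁻ x, (A n).indicator (F n) x ∂μ) atTop :=
        lintegral_liminf_le fun n => (hF n).indicator (hA n)
    _ ≤ C := liminf_le_of_frequently_le' <| Eventually.frequently <| hC.mono fun n hn => by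
        rwa [lintegral_indicator (hA n)]

theorem integrableOn_sq_of_tendsto_of_lintegral_le {E : Type*} [NormedAddCommGroup E]
    {v : ℝ → E} {p' : ℕ → ℝ → E} {A : ℕ → Set ℝ} {S : Set ℝ} {C : NNReal}
    (hS : MeasurableSet S) (hA : ∀ n, MeasurableSet (A n))
    (hv : Continuous v) (hp' : ∀ n, Continuous (p' n))
    (hlim : ∀ t ∈ S, Tendsto (fun n => p' n t) atTop (𝓝 (v t)))
    (hSA : ∀ t ∈ S, ∀ᶠ n in atTop, t ∈ A n)
    (hC : ∀ᶠ n in atTop, ∫⁻ t in A n, ENNReal.ofReal (‖p' n t‖ ^ 2) ≤ C) :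
    IntegrableOn (fun t => ‖v t‖ ^ 2) S := by
  refine ⟨(hv.norm.pow 2).aestronglyMeasurable, ?_⟩
  rw [hasFiniteIntegral_iff_ofReal (.of_forall fun t => by positivity)]
  exact (setLIntegral_le_of_tendsto hS hA
    (fun n => (ENNReal.continuous_ofReal.comp ((hp' n).norm.pow 2)).measurable)
    (fun t ht => ENNReal.tendsto_ofReal ((hlim t ht).norm.pow 2)) hSA hC).trans_lt
    ENNReal.coe_lt_top

theorem exists_subseq_tendstoLocallyUniformly_of_equicontinuous {X Y : Type*} [TopologicalSpace X]
    [WeaklyLocallyCompactSpace X] [SigmaCompactSpace X] [MetricSpace Y] [CompleteSpace Y]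
    {F : ℕ → X → Y} (hF : Equicontinuous F) (hcpt : ∀ x, ∃ K, IsCompact K ∧ ∀ n, F n x ∈ K) :
    ∃ f : X → Y, ∃ φ : ℕ → ℕ, StrictMono φ ∧
      TendstoLocallyUniformly (fun n => F (φ n)) f atTop := by
  let r : ℕ → C(X, Y) := fun n => ⟨F n, hF.continuous n⟩
  have : T2Space (UniformOnFun X Y {K | IsCompact K}) := UniformOnFun.t2Space_of_covering <|
    eq_univ_iff_forall.2 fun x => ⟨{x}, isCompact_singleton, mem_singleton x⟩
  have hr : IsCompact (closure (range r)) := by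
    refine ArzelaAscoli.isCompact_closure_of_isClosedEmbedding (𝔖 := {K | IsCompact K})
      (F := fun f : C(X, Y) => (f : X → Y)) (fun K hK => hK)
      ContinuousMap.isUniformEmbedding_toUniformOnFunIsCompact.isClosedEmbedding ?_ ?_
    · refine fun K _ => Equicontinuous.equicontinuousOn (fun x U hU => ?_) K
      filter_upwards [hF x U hU] with y hy
      rintro ⟨_, n, rfl⟩
      exact hy n
    · intro K _ x _
      obtain ⟨Q, hQ, hFQ⟩ := hcpt x
      exact ⟨Q, hQ, by rintro _ ⟨n, rfl⟩; exact hFQ n⟩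
  obtain ⟨f, -, φ, hφ, hf⟩ := hr.tendsto_subseq fun n => subset_closure (mem_range_self n)
  exact ⟨f, φ, hφ, ContinuousMap.tendsto_iff_tendstoLocallyUniformly.1 hf⟩

theorem eventually_mapsTo_of_tendstoLocallyUniformly {ι X Y : Type*} [TopologicalSpace X]
    [WeaklyLocallyCompactSpace X] [UniformSpace Y] {l : Filter ι} {F : ι → X → Y} {f : X → Y}
    {K : Set X} {U : Set Y} (hF : ∀ i, Continuous (F i)) (hf : Continuous f)
    (hlim : TendstoLocallyUniformly F f l) (hK : IsCompact K) (hU : IsOpen U)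
    (hKU : MapsTo f K U) : ∀ᶠ i in l, MapsTo (F i) K U :=
  (ContinuousMap.tendsto_iff_tendstoLocallyUniformly (F := fun i => (⟨F i, hF i⟩ : C(X, Y)))
    (f := ⟨f, hf⟩)).2 hlim |>.eventually (ContinuousMap.eventually_mapsTo hK hU hKU)

theorem tendstoLocallyUniformly_continuous_comp {ι X Y Z : Type*} [TopologicalSpace X]
    [WeaklyLocallyCompactSpace X] [UniformSpace Y] [UniformSpace Z] {l : Filter ι} {F : ι → X → Y}
    {f : X → Y} {g : Y → Z} (hg : Continuous g) (hF : ∀ i, Continuous (F i)) (hf : Continuous f)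
    (hlim : TendstoLocallyUniformly F f l) :
    TendstoLocallyUniformly (fun i x => g (F i x)) (fun x => g (f x)) l :=
  ContinuousMap.tendsto_iff_tendstoLocallyUniformly.1 <|
    ((ContinuousMap.continuous_postcomp (⟨g, hg⟩ : C(Y, Z))).tendsto ⟨f, hf⟩).comp <|
      (ContinuousMap.tendsto_iff_tendstoLocallyUniformly (F := fun i => (⟨F i, hF i⟩ : C(X, Y)))
        (f := ⟨f, hf⟩)).2 hlim

theorem exists_forall_norm_velocity_le {E ι : Type*} [NormedAddCommGroup E] {V : E → ℝ}
    {c : ι → ℝ} {K : Set E} {p p' : ι → ℝ → E} (hV : ContinuousOn V K) (hK : IsCompact K)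
    (hpK : ∀ i t, p i t ∈ K) (hE : ∀ i t, 2⁻¹ * ‖p' i t‖ ^ 2 = V (p i t) - c i)
    (hc : BddBelow (range c)) :
    ∃ M : NNReal, ∀ i t, ‖p' i t‖ ≤ M := by
  obtain ⟨B, hB⟩ := hK.bddAbove_image hV
  obtain ⟨b, hb⟩ := hc
  refine ⟨⟨√(2 * (B - b)), Real.sqrt_nonneg _⟩, fun i t => Real.le_sqrt_of_sq_le ?_⟩
  linarith [hE i t, hB (mem_image_of_mem V (hpK i t)), hb (mem_range_self i)]

section NewtonEquation

/-- `u` solves the second-order autonomous equation `ü = g(u)` on `ℝ`, with velocity `v = u̇`. The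
velocity is carried as data so that translation, reversal and limits of solutions never have to
rewrite under `deriv`. -/
structure IsNewtonSolution {E : Type*} [NormedAddCommGroup E] [NormedSpace ℝ E]
    (g : E → E) (u v : ℝ → E) : Prop where
  hasDerivAt (t : ℝ) : HasDerivAt u (v t) t
  hasDerivAt_velocity (t : ℝ) : HasDerivAt v (g (u t)) t

namespace IsNewtonSolution

variable {E : Type*} [NormedAddCommGroup E] [NormedSpace ℝ E] {g : E → E} {u v : ℝ → E}

theorem of_contDiff_two (hu : ContDiff ℝ 2 u) (hode : ∀ t, deriv (deriv u) t = g (u t)) :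
    IsNewtonSolution g u (deriv u) where
  hasDerivAt t := ((hu.differentiable two_ne_zero) t).hasDerivAt
  hasDerivAt_velocity t := hode t ▸ (hu.differentiable_deriv_two t).hasDerivAt

theorem const {x : E} (hx : g x = 0) : IsNewtonSolution g (fun _ => x) fun _ => 0 where
  hasDerivAt t := hasDerivAt_const t x
  hasDerivAt_velocity t := by
    rw [hx]
    exact hasDerivAt_const t 0

theorem continuous (h : IsNewtonSolution g u v) : Continuous u :=
  continuous_iff_continuousAt.2 fun t => (h.hasDerivAt t).continuousAt

theorem continuous_velocity (h : IsNewtonSolution g u v) : Continuous v :=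
  continuous_iff_continuousAt.2 fun t => (h.hasDerivAt_velocity t).continuousAt

theorem deriv_eq (h : IsNewtonSolution g u v) : deriv u = v :=
  funext fun t => (h.hasDerivAt t).deriv

theorem deriv_velocity_eq (h : IsNewtonSolution g u v) : deriv v = fun t => g (u t) :=
  funext fun t => (h.hasDerivAt_velocity t).deriv

theorem contDiff_two (h : IsNewtonSolution g u v) (hg : Continuous g) : ContDiff ℝ 2 u := by
  have hv : ContDiff ℝ 1 v := contDiff_one_iff_deriv.2
    ⟨fun t => (h.hasDerivAt_velocity t).differentiableAt,
      h.deriv_velocity_eq ▸ hg.comp h.continuous⟩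
  rw [show (2 : WithTop ℕ∞) = 1 + 1 by norm_num, contDiff_succ_iff_deriv, h.deriv_eq]
  exact ⟨fun t => (h.hasDerivAt t).differentiableAt, by simp, hv⟩

theorem comp_add_const (h : IsNewtonSolution g u v) (s : ℝ) :
    IsNewtonSolution g (fun t => u (t + s)) fun t => v (t + s) where
  hasDerivAt t := (h.hasDerivAt _).comp_add_const t s
  hasDerivAt_velocity t := (h.hasDerivAt_velocity _).comp_add_const t s

theorem comp_neg (h : IsNewtonSolution g u v) :
    IsNewtonSolution g (fun t => u (-t)) fun t => -v (-t) where
  hasDerivAt t := by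
    simpa [Function.comp_def] using (h.hasDerivAt (-t)).scomp t (hasDerivAt_neg t)
  hasDerivAt_velocity t := by
    simpa [Function.comp_def] using
      ((h.hasDerivAt_velocity (-t)).scomp t (hasDerivAt_neg t)).fun_neg

theorem lipschitzWith {M : NNReal} (h : IsNewtonSolution g u v) (hv : ∀ t, ‖v t‖ ≤ M) :
    LipschitzWith M u :=
  lipschitzWith_of_nnnorm_deriv_le (fun t => (h.hasDerivAt t).differentiableAt) fun t => by
    rw [h.deriv_eq]
    exact hv t

theorem lipschitzWith_velocity {M : NNReal} (h : IsNewtonSolution g u v)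
    (hg : ∀ t, ‖g (u t)‖ ≤ M) : LipschitzWith M v :=
  lipschitzWith_of_nnnorm_deriv_le (fun t => (h.hasDerivAt_velocity t).differentiableAt) fun t => by
    rw [h.deriv_velocity_eq]
    exact hg t

theorem eq_of_locallyLipschitz {u' v' : ℝ → E} (hg : LocallyLipschitz g)
    (h : IsNewtonSolution g u v) (h' : IsNewtonSolution g u' v') {t₀ : ℝ} (hu : u t₀ = u' t₀)
    (hv : v t₀ = v' t₀) : u = u' ∧ v = v' := by
  suffices heq : ∀ t, (u t, v t) = (u' t, v' t) from
    ⟨funext fun t => congrArg Prod.fst (heq t), funext fun t => congrArg Prod.snd (heq t)⟩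
  intro t
  obtain ⟨a, ha⟩ := exists_lt (min t₀ t)
  obtain ⟨b, hb⟩ := exists_gt (max t₀ t)
  rw [lt_min_iff] at ha
  rw [max_lt_iff] at hb
  set S := u '' Icc a b ∪ u' '' Icc a b
  have hcompact : IsCompact S :=
    (isCompact_Icc.image h.continuous).union (isCompact_Icc.image h'.continuous)
  obtain ⟨K, hK⟩ :=
    (hg.locallyLipschitzOn (s := S)).exists_lipschitzOnWith_of_compact hcompact
  have hfield : LipschitzOnWith (max 1 K) (fun x : E × E => (x.2, g x.1)) (S ×ˢ univ) :=
    LipschitzWith.prod_snd.lipschitzOnWith.prodMk <| mul_one K ▸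
      hK.comp LipschitzWith.prod_fst.lipschitzOnWith fun x (hx : x ∈ S ×ˢ univ) => hx.1
  exact ODE_solution_unique_of_mem_Ioo (v := fun _ x => (x.2, g x.1))
    (f := fun t => (u t, v t)) (g := fun t => (u' t, v' t)) (fun _ _ => hfield) ⟨ha.1, hb.1⟩
    (fun s hs => ⟨(h.hasDerivAt s).prodMk (h.hasDerivAt_velocity s),
      .inl ⟨s, Ioo_subset_Icc_self hs, rfl⟩, mem_univ _⟩)
    (fun s hs => ⟨(h'.hasDerivAt s).prodMk (h'.hasDerivAt_velocity s),
      .inr ⟨s, Ioo_subset_Icc_self hs, rfl⟩, mem_univ _⟩)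
    (Prod.ext hu hv) ⟨ha.2, hb.2⟩

theorem comp_neg_eq_of_velocity_eq_zero (h : IsNewtonSolution g u v) (hg : LocallyLipschitz g)
    (h0 : v 0 = 0) : (fun t => u (-t)) = u ∧ (fun t => -v (-t)) = v :=
  h.comp_neg.eq_of_locallyLipschitz hg h (t₀ := 0) (by simp) (by simp [h0])

theorem not_const_of_apply_ne_zero (h : IsNewtonSolution g u v) {t₀ : ℝ} (ht₀ : g (u t₀) ≠ 0) :
    ∃ t s, u t ≠ u s := by
  by_contra! hconst
  have hv : v = fun _ => 0 := by
    rw [← h.deriv_eq, show u = fun _ => u t₀ from funext fun t => hconst t t₀, deriv_const']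
  exact ht₀ ((h.hasDerivAt_velocity t₀).unique (hv ▸ hasDerivAt_const t₀ 0))

theorem of_tendstoLocallyUniformly {ι : Type*} {l : Filter ι} [l.NeBot] {p p' : ι → ℝ → E}
    (hg : Continuous g) (h : ∀ i, IsNewtonSolution g (p i) (p' i))
    (hp : TendstoLocallyUniformly p u l) (hp' : TendstoLocallyUniformly p' v l) :
    IsNewtonSolution g u v where
  hasDerivAt t := hasDerivAt_of_tendstoLocallyUniformlyOn isOpen_univ
    (tendstoLocallyUniformlyOn_univ.2 hp') (.of_forall fun i t _ => (h i).hasDerivAt t)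
    (fun _ ht => (tendstoLocallyUniformlyOn_univ.2 hp).tendsto_at ht) (mem_univ t)
  hasDerivAt_velocity t := hasDerivAt_of_tendstoLocallyUniformlyOn isOpen_univ
    (tendstoLocallyUniformlyOn_univ.2 <| tendstoLocallyUniformly_continuous_comp hg
      (fun i => (h i).continuous) (hp.continuous (.of_forall fun i => (h i).continuous)) hp)
    (.of_forall fun i t _ => (h i).hasDerivAt_velocity t)
    (fun _ ht => (tendstoLocallyUniformlyOn_univ.2 hp').tendsto_at ht) (mem_univ t)

theorem exists_subseq_tendstoLocallyUniformly [ProperSpace E] {p p' : ℕ → ℝ → E} {K : Set E}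
    {M : NNReal} (hg : Continuous g) (h : ∀ n, IsNewtonSolution g (p n) (p' n)) (hK : IsCompact K)
    (hpK : ∀ n t, p n t ∈ K) (hM : ∀ n t, ‖p' n t‖ ≤ M) :
    ∃ φ : ℕ → ℕ, StrictMono φ ∧ ∃ u v, IsNewtonSolution g u v ∧
      TendstoLocallyUniformly (fun n => p (φ n)) u atTop ∧
      TendstoLocallyUniformly (fun n => p' (φ n)) v atTop := by
  obtain ⟨G, hG⟩ := hK.exists_bound_of_continuousOn hg.continuousOn
  have hlip : ∀ n, LipschitzWith (max M G.toNNReal) fun t => (p n t, p' n t) := fun n =>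
    ((h n).lipschitzWith (hM n)).prodMk ((h n).lipschitzWith_velocity fun t =>
      (hG _ (hpK n t)).trans (Real.le_coe_toNNReal G))
  obtain ⟨f, φ, hφ, hf⟩ := exists_subseq_tendstoLocallyUniformly_of_equicontinuous
    (LipschitzWith.uniformEquicontinuous _ _ hlip).equicontinuous fun t =>
      ⟨K ×ˢ closedBall 0 M, hK.prod (isCompact_closedBall 0 _), fun n =>
        ⟨hpK n t, mem_closedBall_zero_iff.2 (hM n t)⟩⟩
  have hp := uniformContinuous_fst.comp_tendstoLocallyUniformly hf
  have hp' := uniformContinuous_snd.comp_tendstoLocallyUniformly hf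
  exact ⟨φ, hφ, _, _, of_tendstoLocallyUniformly hg (fun n => h (φ n)) hp hp', hp, hp'⟩

theorem tendsto_velocity_zero {K : Set E} {M : NNReal} (h : IsNewtonSolution g u v)
    (hg : Continuous g) (hK : IsCompact K) (huK : ∀ t, u t ∈ K) (hM : ∀ t, ‖v t‖ ≤ M)
    (hinteg : IntegrableOn (fun t => ‖v t‖ ^ 2) (Ioi 0)) :
    Tendsto v atTop (𝓝 0) ∧ Tendsto (fun t => g (u t)) atTop (𝓝 0) := by
  obtain ⟨G, hG⟩ := hK.exists_bound_of_continuousOn hg.continuousOn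
  have hucv : UniformContinuous v := (h.lipschitzWith_velocity (M := G.toNNReal) fun t =>
    (hG _ (huK t)).trans (Real.le_coe_toNNReal G)).uniformContinuous
  have hucsq : UniformContinuous fun t => ‖v t‖ ^ 2 :=
    uniformContinuous_comp_of_forall_mem_compact (isCompact_Icc (a := (0 : ℝ)) (b := M))
      (continuousOn_id.pow 2) (uniformContinuous_norm.comp hucv) fun t => ⟨norm_nonneg _, hM t⟩
  have hv : Tendsto v atTop (𝓝 0) := by
    rw [tendsto_zero_iff_norm_tendsto_zero]
    simpa using (tendsto_zero_of_uniformContinuous_of_integrableOn_Ioi hucsq hinteg).sqrt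
  exact ⟨hv, tendsto_deriv_zero_of_uniformContinuous h.hasDerivAt_velocity
    (uniformContinuous_comp_of_forall_mem_compact hK hg.continuousOn
      (h.lipschitzWith hM).uniformContinuous huK) hv⟩

theorem tendsto_nhds_of_unique_equilibrium {K : Set E} {M : NNReal} {V : E → ℝ} {x₀ : E}
    (h : IsNewtonSolution g u v) (hg : Continuous g) (hV : Continuous V) (hK : IsCompact K)
    (huK : ∀ t, u t ∈ K) (hM : ∀ t, ‖v t‖ ≤ M) (hE : ∀ t, 2⁻¹ * ‖v t‖ ^ 2 = V (u t))
    (hx₀ : ∀ x ∈ K, V x = 0 → g x = 0 → x = x₀)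
    (hinteg : IntegrableOn (fun t => ‖v t‖ ^ 2) (Ioi 0)) :
    Tendsto u atTop (𝓝 x₀) ∧ Tendsto v atTop (𝓝 0) := by
  obtain ⟨hv, hgu⟩ := h.tendsto_velocity_zero hg hK huK hM hinteg
  have hVu : Tendsto (fun t => V (u t)) atTop (𝓝 0) := by
    simpa [hE] using (hv.norm.pow 2).const_mul 2⁻¹
  refine ⟨hK.tendsto_nhds_of_unique_mapClusterPt (.of_forall huK) fun x hx hcluster => ?_, hv⟩
  obtain ⟨s, hsx, hs⟩ := hcluster.exists_seq_tendsto
  exact hx₀ x hx (tendsto_nhds_unique ((hV.tendsto x).comp hsx) (hVu.comp hs))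
    (tendsto_nhds_unique ((hg.tendsto x).comp hsx) (hgu.comp hs))

theorem tendsto_nhds_atBot_atTop_of_brake {K : Set E} {M : NNReal} {V : E → ℝ} {x₀ : E}
    (h : IsNewtonSolution g u v) (hg : LocallyLipschitz g) (hV : Continuous V) (hK : IsCompact K)
    (huK : ∀ t, u t ∈ K) (hM : ∀ t, ‖v t‖ ≤ M) (hE : ∀ t, 2⁻¹ * ‖v t‖ ^ 2 = V (u t))
    (hx₀ : ∀ x ∈ K, V x = 0 → g x = 0 → x = x₀) (h0 : v 0 = 0)
    (hinteg : IntegrableOn (fun t => ‖v t‖ ^ 2) (Iio 0)) :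
    Tendsto u atBot (𝓝 x₀) ∧ Tendsto u atTop (𝓝 x₀) ∧
      Tendsto v atBot (𝓝 0) ∧ Tendsto v atTop (𝓝 0) := by
  obtain ⟨hu_even, hv_odd⟩ := h.comp_neg_eq_of_velocity_eq_zero hg h0
  have hnorm : ∀ t, ‖v (-t)‖ = ‖v t‖ := fun t => by rw [← congrFun hv_odd t, norm_neg]
  have hinteg' : IntegrableOn (fun t => ‖v t‖ ^ 2) (Ioi 0) := by
    rw [← neg_zero] at hinteg
    simpa only [hnorm] using hinteg.comp_neg_Ioi
  obtain ⟨hu, hv⟩ :=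
    h.tendsto_nhds_of_unique_equilibrium hg.continuous hV hK huK hM hE hx₀ hinteg'
  refine ⟨?_, hu, ?_, hv⟩
  · rw [← hu_even]
    exact hu.comp tendsto_neg_atBot_atTop
  · rw [← hv_odd, ← neg_zero]
    exact (hv.comp tendsto_neg_atBot_atTop).neg

theorem lt_dist_of_velocity_eq_zero {V : E → ℝ} {x₀ : E} {r : ℝ} (h : IsNewtonSolution g u v)
    (hg : LocallyLipschitz g) (hx₀ : g x₀ = 0) (hE : ∀ t, 2⁻¹ * ‖v t‖ ^ 2 = V (u t))
    (hVpos : ∀ x ∈ closedBall x₀ r, x ≠ x₀ → 0 < V x) (hne : u ≠ fun _ => x₀) {t : ℝ}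
    (ht : v t = 0) : r < dist (u t) x₀ := by
  by_contra! hle
  have hVt : V (u t) = 0 := by simp [← hE, ht]
  have hut : u t = x₀ := by_contra fun hut => (hVpos _ hle hut).ne' hVt
  exact hne (h.eq_of_locallyLipschitz hg (.const hx₀) hut ht).1

theorem eventually_forall_lt_dist_of_velocity_eq_zero {V : E → ℝ} {x₀ : E} {r : ℝ}
    {ι : Type*} {l : Filter ι} {p p' : ι → ℝ → E} (hp : ∀ i, IsNewtonSolution g (p i) (p' i))
    (hpu : TendstoLocallyUniformly p u l) (hpv : TendstoLocallyUniformly p' v l)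
    (h : IsNewtonSolution g u v) (hg : LocallyLipschitz g) (hx₀ : g x₀ = 0)
    (hE : ∀ t, 2⁻¹ * ‖v t‖ ^ 2 = V (u t))
    (hVpos : ∀ x ∈ closedBall x₀ r, x ≠ x₀ → 0 < V x) (hne : u ≠ fun _ => x₀) (a b : ℝ) :
    ∀ᶠ i in l, ∀ t ∈ Icc a b, p' i t = 0 → r < dist (p i t) x₀ := by
  have hmaps : MapsTo (fun t => (u t, v t)) (Icc a b) (closedBall x₀ r ×ˢ {0})ᶜ :=
    fun t _ hmem => (h.lt_dist_of_velocity_eq_zero hg hx₀ hE hVpos hne hmem.2).not_ge hmem.1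
  filter_upwards [eventually_mapsTo_of_tendstoLocallyUniformly
    (fun i => (hp i).continuous.prodMk (hp i).continuous_velocity)
    (h.continuous.prodMk h.continuous_velocity) (hpu.prodMk hpv) isCompact_Icc
    (isClosed_closedBall.prod isClosed_singleton).isOpen_compl hmaps] with i hi t ht hvt
  by_contra! hle
  exact hi ht ⟨hle, hvt⟩

theorem exists_subseq_tendsto_homoclinic [ProperSpace E] {V : E → ℝ} {K : Set E} {x₀ : E} {r : ℝ}
    {c : ℕ → ℝ} {p p' : ℕ → ℝ → E} {A : ℕ → Set ℝ} {C : NNReal} (hg : LocallyLipschitz g)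
    (hV : Continuous V) (hK : IsCompact K) (hr : 0 < r) (hgx₀ : g x₀ = 0)
    (hVpos : ∀ x ∈ closedBall x₀ r, x ≠ x₀ → 0 < V x)
    (hx₀ : ∀ x ∈ K, V x = 0 → g x = 0 → x = x₀) (hc : Tendsto c atTop (𝓝 0))
    (hp : ∀ n, IsNewtonSolution g (p n) (p' n))
    (hE : ∀ n t, 2⁻¹ * ‖p' n t‖ ^ 2 = V (p n t) - c n) (hpK : ∀ n t, p n t ∈ K)
    (hbrake : ∀ n, p' n 0 = 0) (hdist : ∀ n, r ≤ dist (p n 0) x₀)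
    (hA : ∀ n, MeasurableSet (A n))
    (hmemA : ∀ n, ∀ s < 0, (∀ t ∈ Icc s 0, p' n t = 0 → r < dist (p n t) x₀) → s ∈ A n)
    (hC : ∀ᶠ n in atTop, ∫⁻ t in A n, ENNReal.ofReal (‖p' n t‖ ^ 2) ≤ C) :
    ∃ φ : ℕ → ℕ, StrictMono φ ∧ ∃ u v, IsNewtonSolution g u v ∧ (∃ t s, u t ≠ u s) ∧
      (Tendsto u atBot (𝓝 x₀) ∧ Tendsto u atTop (𝓝 x₀) ∧
        Tendsto v atBot (𝓝 0) ∧ Tendsto v atTop (𝓝 0)) ∧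
      TendstoLocallyUniformly (fun n => p (φ n)) u atTop ∧
      TendstoLocallyUniformly (fun n => p' (φ n)) v atTop := by
  obtain ⟨M, hM⟩ := exists_forall_norm_velocity_le hV.continuousOn hK hpK hE hc.bddBelow_range
  obtain ⟨φ, hφ, u, v, h, hpu, hpv⟩ :=
    exists_subseq_tendstoLocallyUniformly hg.continuous hp hK hpK hM
  have hu : ∀ t, Tendsto (fun n => p (φ n) t) atTop (𝓝 (u t)) := fun t =>
    (tendstoLocallyUniformlyOn_univ.2 hpu).tendsto_at (mem_univ t)
  have hv : ∀ t, Tendsto (fun n => p' (φ n) t) atTop (𝓝 (v t)) := fun t =>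
    (tendstoLocallyUniformlyOn_univ.2 hpv).tendsto_at (mem_univ t)
  have huK : ∀ t, u t ∈ K := fun t =>
    hK.isClosed.mem_of_tendsto (hu t) (.of_forall fun n => hpK _ t)
  have hvM : ∀ t, ‖v t‖ ≤ M := fun t => le_of_tendsto (hv t).norm (.of_forall fun n => hM _ t)
  have hEu : ∀ t, 2⁻¹ * ‖v t‖ ^ 2 = V (u t) := fun t => by
    refine tendsto_nhds_unique (((hv t).norm.pow 2).const_mul 2⁻¹) ?_
    simpa [hE] using ((hV.tendsto _).comp (hu t)).sub (hc.comp hφ.tendsto_atTop)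
  have hv0 : v 0 = 0 :=
    tendsto_nhds_unique (hv 0) (by simp only [hbrake, tendsto_const_nhds])
  have hu0 : u 0 ≠ x₀ := dist_pos.1 <| hr.trans_le <|
    ge_of_tendsto ((hu 0).dist tendsto_const_nhds) (.of_forall fun n => hdist _)
  have hgu0 : g (u 0) ≠ 0 := fun hgu => hu0 (hx₀ _ (huK 0) (by simp [← hEu, hv0]) hgu)
  have hIio : ∀ s ∈ Iio (0 : ℝ), ∀ᶠ n in atTop, s ∈ A (φ n) := fun s hs =>
    (eventually_forall_lt_dist_of_velocity_eq_zero (fun n => hp (φ n)) hpu hpv h hg hgx₀ hEu hVpos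
      (fun hu' => hu0 (congrFun hu' 0)) s 0).mono fun n hn => hmemA _ s hs hn
  have hinteg : IntegrableOn (fun t => ‖v t‖ ^ 2) (Iio 0) :=
    integrableOn_sq_of_tendsto_of_lintegral_le measurableSet_Iio (fun n => hA (φ n))
      h.continuous_velocity (fun n => (hp (φ n)).continuous_velocity) (fun t _ => hv t) hIio
      (hφ.tendsto_atTop.eventually hC)
  exact ⟨φ, hφ, u, v, h, h.not_const_of_apply_ne_zero hgu0,
    h.tendsto_nhds_atBot_atTop_of_brake hg hV hK huK hvM hEu hx₀ hv0 hinteg, hpu, hpv⟩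

end IsNewtonSolution

end NewtonEquation

theorem lipschitzWith_IccExtend_domRestrict {X : Type*} [PseudoEMetricSpace X] {K : NNReal}
    {u : ℝ → X} {a b : ℝ} (hab : a ≤ b) (hu : LipschitzWith K u) :
    LipschitzWith K (IccExtend hab ((Icc a b).domRestrict u)) := by
  simpa only [mul_one, IccExtend, domRestrict_eq] using
    (hu.comp (LipschitzWith.subtype_val _)).comp (LipschitzWith.projIcc hab)

section LipschitzCurves

variable {E : Type*} [NormedAddCommGroup E] [NormedSpace ℝ E] {K : NNReal} {u : ℝ → E} {a b : ℝ}

theorem integral_deriv_eq_sub_of_lipschitzWith [FiniteDimensional ℝ E] (hu : LipschitzWith K u)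
    (hinteg : IntervalIntegrable (deriv u) volume a b) :
    ∫ t in a..b, deriv u t = u b - u a := by
  have : CompleteSpace E := FiniteDimensional.complete ℝ E
  refine (SeparatingDual.eq_iff_forall_dual_eq (R := ℝ)).2 fun ℓ => ?_
  calc ℓ (∫ t in a..b, deriv u t) = ∫ t in a..b, ℓ (deriv u t) :=
        (ℓ.intervalIntegral_comp_comm hinteg).symm
    _ = ∫ t in a..b, deriv (ℓ ∘ u) t := intervalIntegral.integral_congr_ae <|
        hu.ae_differentiableAt_real.mono fun t ht _ =>
          (ℓ.hasFDerivAt.comp_hasDerivAt t ht.hasDerivAt).deriv.symm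
    _ = ℓ (u b - u a) := by
        have hac : AbsolutelyContinuousOnInterval (ℓ ∘ u) a b :=
          (ℓ.lipschitz.comp hu).lipschitzOnWith.absolutelyContinuousOnInterval
        rw [hac.integral_deriv_eq_sub, map_sub]
        rfl

theorem deriv_IccExtend_of_notMem {f : Icc a b → E} {t : ℝ} (hab : a ≤ b) (ht : t ∉ Icc a b) :
    deriv (IccExtend hab f) t = 0 := by
  rcases not_and_or.1 ht with h | h <;> rw [not_le] at h
  · exact (EventuallyEq.deriv_eq <| Eventually.mono (Iio_mem_nhds h) fun s hs =>
      IccExtend_of_le_left hab f (le_of_lt hs)).trans (deriv_const _ _)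
  · exact (EventuallyEq.deriv_eq <| Eventually.mono (Ioi_mem_nhds h) fun s hs =>
      IccExtend_of_right_le hab f (le_of_lt hs)).trans (deriv_const _ _)

theorem exists_lipschitzWith_extend_lineMap (hab : a ≤ b) (hu : LipschitzWith K u) (x y : E) :
    ∃ (L : NNReal) (γ : ℝ → E), LipschitzWith L γ ∧ (∀ t ∈ Icc a b, γ t = u t) ∧
      (∀ t ≤ a, γ t = AffineMap.lineMap (u a) x (a - t)) ∧
      ∀ t ≥ b, γ t = AffineMap.lineMap (u b) y (t - b) := by
  have hsmul : ∀ (s : ℝ) (z : E), ∃ L, LipschitzWith L fun t : ℝ => max (t - s) 0 • z := fun s z =>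
    ⟨_, (ContinuousLinearMap.toSpanSingleton ℝ z).lipschitz.comp
      ((LipschitzWith.id.sub (.const s)).max_const 0)⟩
  obtain ⟨L₁, hL₁⟩ := hsmul (-a) (x - u a)
  obtain ⟨L₂, hL₂⟩ := hsmul b (y - u b)
  refine ⟨_, _, ((lipschitzWith_IccExtend_domRestrict hab hu).add
    (hL₁.comp (LipschitzWith.id.neg))).add hL₂, fun t ht => ?_, fun t ht => ?_, fun t ht => ?_⟩
  · simp [IccExtend_of_mem hab _ ht, domRestrict_apply, ht.1, ht.2]
  · simp [IccExtend_of_le_left hab _ ht, domRestrict_apply, ht, ht.trans hab,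
      AffineMap.lineMap_apply, add_comm, ← sub_eq_add_neg]
  · simp [IccExtend_of_right_le hab _ ht, domRestrict_apply, ht, hab.trans ht,
      AffineMap.lineMap_apply, add_comm]

end LipschitzCurves

section Action

variable {N : ℕ} {V : Euc N → ℝ} {c : ℝ} {Vm Vp : Set (Euc N)} {γ : ℝ → Euc N} {K : NNReal}
  {a b : ℝ}

theorem isH1loc_deriv_of_lipschitzWith (hγ : LipschitzWith K γ) : IsH1loc γ (deriv γ) := by
  have hle : ∀ t, ‖deriv γ t‖ ≤ K := fun t => norm_deriv_le_of_lipschitz hγ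
  have hinteg : LocallyIntegrable (deriv γ) := locallyIntegrable_iff.2 fun k hk =>
    Measure.integrableOn_of_bounded (M := K) hk.measure_lt_top.ne
      (measurable_deriv γ).aestronglyMeasurable (.of_forall hle)
  refine ⟨hinteg, fun a b => ?_, fun a b => ?_⟩
  · refine Measure.integrableOn_of_bounded (M := (K : ℝ) ^ 2) (by simp)
      ((measurable_deriv γ).norm.pow_const 2).aestronglyMeasurable (.of_forall fun t => ?_)
    rw [norm_pow, norm_norm]
    gcongr
    exact hle t
  · exact (integral_deriv_eq_sub_of_lipschitzWith hγ
      (hinteg.integrableOn_isCompact isCompact_uIcc).intervalIntegrable).symm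

theorem IccExtend_mem_Gamma (hγ : LipschitzWith K γ) (hab : a ≤ b)
    (hV : ∀ t ∈ Icc a b, c ≤ V (γ t)) (ha : γ a ∈ Vm) (hb : γ b ∈ Vp) :
    (IccExtend hab ((Icc a b).domRestrict γ), deriv (IccExtend hab ((Icc a b).domRestrict γ))) ∈
      Gamma V c Vm Vp := by
  refine ⟨isH1loc_deriv_of_lipschitzWith (lipschitzWith_IccExtend_domRestrict hab hγ),
    fun t => hV _ (projIcc a b hab t).2, fun ε hε => Eventually.frequently ?_,
    fun ε hε => Eventually.frequently ?_⟩
  · filter_upwards [eventually_le_atBot a] with t ht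
    simpa [IccExtend_of_le_left hab _ ht, domRestrict_apply, infDist_zero_of_mem ha] using hε
  · filter_upwards [eventually_ge_atTop b] with t ht
    simpa [IccExtend_of_right_le hab _ ht, domRestrict_apply, infDist_zero_of_mem hb] using hε

theorem lagJ_IccExtend_le {M : ℝ} (hγ : LipschitzWith K γ) (hab : a ≤ b) (ha : V (γ a) = c)
    (hb : V (γ b) = c) (hM : ∀ t ∈ Icc a b, V (γ t) - c ≤ M) :
    lagJ V c (IccExtend hab ((Icc a b).domRestrict γ))
        (deriv (IccExtend hab ((Icc a b).domRestrict γ))) univ ≤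
      ENNReal.ofReal (2⁻¹ * (K : ℝ) ^ 2 + M) * ENNReal.ofReal (b - a) := by
  set u := IccExtend hab ((Icc a b).domRestrict γ)
  have hdu : ∀ t, ‖deriv u t‖ ≤ K := fun t =>
    norm_deriv_le_of_lipschitz (lipschitzWith_IccExtend_domRestrict hab hγ)
  have hout : ∀ t ∉ Icc a b, V (u t) = c := fun t ht => by
    rcases not_and_or.1 ht with h | h
    · exact (congrArg V (IccExtend_of_le_left hab _ (not_le.1 h).le)).trans ha
    · exact (congrArg V (IccExtend_of_right_le hab _ (not_le.1 h).le)).trans hb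
  calc lagJ V c u (deriv u) univ
      ≤ ∫⁻ t, (Icc a b).indicator (fun _ => ENNReal.ofReal (2⁻¹ * (K : ℝ) ^ 2 + M)) t := by
        rw [lagJ, Measure.restrict_univ]
        refine lintegral_mono fun t => ?_
        by_cases ht : t ∈ Icc a b
        · rw [indicator_of_mem ht]
          gcongr
          · exact hdu t
          · exact hM _ (projIcc a b hab t).2
        · rw [deriv_IccExtend_of_notMem hab ht, hout t ht]
          simp
    _ = ENNReal.ofReal (2⁻¹ * (K : ℝ) ^ 2 + M) * ENNReal.ofReal (b - a) := by
        rw [lintegral_indicator_const measurableSet_Icc, Real.volume_Icc]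

theorem exists_forall_mc_le_of_path {A B : Set (Euc N)} {c₀ s₀ s₁ s₂ s₃ : ℝ} (hV : Continuous V)
    (hγ : LipschitzWith K γ) (h₀₁ : s₀ ≤ s₁) (h₁₂ : s₁ ≤ s₂) (h₂₃ : s₂ ≤ s₃)
    (hs₀ : V (γ s₀) ≤ 0) (hs₃ : V (γ s₃) ≤ 0) (hmid : ∀ t ∈ Icc s₁ s₂, c₀ ≤ V (γ t))
    (hA : ∀ t ∈ Icc s₀ s₁, V (γ t) < c₀ → γ t ∈ A)
    (hB : ∀ t ∈ Icc s₂ s₃, V (γ t) < c₀ → γ t ∈ B) :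
    ∃ C : NNReal, ∀ c, 0 ≤ c → c < c₀ → mc V c ({x | V x ≤ c} ∩ A) ({x | V x ≤ c} ∩ B) ≤ C := by
  have hVγ : Continuous fun t => V (γ t) := hV.comp hγ.continuous
  obtain ⟨M, hM⟩ := (isCompact_Icc (a := s₀) (b := s₃)).bddAbove_image hVγ.continuousOn
  refine ⟨(2⁻¹ * (K : ℝ) ^ 2 + M).toNNReal * (s₃ - s₀).toNNReal, fun c hc hcc₀ => ?_⟩
  obtain ⟨a, ha, hac, haV⟩ := exists_last_eq_forall_le h₀₁ hVγ.continuousOn (hs₀.trans hc)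
    (hcc₀.le.trans (hmid s₁ (left_mem_Icc.2 h₁₂)))
  obtain ⟨b, hb, hbc, hbV⟩ := exists_first_eq_forall_le h₂₃ hVγ.continuousOn
    (hcc₀.le.trans (hmid s₂ (right_mem_Icc.2 h₁₂))) (hs₃.trans hc)
  have hab : a ≤ b := ha.2.trans (h₁₂.trans hb.1)
  have hle : ∀ t ∈ Icc a b, c ≤ V (γ t) := fun t ht => by
    rcases le_total t s₁ with h | h
    · exact haV t ⟨ht.1, h⟩
    rcases le_total t s₂ with h' | h'
    · exact hcc₀.le.trans (hmid t ⟨h, h'⟩)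
    · exact hbV t ⟨h', ht.2⟩
  calc mc V c ({x | V x ≤ c} ∩ A) ({x | V x ≤ c} ∩ B)
      ≤ lagJ V c (IccExtend hab ((Icc a b).domRestrict γ))
          (deriv (IccExtend hab ((Icc a b).domRestrict γ))) univ :=
        iInf₂_le _ <| IccExtend_mem_Gamma hγ hab hle
          (show γ a ∈ {x | V x ≤ c} ∩ A from ⟨hac.le, hA a ha (hac.trans_lt hcc₀)⟩)
          (show γ b ∈ {x | V x ≤ c} ∩ B from ⟨hbc.le, hB b hb (hbc.trans_lt hcc₀)⟩)
    _ ≤ ENNReal.ofReal (2⁻¹ * (K : ℝ) ^ 2 + M) * ENNReal.ofReal (b - a) :=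
        lagJ_IccExtend_le hγ hab hac hbc fun t ht => (sub_le_self _ hc).trans <|
          hM (mem_image_of_mem _ ⟨ha.1.trans ht.1, ht.2.trans hb.2⟩)
    _ ≤ ENNReal.ofReal (2⁻¹ * (K : ℝ) ^ 2 + M) * ENNReal.ofReal (s₃ - s₀) := by
        gcongr
        exacts [hb.2, ha.1]
    _ = _ := (ENNReal.coe_mul _ _).symm

end Action

section Potential

theorem gradient_eq_zero_of_pos_of_ne {F : Type*} [NormedAddCommGroup F]
    [InnerProductSpace ℝ F] [CompleteSpace F] {V : F → ℝ} {x₀ : F} {r : ℝ} (hr : 0 < r)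
    (hV : V x₀ = 0) (hVpos : ∀ x ∈ closedBall x₀ r, x ≠ x₀ → 0 < V x) : gradient V x₀ = 0 := by
  have hmin : IsLocalMin V x₀ := by
    filter_upwards [closedBall_mem_nhds x₀ hr] with x hx
    rcases eq_or_ne x x₀ with rfl | hne
    exacts [le_rfl, hV.trans_le (hVpos x hx hne).le]
  rw [gradient, hmin.fderiv_eq_zero, map_zero]

theorem eq_of_mem_closure_pos_union_singleton {X β : Type*} [TopologicalSpace X] [Zero β]
    {V : X → ℝ} {g : X → β} {x x₀ : X}
    (hg : ∀ y ∈ frontier ({y | 0 < V y} ∪ {x₀}), g y ≠ 0)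
    (hx : x ∈ closure ({y | 0 < V y} ∪ {x₀})) (hVx : V x = 0) (hgx : g x = 0) : x = x₀ := by
  by_contra hne
  exact hg x ⟨hx, fun hxint => (interior_subset hxint).elim (fun h => h.ne' hVx) hne⟩ hgx

theorem exists_forall_le_of_le_dist {F : Type*} [PseudoMetricSpace F] [ProperSpace F] {V : F → ℝ}
    {x₀ : F} {r R : ℝ} (hV : Continuous V) (hr : 0 < r)
    (hVpos : ∀ x ∈ closedBall x₀ R, x ≠ x₀ → 0 < V x) :
    ∃ μ > 0, ∀ x ∈ closedBall x₀ R, r ≤ dist x x₀ → μ ≤ V x := by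
  obtain ⟨μ, hμ, hle⟩ := ((isCompact_closedBall x₀ R).diff isOpen_ball).exists_forall_le'
    (f := V) (s := closedBall x₀ R \ ball x₀ r) hV.continuousOn (a := 0) fun x hx =>
      hVpos x hx.1 fun h => hx.2 (h ▸ mem_ball_self hr)
  exact ⟨μ, hμ, fun x hx hxr => hle x ⟨hx, not_lt.2 hxr⟩⟩

end Potential

theorem exists_le_mem_closedBall_of_tendsto_infDist {X : Type*} [PseudoMetricSpace X]
    {u : ℝ → X} {S : Set X} {x₀ : X} {r R : ℝ} (hrR : r < R) (hS : S ⊆ ball x₀ r) (hne : S.Nonempty)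
    (h : Tendsto (fun t => infDist (u t) S) atBot (𝓝 0)) (b : ℝ) :
    ∃ a ≤ b, u a ∈ closedBall x₀ R := by
  obtain ⟨a, ha, hab⟩ :=
    ((h.eventually_lt_const (sub_pos.2 hrR)).and (eventually_le_atBot b)).exists
  obtain ⟨y, hy, hay⟩ := (infDist_lt_iff hne).1 ha
  refine ⟨a, hab, mem_closedBall.2 ?_⟩
  linarith [dist_triangle (u a) y x₀, mem_ball.1 (hS hy)]

section ActionBound

variable {N : ℕ} {V : Euc N → ℝ} {r : ℝ}

/- The competitor is the segment from `0` to `p a`, the curve `p`, and the segment from `p b`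
to `x₀`, cut off where `V` reaches the level `c`. -/
theorem exists_forall_mc_ball_le {p : ℝ → Euc N} {K : NNReal} {a b c₀ μ : ℝ} {x₀ : Euc N}
    (hV : Continuous V) (hV0 : V 0 ≤ 0)
    (hμ : ∀ x ∈ closedBall (0 : Euc N) (2 * r), r ≤ dist x 0 → μ ≤ V x)
    (hp : LipschitzWith K p) (hab : a ≤ b) (hc₀ : ∀ t, c₀ ≤ V (p t))
    (ha : p a ∈ closedBall (0 : Euc N) (2 * r)) (hb : dist (p b) x₀ ≤ r) (hx₀ : V x₀ ≤ 0)
    (hx₀r : 2 * r ≤ ‖x₀‖) :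
    ∃ C : NNReal, ∀ c, 0 ≤ c → c < min c₀ μ →
      mc V c ({x | V x ≤ c} ∩ ball 0 r) ({x | V x ≤ c} \ ball 0 r) ≤ C := by
  obtain ⟨L, γ, hγ, hmid, hleft, hright⟩ := exists_lipschitzWith_extend_lineMap hab hp 0 x₀
  refine exists_forall_mc_le_of_path (s₀ := a - 1) (s₁ := a) (s₂ := b) (s₃ := b + 1)
    (B := (ball 0 r)ᶜ) hV hγ (by linarith) hab (by linarith) ?_ ?_ (fun t ht => ?_)
    (fun t ht hlt => ?_) fun t ht _ => ?_
  · simpa [hleft (a - 1) (by linarith)] using hV0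
  · simpa [hright (b + 1) (by linarith)] using hx₀
  · exact (min_le_left _ _).trans (hmid t ht ▸ hc₀ t)
  · by_contra hball
    refine (hlt.trans_le (min_le_right _ _)).not_ge (hμ _ ?_ (not_lt.1 hball))
    have hr : 0 ≤ 2 * r := dist_nonneg.trans ha
    rw [hleft t ht.2]
    exact (convex_closedBall 0 (2 * r)).lineMap_mem ha (mem_closedBall_self hr)
      ⟨by linarith [ht.2], by linarith [ht.1]⟩
  · have hnear : γ t ∈ closedBall x₀ r := by
      rw [hright t ht.1]
      exact (convex_closedBall x₀ r).lineMap_mem hb (mem_closedBall_self (dist_nonneg.trans hb))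
        ⟨by linarith [ht.1], by linarith [ht.2]⟩
    rw [mem_closedBall, dist_comm] at hnear
    rw [mem_compl_iff, mem_ball, not_lt]
    linarith [dist_triangle x₀ (γ t) 0, dist_zero_right x₀]

theorem exists_eventually_mc_ball_le {c a b : ℕ → ℝ} {p : ℕ → ℝ → Euc N} {k : Set (Euc N)}
    (hV : Continuous V) (hr : 0 < r) (hV0 : V 0 = 0)
    (hVpos : ∀ x ∈ closedBall (0 : Euc N) (2 * r), x ≠ 0 → 0 < V x) (hk : IsCompact k)
    (hcpos : ∀ n, 0 < c n) (hc : Tendsto c atTop (𝓝 0))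
    (hp : ∀ n, ∃ K, LipschitzWith K (p n)) (hab : ∀ n, a n ≤ b n)
    (hcV : ∀ n t, c n ≤ V (p n t)) (ha : ∀ n, p n (a n) ∈ closedBall (0 : Euc N) (2 * r))
    (hbk : ∀ n, p n (b n) ∈ k) (hbV : ∀ n, V (p n (b n)) = c n)
    (hbr : ∀ n, p n (b n) ∉ ball (0 : Euc N) r) :
    ∃ C : NNReal, ∀ᶠ n in atTop,
      mc V (c n) ({x | V x ≤ c n} ∩ ball 0 r) ({x | V x ≤ c n} \ ball 0 r) ≤ C := by
  obtain ⟨x₀, -, φ, hφ, hlim⟩ := hk.tendsto_subseq hbk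
  have hVx₀ : V x₀ = 0 := by
    refine tendsto_nhds_unique ((hV.tendsto x₀).comp hlim) ?_
    simpa [Function.comp_def, hbV] using hc.comp hφ.tendsto_atTop
  have hx₀ : x₀ ∉ ball (0 : Euc N) r :=
    isOpen_ball.isClosed_compl.mem_of_tendsto hlim (.of_forall fun n => hbr _)
  have hx₀r : 2 * r ≤ ‖x₀‖ := by
    by_contra! hlt
    refine (hVpos x₀ (mem_closedBall_zero_iff.2 hlt.le) ?_).ne' hVx₀
    rintro rfl
    exact hx₀ (mem_ball_self hr)
  obtain ⟨m, hm⟩ := (hlim.eventually (closedBall_mem_nhds x₀ hr)).exists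
  obtain ⟨μ, hμ, hμV⟩ := exists_forall_le_of_le_dist hV hr hVpos
  obtain ⟨K, hK⟩ := hp (φ m)
  obtain ⟨C, hC⟩ := exists_forall_mc_ball_le hV hV0.le hμV hK (hab _) (hcV _) (ha _) hm hVx₀.le hx₀r
  exact ⟨C, (hc.eventually_lt_const (lt_min (hcpos _) hμ)).mono fun n hn => hC _ (hcpos n).le hn⟩

end ActionBound

theorem lt_coe_of_forall_coe_notMem_Icc {α : EReal} {s b : ℝ} (hαb : α < b)
    (h : ∀ a : ℝ, α = a → a ∉ Icc s b) : α < s := by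
  refine not_le.1 fun hle => ?_
  lift α to ℝ using ⟨hαb.ne_top, fun hbot => by simp [hbot] at hle⟩
  exact h α rfl ⟨EReal.coe_le_coe_iff.1 hle, (EReal.coe_lt_coe_iff.1 hαb).le⟩

theorem measurableSet_setOf_lt_coe_and_lt (α : EReal) (ω : ℝ) :
    MeasurableSet {t : ℝ | α < t ∧ t < ω} :=
  (measurableSet_lt measurable_const measurable_coe_real_ereal).inter measurableSet_Iio

section EnergyAction

variable {N : ℕ} {V : Euc N → ℝ}

theorem lagJ_eq_setLIntegral_sq_comp_add_right {c : ℝ} {q q' : ℝ → Euc N} (I : Set ℝ) (s : ℝ)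
    (hE : ∀ t, 2⁻¹ * ‖q' t‖ ^ 2 = V (q t) - c) :
    lagJ V c q q' I = ∫⁻ t in (· + s) ⁻¹' I, ENNReal.ofReal (‖q' (t + s)‖ ^ 2) := by
  rw [(measurePreserving_add_right volume s).setLIntegral_comp_preimage_emb
    (MeasurableEquiv.addRight s).measurableEmbedding fun t => ENNReal.ofReal (‖q' t‖ ^ 2)]
  simp only [lagJ, ← hE, ← two_mul, mul_inv_cancel_left₀ (two_ne_zero' ℝ)]

theorem exists_eventually_lagJ_le {r : ℝ} {k : Set (Euc N)} {c ω : ℕ → ℝ} {α : ℕ → EReal}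
    {q : ℕ → ℝ → Euc N} {D : NNReal} (hV : Continuous V) (hr : 0 < r) (hV0 : V 0 = 0)
    (hVpos : ∀ x ∈ closedBall (0 : Euc N) (2 * r), x ≠ 0 → 0 < V x) (hk : IsCompact k)
    (hcpos : ∀ n, 0 < c n) (hc : Tendsto c atTop (𝓝 0)) (hq : ∀ n, Differentiable ℝ (q n))
    (hE : ∀ n t, 2⁻¹ * ‖deriv (q n) t‖ ^ 2 = V (q n t) - c n) (hqk : ∀ n t, q n t ∈ k)
    (hαω : ∀ n, α n < ω n)
    (hbot : ∀ n, α n = ⊥ →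
      Tendsto (fun t => infDist (q n t) ({x | V x ≤ c n} ∩ ball 0 r)) atBot (𝓝 0))
    (hα : ∀ n, ∀ a : ℝ, α n = a → q n a ∈ ball (0 : Euc N) r) (hωV : ∀ n, V (q n (ω n)) = c n)
    (hω : ∀ n, q n (ω n) ∉ ball (0 : Euc N) r)
    (hJ : ∀ n, lagJ V (c n) (q n) (deriv (q n)) {t : ℝ | α n < (t : EReal) ∧ t < ω n} ≤
      mc V (c n) ({x | V x ≤ c n} ∩ ball 0 r) ({x | V x ≤ c n} \ ball 0 r) + D) :
    ∃ C : NNReal, ∀ᶠ n in atTop,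
      lagJ V (c n) (q n) (deriv (q n)) {t : ℝ | α n < (t : EReal) ∧ t < ω n} ≤ C := by
  obtain ⟨M, hM⟩ := exists_forall_norm_velocity_le hV.continuousOn hk hqk hE hc.bddBelow_range
  have hzero : ∀ n, (0 : Euc N) ∈ {x | V x ≤ c n} ∩ ball 0 r := fun n =>
    ⟨hV0.trans_le (hcpos n).le, mem_ball_self hr⟩
  have hstart : ∀ n, ∃ a ≤ ω n, q n a ∈ closedBall (0 : Euc N) (2 * r) := fun n => by
    induction h : α n with
    | bot =>
      exact exists_le_mem_closedBall_of_tendsto_infDist (by linarith) inter_subset_right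
        ⟨0, hzero n⟩ (hbot n h) (ω n)
    | coe a =>
      exact ⟨a, (EReal.coe_lt_coe_iff.1 (h ▸ hαω n)).le,
        ball_subset_closedBall (ball_subset_ball (by linarith) (hα n a h))⟩
    | top => exact absurd (h ▸ hαω n) not_top_lt
  choose a haω ha using hstart
  obtain ⟨C, hC⟩ := exists_eventually_mc_ball_le hV hr hV0 hVpos hk hcpos hc
    (fun n => ⟨M, lipschitzWith_of_nnnorm_deriv_le (hq n) (hM n)⟩) haω
    (fun n t => sub_nonneg.1 (hE n t ▸ by positivity)) ha (fun n => hqk n _) hωV hω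
  exact ⟨C + D, hC.mono fun n hn => (hJ n).trans (add_le_add_left hn _)⟩

end EnergyAction

theorem duffing_convergence_general {N : ℕ} {V : Euc N → ℝ} (hV : ContDiff ℝ 1 V)
    (hlip : LocallyLipschitz (gradient V)) {r₀ : ℝ} (hr₀ : 0 < r₀) (hV0 : V 0 = 0)
    (hVpos : ∀ x ∈ closedBall (0 : Euc N) (2 * r₀), x ≠ 0 → 0 < V x)
    (hC₀bdd : Bornology.IsBounded ({x : Euc N | 0 < V x} ∪ {0}))
    (hC₀grad : ∀ x ∈ frontier ({x : Euc N | 0 < V x} ∪ {0}), gradient V x ≠ 0)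
    {c : ℕ → ℝ} (hcpos : ∀ n, 0 < c n) (hc0 : Tendsto c atTop (𝓝 0))
    {q : ℕ → ℝ → Euc N} (hsol : ∀ n, ContDiff ℝ 2 (q n) ∧
      (∀ t, deriv (deriv (q n)) t = gradient V (q n t)) ∧
      ∀ t, 2⁻¹ * ‖deriv (q n) t‖ ^ 2 - V (q n t) = -(c n))
    (hrange : ∀ n, range (q n) ⊆ {x : Euc N | 0 < V x} ∪ {0}) {α : ℕ → EReal} {ω : ℕ → ℝ}
    {D : NNReal} (hαω : ∀ n, α n < ω n)
    (hbot : ∀ n, α n = ⊥ →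
      Tendsto (fun t => infDist (q n t) ({x | V x ≤ c n} ∩ ball 0 r₀)) atBot (𝓝 0))
    (hα : ∀ n, ∀ a : ℝ, α n = a → deriv (q n) a = 0 ∧ q n a ∈ ball (0 : Euc N) r₀)
    (hω : ∀ n, deriv (q n) (ω n) = 0 ∧ q n (ω n) ∉ ball (0 : Euc N) r₀)
    (hJ : ∀ n, lagJ V (c n) (q n) (deriv (q n)) {t : ℝ | α n < (t : EReal) ∧ t < ω n} ≤
      mc V (c n) ({x | V x ≤ c n} ∩ ball 0 r₀) ({x | V x ≤ c n} \ ball 0 r₀) + D) :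
    ∃ φ : ℕ → ℕ, StrictMono φ ∧ ∃ ζ : ℕ → ℝ, ∃ q₀ : ℝ → Euc N,
      ContDiff ℝ 2 q₀ ∧
      (∀ t, deriv (deriv q₀) t = gradient V (q₀ t)) ∧
      (∃ t s : ℝ, q₀ t ≠ q₀ s) ∧
      Tendsto q₀ atBot (𝓝 0) ∧ Tendsto q₀ atTop (𝓝 0) ∧
      Tendsto (deriv q₀) atBot (𝓝 0) ∧ Tendsto (deriv q₀) atTop (𝓝 0) ∧
      TendstoLocallyUniformly (fun n t => q (φ n) (t - ζ n)) q₀ atTop ∧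
      TendstoLocallyUniformly (fun n t => deriv (q (φ n)) (t - ζ n)) (deriv q₀) atTop ∧
      TendstoLocallyUniformly (fun n t => deriv (deriv (q (φ n))) (t - ζ n))
        (deriv (deriv q₀)) atTop := by
  have hq : ∀ n, IsNewtonSolution (gradient V) (q n) (deriv (q n)) := fun n =>
    .of_contDiff_two (hsol n).1 (hsol n).2.1
  have hE : ∀ n t, 2⁻¹ * ‖deriv (q n) t‖ ^ 2 = V (q n t) - c n := fun n t => by
    linarith [(hsol n).2.2 t]
  have hmemA : ∀ n, ∀ s < 0,
      (∀ t ∈ Icc s 0, deriv (q n) (t + ω n) = 0 → r₀ < dist (q n (t + ω n)) 0) →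
      s ∈ (· + ω n) ⁻¹' {t : ℝ | α n < (t : EReal) ∧ t < ω n} := fun n s hs hbrake => by
    refine ⟨lt_coe_of_forall_coe_notMem_Icc (hαω n) fun a ha hmem => ?_, by linarith⟩
    have hfar := hbrake (a - ω n) ⟨by linarith [hmem.1], by linarith [hmem.2]⟩
    rw [sub_add_cancel] at hfar
    exact (hfar (hα n a ha).1).not_gt (hα n a ha).2
  have hK : ∀ n t, q n t ∈ closure ({x : Euc N | 0 < V x} ∪ {0}) := fun n t =>
    subset_closure (hrange n (mem_range_self t))
  have hVpos' : ∀ x ∈ closedBall (0 : Euc N) r₀, x ≠ 0 → 0 < V x := fun x hx =>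
    hVpos x (closedBall_subset_closedBall (by linarith) hx)
  obtain ⟨C, hC⟩ := exists_eventually_lagJ_le hV.continuous hr₀ hV0 hVpos
    hC₀bdd.isCompact_closure hcpos hc0 (fun n => (hsol n).1.differentiable two_ne_zero) hE hK hαω
    hbot (fun n a ha => (hα n a ha).2)
    (fun n => by simpa [(hω n).1, sub_eq_zero, eq_comm] using hE n (ω n))
    (fun n => (hω n).2) hJ
  simp only [fun n => lagJ_eq_setLIntegral_sq_comp_add_right
    {t : ℝ | α n < (t : EReal) ∧ t < ω n} (ω n) (hE n)] at hC
  obtain ⟨φ, hφ, u, v, h, hne, ⟨hu₁, hu₂, hv₁, hv₂⟩, hpu, hpv⟩ :=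
    IsNewtonSolution.exists_subseq_tendsto_homoclinic hlip hV.continuous hC₀bdd.isCompact_closure
      hr₀ (gradient_eq_zero_of_pos_of_ne hr₀ hV0 hVpos') hVpos'
      (fun x hx => eq_of_mem_closure_pos_union_singleton hC₀grad hx) hc0
      (fun n => (hq n).comp_add_const (ω n)) (fun n _ => hE n _) (fun n _ => hK n _)
      (fun n => by simpa using (hω n).1) (fun n => by simpa using (hω n).2)
      (fun n => measurable_add_const (ω n) (measurableSet_setOf_lt_coe_and_lt _ _)) hmemA hC
  have hpa := tendstoLocallyUniformly_continuous_comp hlip.continuous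
    (fun n => ((hq (φ n)).comp_add_const (ω (φ n))).continuous) h.continuous hpu
  refine ⟨φ, hφ, fun n => -ω (φ n), u, h.contDiff_two hlip.continuous, ?_⟩
  simp only [h.deriv_eq, h.deriv_velocity_eq, (hq _).deriv_velocity_eq, sub_neg_eq_add]
  exact ⟨fun _ => trivial, hne, hu₁, hu₂, hv₁, hv₂, hpu, hpv, hpa⟩

/-- Proposition 3.4 (Duffing convergence): as `c_n → 0⁺` the brake/connecting solutions with
energies `−c_n`, suitably translated and up to a subsequence, converge in `C²_loc` to a
homoclinic solution at `0`. -/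
theorem duffing_convergence {N : ℕ} (hN : 0 < N) (V : Euc N → ℝ) (hV : ContDiff ℝ 1 V)
    (hlip : LocallyLipschitz (gradient V))
    (r₀ : ℝ) (hr₀ : 0 < r₀) (hV0 : V 0 = 0)
    (hVpos : ∀ x ∈ closedBall (0 : Euc N) (4 * r₀), x ≠ 0 → 0 < V x)
    (hC₀bdd : Bornology.IsBounded ({x : Euc N | 0 < V x} ∪ {0}))
    (hC₀grad : ∀ x ∈ frontier ({x : Euc N | 0 < V x} ∪ {0}), gradient V x ≠ 0)
    (ν₁ : ℝ) (hν₁ : ν₁ = sInf (V '' sphere (0 : Euc N) r₀))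
    (c : ℕ → ℝ) (hcpos : ∀ n, 0 < c n) (hclt : ∀ n, c n < ν₁)
    (hc0 : Tendsto c atTop (𝓝 0))
    (q : ℕ → ℝ → Euc N)
    (hsol : ∀ n, ContDiff ℝ 2 (q n) ∧
      (∀ t, deriv (deriv (q n)) t = gradient V (q n t)) ∧
      (∀ t, 2⁻¹ * ‖deriv (q n) t‖ ^ 2 - V (q n t) = -(c n)))
    (hrange : ∀ n, Set.range (q n) ⊆ {x : Euc N | 0 < V x} ∪ {0})
    (hconn : ∀ n, ∃ α : EReal, ∃ ω : ℝ, α < (ω : EReal) ∧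
      (∀ t : ℝ, α < (t : EReal) → t < ω → c n < V (q n t)) ∧
      ((α = ⊥ → Tendsto
          (fun t => infDist (q n t) ({x | V x ≤ c n} ∩ ball (0 : Euc N) r₀)) atBot (𝓝 0)) ∧
       (∀ a : ℝ, α = (a : EReal) →
          Tendsto (fun t => infDist (q n t) ({x | V x ≤ c n} ∩ ball (0 : Euc N) r₀))
            (𝓝[>] a) (𝓝 0) ∧
          deriv (q n) a = 0 ∧ V (q n a) = c n ∧
          q n a ∈ {x | V x ≤ c n} ∩ ball (0 : Euc N) r₀)) ∧
      (deriv (q n) ω = 0 ∧ V (q n ω) = c n ∧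
        q n ω ∈ {x | V x ≤ c n} \ ball (0 : Euc N) r₀) ∧
      lagJ V (c n) (q n) (deriv (q n)) {t : ℝ | α < (t : EReal) ∧ t < ω}
        = mc V (c n) ({x | V x ≤ c n} ∩ ball (0 : Euc N) r₀)
            ({x | V x ≤ c n} \ ball (0 : Euc N) r₀)) :
    ∃ φ : ℕ → ℕ, StrictMono φ ∧ ∃ ζ : ℕ → ℝ, ∃ q₀ : ℝ → Euc N,
      ContDiff ℝ 2 q₀ ∧
      (∀ t, deriv (deriv q₀) t = gradient V (q₀ t)) ∧
      (∃ t s : ℝ, q₀ t ≠ q₀ s) ∧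
      Tendsto q₀ atBot (𝓝 0) ∧ Tendsto q₀ atTop (𝓝 0) ∧
      Tendsto (deriv q₀) atBot (𝓝 0) ∧ Tendsto (deriv q₀) atTop (𝓝 0) ∧
      TendstoLocallyUniformly (fun n t => q (φ n) (t - ζ n)) q₀ atTop ∧
      TendstoLocallyUniformly (fun n t => deriv (q (φ n)) (t - ζ n)) (deriv q₀) atTop ∧
      TendstoLocallyUniformly (fun n t => deriv (deriv (q (φ n))) (t - ζ n))
        (deriv (deriv q₀)) atTop := by
  choose α ω hαω _ hα hω hJ using hconn
  exact duffing_convergence_general (D := 0) hV hlip hr₀ hV0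
    (fun x hx => hVpos x (closedBall_subset_closedBall (by linarith) hx)) hC₀bdd hC₀grad hcpos hc0
    hsol hrange hαω (fun n => (hα n).1)
    (fun n a ha => ⟨((hα n).2 a ha).2.1, ((hα n).2 a ha).2.2.2.2⟩)
    (fun n => ⟨(hω n).1, (hω n).2.2.2⟩) fun n => (hJ n).le.trans (by simp)
end
end
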